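/- arXiv:2405.07493 — 11 statements merged into one kernel-verified Lean document; each statement's English description precedes it below -/
import Mathlib

section
/- If J and K are two independent randomly-stopped bit sequences, then the concatenation J‖K is a randomly-stopped bit sequence. -/
open MeasureTheory ProbabilityTheory
open scoped ENNReal

/-- `K` is a randomly-stopped bit sequence under the probability measure `μ`. -/
def IsRSBS {Ω : Type*} [MeasurableSpace Ω] (μ : Measure Ω) (K : Ω → List Bool) : Prop :=
  ∀ (pre : List Bool) (b : Bool),
    0 < μ {ω | pre.length < (K ω).length ∧ (K ω).take pre.length = pre} →
    μ {ω | pre.length < (K ω).length ∧ (K ω).take (pre.length + 1) = pre ++ [b]} =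
      2⁻¹ * μ {ω | pre.length < (K ω).length ∧ (K ω).take pre.length = pre}

lemma meas_pred {Ω : Type*} [MeasurableSpace Ω] (K : Ω → List Bool)
    (h : ∀ k : List Bool, MeasurableSet {ω | K ω = k}) (p : List Bool → Prop) :
    MeasurableSet {ω | p (K ω)} := by
  have : {ω | p (K ω)} = ⋃ k ∈ {k | p k}, {ω | K ω = k} := by
    ext ω; simp
  rw [this]
  exact MeasurableSet.biUnion (Set.to_countable _) (fun k _ => h k)

lemma measure_decomp {Ω : Type*} [MeasurableSpace Ω] (μ : Measure Ω) (K : Ω → List Bool)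
    (h : ∀ k : List Bool, MeasurableSet {ω | K ω = k}) (E : Set Ω) (hE : MeasurableSet E) :
    μ E = ∑' k, μ {ω | K ω = k ∧ ω ∈ E} := by
  have : E = ⋃ k, {ω | K ω = k ∧ ω ∈ E} := by
    ext ω; simp
  conv_lhs => rw [this]
  refine measure_iUnion ?_ (fun k => (h k).inter hE)
  intro a b hab
  refine Set.disjoint_left.2 ?_
  rintro ω ⟨h1, _⟩ ⟨h2, _⟩
  exact hab (h1.symm.trans h2)

lemma indep_pred {Ω : Type*} [MeasurableSpace Ω] (μ : Measure Ω)
    (J K : Ω → List Bool)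
    (hJmeas : ∀ j : List Bool, MeasurableSet {ω | J ω = j})
    (hKmeas : ∀ k : List Bool, MeasurableSet {ω | K ω = k})
    (hindep : ∀ j k : List Bool,
      μ {ω | J ω = j ∧ K ω = k} = μ {ω | J ω = j} * μ {ω | K ω = k})
    (j : List Bool) (p : List Bool → Prop) :
    μ {ω | J ω = j ∧ p (K ω)} = μ {ω | J ω = j} * μ {ω | p (K ω)} := by
  have hp := meas_pred K hKmeas p
  rw [measure_decomp μ K hKmeas {ω | J ω = j ∧ p (K ω)} ((hJmeas j).inter hp),
    measure_decomp μ K hKmeas _ hp, ← ENNReal.tsum_mul_left]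
  congr 1; ext k
  by_cases hk : p k
  · rw [show {ω | K ω = k ∧ ω ∈ {ω | J ω = j ∧ p (K ω)}} = {ω | J ω = j ∧ K ω = k} by
        ext ω; simp only [Set.mem_ofPred_eq]; constructor
        · tauto
        · rintro ⟨h1, h2⟩; exact ⟨h2, h1, h2 ▸ hk⟩,
      show {ω | K ω = k ∧ ω ∈ {ω | p (K ω)}} = {ω | K ω = k} by
        ext ω; simp only [Set.mem_ofPred_eq]; constructor
        · tauto
        · intro h2; exact ⟨h2, h2 ▸ hk⟩]
    exact hindep j k
  · rw [show {ω | K ω = k ∧ ω ∈ {ω | J ω = j ∧ p (K ω)}} = ∅ by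
        ext ω; simp only [Set.mem_ofPred_eq, Set.mem_empty_iff_false, iff_false]
        rintro ⟨h1, _, h2⟩; exact hk (h1 ▸ h2),
      show {ω | K ω = k ∧ ω ∈ {ω | p (K ω)}} = ∅ by
        ext ω; simp only [Set.mem_ofPred_eq, Set.mem_empty_iff_false, iff_false]
        rintro ⟨h1, h2⟩; exact hk (h1 ▸ h2)]
    simp

lemma ev_ext (l pre : List Bool) (b : Bool) :
    (pre.length < l.length ∧ l.take (pre.length + 1) = pre ++ [b]) ↔ (pre ++ [b]) <+: l := by
  rw [List.prefix_iff_eq_take]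
  constructor
  · rintro ⟨_, h⟩; simp [h]
  · intro h
    have h' := congrArg List.length h
    simp at h'
    exact ⟨by omega, by simpa using h.symm⟩

lemma ev_pre (l pre : List Bool) :
    (pre.length < l.length ∧ l.take pre.length = pre) ↔
      ((pre ++ [false]) <+: l ∨ (pre ++ [true]) <+: l) := by
  constructor
  · rintro ⟨h1, h2⟩
    have h3 : pre <+: l := by rw [List.prefix_iff_eq_take]; exact h2.symm
    obtain ⟨t, rfl⟩ := h3
    match t with
    | [] => simp at h1
    | false :: t => left; exact ⟨t, by simp⟩
    | true :: t => right; exact ⟨t, by simp⟩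
  · rintro (⟨t, rfl⟩ | ⟨t, rfl⟩) <;> simp

lemma isRSBS_iff {Ω : Type*} [MeasurableSpace Ω] (μ : Measure Ω) [IsProbabilityMeasure μ]
    (K : Ω → List Bool) (h : ∀ k : List Bool, MeasurableSet {ω | K ω = k}) :
    IsRSBS μ K ↔ ∀ pre : List Bool,
      μ {ω | (pre ++ [false]) <+: K ω} = μ {ω | (pre ++ [true]) <+: K ω} := by
  unfold IsRSBS
  simp only [ev_ext, ev_pre]
  have key : ∀ pre : List Bool, μ {ω | (pre ++ [false]) <+: K ω ∨ (pre ++ [true]) <+: K ω} =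
      μ {ω | (pre ++ [false]) <+: K ω} + μ {ω | (pre ++ [true]) <+: K ω} := by
    intro pre
    have hM : MeasurableSet {ω | (pre ++ [true]) <+: K ω} :=
      meas_pred K h (fun k => (pre ++ [true]) <+: k)
    rw [← measure_union _ hM]
    · rfl
    refine Set.disjoint_left.2 ?_
    rintro ω ⟨t, h1⟩ ⟨u, h2⟩
    rw [← h1] at h2
    simp at h2
  constructor
  · intro H pre
    by_cases h0 : 0 < μ {ω | (pre ++ [false]) <+: K ω ∨ (pre ++ [true]) <+: K ω}
    · rw [H pre false h0, H pre true h0]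
    · have h1 : μ {ω | (pre ++ [false]) <+: K ω ∨ (pre ++ [true]) <+: K ω} = 0 := by
        simpa using h0
      rw [key, add_eq_zero] at h1
      rw [h1.1, h1.2]
  · intro H pre b _
    rw [key, H pre, ← two_mul, ← mul_assoc,
      ENNReal.inv_mul_cancel (by norm_num) (by norm_num), one_mul]
    cases b
    · exact H pre
    · rfl

lemma prefix_append_cases (s j k : List Bool) (b : Bool) :
    (s ++ [b]) <+: (j ++ k) ↔ (s ++ [b]) <+: j ∨ (j <+: s ∧ (s ++ [b]) <+: (j ++ k)) := by
  constructor
  · intro h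
    rcases List.prefix_or_prefix_of_prefix h (List.prefix_append j k) with h1 | h1
    · exact Or.inl h1
    · rcases List.prefix_concat_iff.1 h1 with h2 | h2
      · left; rw [h2]
      · exact Or.inr ⟨h2, h⟩
  · rintro (h | h)
    · exact h.trans (List.prefix_append j k)
    · exact h.2

/-- If `J` and `K` are two independent randomly-stopped bit sequences, then the
concatenation `J ‖ K` is a randomly-stopped bit sequence. -/
theorem stmt2 {Ω : Type*} [MeasurableSpace Ω] (μ : Measure Ω) [IsProbabilityMeasure μ]
    (J K : Ω → List Bool)
    (hJmeas : ∀ j : List Bool, MeasurableSet {ω | J ω = j})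
    (hKmeas : ∀ k : List Bool, MeasurableSet {ω | K ω = k})
    (hindep : ∀ j k : List Bool,
      μ {ω | J ω = j ∧ K ω = k} = μ {ω | J ω = j} * μ {ω | K ω = k})
    (hJ : IsRSBS μ J) (hK : IsRSBS μ K) :
    IsRSBS μ (fun ω => J ω ++ K ω) := by
  have hm : ∀ p : List Bool → List Bool → Prop, MeasurableSet {ω | p (J ω) (K ω)} := by
    intro p
    have : {ω | p (J ω) (K ω)} = ⋃ j, ({ω | J ω = j} ∩ {ω | p j (K ω)}) := by
      ext ω; simp
    rw [this]
    exact MeasurableSet.iUnion fun j => (hJmeas j).inter (meas_pred K hKmeas (p j))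
  rw [isRSBS_iff μ _ (fun k => hm fun a c => a ++ c = k)]
  rw [isRSBS_iff μ J hJmeas] at hJ
  rw [isRSBS_iff μ K hKmeas] at hK
  intro s
  have key : ∀ b : Bool, μ {ω | (s ++ [b]) <+: (J ω ++ K ω)} = μ {ω | (s ++ [b]) <+: J ω} +
      ∑' j, μ {ω | J ω = j ∧ ω ∈ {ω | J ω <+: s ∧ (s ++ [b]) <+: (J ω ++ K ω)}} := by
    intro b
    have hM := hm fun a c => a <+: s ∧ (s ++ [b]) <+: (a ++ c)
    rw [← measure_decomp μ J hJmeas _ hM, ← measure_union _ hM]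
    · congr 1; ext ω; exact prefix_append_cases _ _ _ _
    · refine Set.disjoint_left.2 ?_
      rintro ω h1 ⟨h2, _⟩
      have := (List.IsPrefix.trans h1 h2).length_le
      simp at this
  rw [key, key, hJ s]
  congr 2; ext j
  by_cases hj : j <+: s
  · obtain ⟨t, rfl⟩ := hj
    have h2 : ∀ b : Bool,
        μ {ω | J ω = j ∧ ω ∈ {ω | J ω <+: (j ++ t) ∧ (j ++ t ++ [b]) <+: (J ω ++ K ω)}} =
        μ {ω | J ω = j} * μ {ω | (t ++ [b]) <+: K ω} := by
      intro b
      rw [← indep_pred μ J K hJmeas hKmeas hindep j (fun k => (t ++ [b]) <+: k)]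
      congr 1; ext ω
      simp only [Set.mem_ofPred_eq]
      refine and_congr_right fun h => ?_
      rw [h, List.append_assoc, List.prefix_append_right_inj]
      simp
    rw [h2, h2, hK t]
  · have h2 : ∀ b : Bool,
        {ω | J ω = j ∧ ω ∈ {ω | J ω <+: s ∧ (s ++ [b]) <+: (J ω ++ K ω)}} = ∅ := by
      intro b
      ext ω; simp only [Set.mem_ofPred_eq, Set.mem_empty_iff_false, iff_false]
      rintro ⟨h1, h3, _⟩; exact hj (h1 ▸ h3)
    rw [h2, h2]
end

section
/- Let K be a random variable taking values in {0,1}* such that P(K = k) ≤ 2^{-|k|} for every k ∈ {0,1}*, and let E be an event on the same probability space. Define the random variable K·1_E taking values in {0,1}* ∪ {⊥}, where ⊥ ∉ {0,1}* is a distinct symbol, by K·1_E = K if E occurs and K·1_E = ⊥ otherwise. Then H(K·1_E) ≥ E[|K|·1_E], i.e., the Shannon entropy of K·1_E is at least the expectation of |K| restricted to the event E. -/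
open MeasureTheory ProbabilityTheory
open scoped ENNReal

/-- The Shannon entropy (in bits) of the discrete random variable `X` under `μ`,
expressed as a value in `ℝ≥0∞` (each term `-p log₂ p` is nonnegative since `p ≤ 1`). -/
noncomputable def entBits {Ω α : Type*} [MeasurableSpace Ω] (μ : Measure Ω)
    (X : Ω → α) : ℝ≥0∞ :=
  ∑' x : α, ENNReal.ofReal
    (-((μ {ω | X ω = x}).toReal * Real.logb 2 (μ {ω | X ω = x}).toReal))

/-- If `K` takes values in `{0,1}*` with `P(K = k) ≤ 2^{-|k|}` for every `k`, and `E` is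
an event, then the Shannon entropy of `K·1_E` (which equals `K` on `E` and a distinct
symbol `⊥ = none` off `E`) is at least `E[|K|·1_E]`. -/
theorem stmt5 {Ω : Type*} [MeasurableSpace Ω] (μ : Measure Ω) [IsProbabilityMeasure μ]
    (K : Ω → List Bool)
    (hKmeas : ∀ k : List Bool, MeasurableSet {ω | K ω = k})
    (E : Set Ω) (hE : MeasurableSet E) [∀ ω, Decidable (ω ∈ E)]
    (hbound : ∀ k : List Bool, μ {ω | K ω = k} ≤ ((2 : ℝ≥0∞)⁻¹) ^ k.length) :
    ∑' k : List Bool, (k.length : ℝ≥0∞) * μ ({ω | K ω = k} ∩ E) ≤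
      entBits μ (fun ω => if ω ∈ E then some (K ω) else (none : Option (List Bool))) := by
  have hinj : Function.Injective (some : List Bool → Option (List Bool)) :=
    Option.some_injective _
  unfold entBits
  refine le_trans (ENNReal.tsum_le_tsum fun k => ?_)
    (ENNReal.tsum_comp_le_tsum_of_injective hinj _)
  have hset : {ω | (if ω ∈ E then some (K ω) else (none : Option (List Bool))) = some k}
      = {ω | K ω = k} ∩ E := by
    ext ω
    by_cases h : ω ∈ E <;> simp [h]
  rw [hset]
  have hle : μ ({ω | K ω = k} ∩ E) ≤ ((2 : ℝ≥0∞)⁻¹) ^ k.length :=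
    (measure_mono Set.inter_subset_left).trans (hbound k)
  have hfin : μ ({ω | K ω = k} ∩ E) ≠ ⊤ := measure_ne_top _ _
  generalize μ ({ω | K ω = k} ∩ E) = p at hle hfin
  have hr : p.toReal ≤ ((2 : ℝ)⁻¹) ^ k.length := by
    have := ENNReal.toReal_mono (by simp) hle
    simpa using this
  have hp0 : 0 ≤ p.toReal := ENNReal.toReal_nonneg
  have hlhs : (k.length : ℝ≥0∞) * p = ENNReal.ofReal (k.length * p.toReal) := by
    rw [ENNReal.ofReal_mul (by positivity), ENNReal.ofReal_natCast, ENNReal.ofReal_toReal hfin]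
  rw [hlhs]
  apply ENNReal.ofReal_le_ofReal
  rcases hp0.eq_or_lt with h0 | h0
  · simp [← h0]
  · have hlog : Real.logb 2 p.toReal ≤ -(k.length : ℝ) := by
      rw [Real.logb_le_iff_le_rpow (by norm_num) h0, Real.rpow_neg (by norm_num),
        Real.rpow_natCast, ← inv_pow]
      exact hr
    nlinarith
end

section
/- Let K, K_A, K_B be random variables taking values in {0,1}* and W a jointly distributed random variable, all on the same probability space, such that K is a conditionally randomly-stopped bit sequence given W. Then E[|K|·1{K = K_A = K_B}] ≤ H(K_A·1{K_A = K_B} | W, 1{K_A = K_B}) + log₂ 3, where K_A·1{K_A = K_B} equals K_A if K_A = K_B and equals a distinct symbol ⊥ ∉ {0,1}* otherwise. Equivalently, E[|K|·1{K = K_A = K_B}] ≤ P(K_A = K_B)·H(K_A | W, K_A = K_B) + log₂ 3, where H(K_A | W, K_A = K_B) is the conditional entropy of K_A given W computed under the conditional probability measure given the event {K_A = K_B}. -/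
open MeasureTheory ProbabilityTheory
open scoped ENNReal

/-- `K` is a conditionally randomly-stopped bit sequence given `W`: for every `w` in the
support of `W`, the conditional distribution of `K` given `W = w` is a randomly-stopped
bit sequence distribution. -/
def IsCondRSBS {Ω β : Type*} [MeasurableSpace Ω] (μ : Measure Ω) (K : Ω → List Bool)
    (W : Ω → β) : Prop :=
  ∀ w : β, 0 < μ {ω | W ω = w} → IsRSBS (μ[|{ω | W ω = w}]) K

/-- The conditional Shannon entropy (in bits) `H(X | W)` of `X` given the discrete
random variable `W`, under `μ`: `∑_w P(W = w) H(X | W = w)`. -/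
noncomputable def condEntBits {Ω α β : Type*} [MeasurableSpace Ω] (μ : Measure Ω)
    (X : Ω → α) (W : Ω → β) : ℝ≥0∞ :=
  ∑' w : β, μ {ω | W ω = w} * entBits (μ[|{ω | W ω = w}]) X

lemma rsbs_le {Ω : Type*} [MeasurableSpace Ω] (μ : Measure Ω) [IsProbabilityMeasure μ]
    (K : Ω → List Bool) (h : IsRSBS μ K) (k : List Bool) :
    μ {ω | k.length ≤ (K ω).length ∧ (K ω).take k.length = k} ≤ 2⁻¹ ^ k.length := by
  induction k using List.reverseRecOn with
  | nil => simp
  | append_singleton l b ih =>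
    have hsub : μ {ω | l.length < (K ω).length ∧ (K ω).take l.length = l} ≤ 2⁻¹ ^ l.length :=
      by
      refine le_trans (measure_mono ?_) ih
      exact fun ω hω => ⟨hω.1.le, hω.2⟩
    have heq : {ω | (l ++ [b]).length ≤ (K ω).length ∧ (K ω).take (l ++ [b]).length = l ++ [b]}
        = {ω | l.length < (K ω).length ∧ (K ω).take (l.length + 1) = l ++ [b]} := by
      ext ω; simp
    rw [heq]
    rcases eq_or_ne (μ {ω | l.length < (K ω).length ∧ (K ω).take l.length = l}) 0 with h0 | h0
    · have : μ {ω | l.length < (K ω).length ∧ (K ω).take (l.length + 1) = l ++ [b]} ≤ 0 := by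
        rw [← h0]
        refine measure_mono (fun ω hω => ⟨hω.1, ?_⟩)
        have := congrArg (List.take l.length) hω.2
        simpa [List.take_take] using this
      exact this.trans (by simp)
    · rw [h l b (pos_iff_ne_zero.2 h0), List.length_append, List.length_singleton, pow_succ,
        mul_comm]
      gcongr

lemma real_core {p a q α P : ℝ} {n : ℕ} (hp : 0 ≤ p) (hpP : p ≤ P * 2⁻¹ ^ n) (hpa : p ≤ a)
    (hpq : p ≤ q) (h : a + q ≤ α + p) (hqP : q ≤ P) :
    n * p ≤ a * -Real.logb 2 (a / α) + p * Real.logb 2 (P / q) := by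
  have haα : a ≤ α := by linarith
  have hl2 : 0 < Real.log 2 := Real.log_pos (by norm_num)
  rcases hp.eq_or_lt with rfl | hp
  · have : Real.logb 2 (a / α) ≤ 0 := 
      Real.logb_nonpos (by norm_num) (div_nonneg hpa (hpa.trans haα))
        (div_le_one_of_le₀ haα (hpa.trans haα))
    nlinarith
  have ha : 0 < a := hp.trans_le hpa
  have hα : 0 < α := ha.trans_le haα
  have hq : 0 < q := hp.trans_le hpq
  have hP : 0 < P := hq.trans_le hqP
  have h1 : n * Real.log 2 + Real.log p ≤ Real.log P := by
    have := Real.log_le_log hp hpP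
    rw [Real.log_mul hP.ne' (by positivity), Real.log_pow, Real.log_inv] at this
    linarith
  have h2 : Real.log (q * a / (p * α)) ≤ q * a / (p * α) - 1 :=
    Real.log_le_sub_one_of_pos (by positivity)
  have h3 : Real.log (a / α) ≤ a / α - 1 := Real.log_le_sub_one_of_pos (by positivity)
  have e2 : p * (q * a / (p * α) - 1) = q * (a / α) - p := by field_simp
  have h2' : p * Real.log (q * a / (p * α)) ≤ q * (a / α) - p := by
    rw [← e2]; gcongr
  have h3' : (a - p) * Real.log (a / α) ≤ (a - p) * (a / α - 1) :=
    mul_le_mul_of_nonneg_left h3 (by linarith)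
  have h4 : (q + (a - p)) * (a / α) ≤ a := by
    calc _ ≤ α * (a / α) := by
          apply mul_le_mul_of_nonneg_right (by linarith) (by positivity)
      _ = a := by field_simp
  rw [Real.log_div (by positivity) (by positivity), Real.log_mul hq.ne' ha.ne',
    Real.log_mul hp.ne' hα.ne'] at h2'
  rw [Real.log_div ha.ne' hα.ne'] at h3'
  have h1' := mul_le_mul_of_nonneg_left h1 hp.le
  simp only [Real.logb]
  rw [Real.log_div ha.ne' hα.ne', Real.log_div hP.ne' hq.ne']
  have : n * p * Real.log 2 ≤ a * -(Real.log a - Real.log α) + p * (Real.log P - Real.log q) := by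
    nlinarith
  have e3 : a * -((Real.log a - Real.log α) / Real.log 2)
      + p * ((Real.log P - Real.log q) / Real.log 2)
      = (a * -(Real.log a - Real.log α) + p * (Real.log P - Real.log q)) / Real.log 2 := by
    ring
  rw [e3, le_div_iff₀ hl2]
  exact this

lemma real_tail {q P : ℝ} (hq : 0 ≤ q) (hqP : q ≤ P) :
    q * Real.logb 2 (P / q) ≤ P * Real.logb 2 3 := by
  have hl2 : 0 < Real.log 2 := Real.log_pos (by norm_num)
  have hl3 : 1 ≤ Real.log 3 := by
    rw [Real.le_log_iff_exp_le (by norm_num)]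
    exact Real.exp_one_lt_d9.le.trans (by norm_num)
  simp only [Real.logb, ← mul_div_assoc]
  apply div_le_div_of_nonneg_right _ hl2.le
  rcases hq.eq_or_lt with rfl | hq
  · simp; positivity
  have := Real.log_le_sub_one_of_pos (div_pos (hq.trans_le hqP) hq)
  have h2 := mul_le_mul_of_nonneg_left this hq.le
  have h3 : q * (P / q - 1) = P - q := by field_simp
  nlinarith

/-- If `K` is a conditionally randomly-stopped bit sequence given `W`, then
`E[|K|·1{K = K_A = K_B}] ≤ P(K_A = K_B)·H(K_A | W, K_A = K_B) + log₂ 3`, where the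
conditional entropy `H(K_A | W, K_A = K_B)` is computed under the conditional measure
given the event `{K_A = K_B}`. -/
theorem stmt6 {Ω β : Type*} [MeasurableSpace Ω] [Countable β]
    (μ : Measure Ω) [IsProbabilityMeasure μ]
    (K KA KB : Ω → List Bool) (W : Ω → β)
    (hKmeas : ∀ k : List Bool, MeasurableSet {ω | K ω = k})
    (hKAmeas : ∀ k : List Bool, MeasurableSet {ω | KA ω = k})
    (hKBmeas : ∀ k : List Bool, MeasurableSet {ω | KB ω = k})
    (hWmeas : ∀ w : β, MeasurableSet {ω | W ω = w})
    (hcond : IsCondRSBS μ K W) :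
    ∑' k : List Bool, (k.length : ℝ≥0∞) * μ {ω | K ω = k ∧ KA ω = k ∧ KB ω = k} ≤
      μ {ω | KA ω = KB ω} * condEntBits (μ[|{ω | KA ω = KB ω}]) KA W
        + ENNReal.ofReal (Real.logb 2 3) := by
  set E : Set Ω := {ω | KA ω = KB ω} with hE
  have hEm : MeasurableSet E := by
    have : E = ⋃ k, ({ω | KA ω = k} ∩ {ω | KB ω = k}) := by
      ext ω; simp [hE, eq_comm]
    rw [this]
    exact MeasurableSet.iUnion fun k => (hKAmeas k).inter (hKBmeas k)
  set R : β → List Bool → Set Ω := fun w k => {ω | K ω = k ∧ KA ω = k ∧ KB ω = k} ∩ {ω | W ω = w}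
    with hR
  have hR0m : ∀ k, MeasurableSet {ω | K ω = k ∧ KA ω = k ∧ KB ω = k} := fun k =>
    (hKmeas k).inter ((hKAmeas k).inter (hKBmeas k))
  have hRm : ∀ w k, MeasurableSet (R w k) := fun w k => (hR0m k).inter (hWmeas w)
  have hdW : Pairwise (Function.onFun Disjoint fun w => {ω | W ω = w}) := by
    intro w w' hne
    rw [Function.onFun, Set.disjoint_left]
    rintro ω rfl h
    exact hne h
  have hUW : (⋃ w, {ω | W ω = w}) = Set.univ := by ext ω; simp
  have hPsum : ∑' w, μ {ω | W ω = w} = 1 := by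
    rw [← measure_iUnion hdW hWmeas, hUW, measure_univ]
  have hsplit : ∀ k, μ {ω | K ω = k ∧ KA ω = k ∧ KB ω = k} = ∑' w, μ (R w k) := by
    intro k
    rw [← measure_iUnion _ (fun w => hRm w k), ← Set.inter_iUnion, hUW, Set.inter_univ]
    intro w w' hne
    exact (hdW hne).mono Set.inter_subset_right Set.inter_subset_right
  have main : ∀ w, ∑' k : List Bool, (k.length : ℝ≥0∞) * μ (R w k) ≤
      μ E * (μ[|E] {ω | W ω = w} * entBits ((μ[|E])[|{ω | W ω = w}]) KA)
        + μ {ω | W ω = w} * ENNReal.ofReal (Real.logb 2 3) := by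
    intro w
    set V : Set Ω := {ω | W ω = w} with hV
    set Q : Set Ω := ⋃ k, R w k with hQ
    have hQm : MeasurableSet Q := MeasurableSet.iUnion (hRm w)
    have hdR : Pairwise (Function.onFun Disjoint (R w)) := by
      intro k k' hne
      rw [Function.onFun, Set.disjoint_left]
      rintro ω h h'
      exact hne (h.1.1.symm.trans h'.1.1)
    have hQsum : ∑' k, μ (R w k) = μ Q := (measure_iUnion hdR (hRm w)).symm
    have hα : μ E * μ[|E] V = μ (E ∩ V) := by
      rw [mul_comm, cond_mul_eq_inter hEm]
    rw [← mul_assoc, hα, cond_cond_eq_cond_inter hEm (hWmeas w)]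
    have hQE : Q ⊆ E ∩ V := by
      intro ω hω
      obtain ⟨k, hk⟩ := Set.mem_iUnion.1 hω
      exact ⟨hk.1.2.1.trans hk.1.2.2.symm, hk.2⟩
    have hterm : ∀ k : List Bool, (k.length : ℝ≥0∞) * μ (R w k) ≤
        μ (E ∩ V) * ENNReal.ofReal (-((μ[|E ∩ V] {ω | KA ω = k}).toReal *
          Real.logb 2 (μ[|E ∩ V] {ω | KA ω = k}).toReal))
        + μ (R w k) * ENNReal.ofReal (Real.logb 2 (μ.real V / μ.real Q)) := by
      intro k
      set A : Set Ω := (E ∩ V) ∩ {ω | KA ω = k} with hA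
      have hx : (μ[|E ∩ V] {ω | KA ω = k}).toReal = μ.real A / μ.real (E ∩ V) := by
        rw [cond_apply (hEm.inter (hWmeas w)), ENNReal.toReal_mul, ENNReal.toReal_inv, mul_comm,
          div_eq_mul_inv]
        rfl
      have hRA : R w k ⊆ A := fun ω h => ⟨⟨h.1.2.1.trans h.1.2.2.symm, h.2⟩, h.1.2.1⟩
      have hRQ : R w k ⊆ Q := Set.subset_iUnion _ k
      have hAQ : A ∩ Q = R w k := by
        apply Set.Subset.antisymm _ (Set.subset_inter hRA hRQ)
        rintro ω ⟨h1, h2⟩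
        obtain ⟨k', hk'⟩ := Set.mem_iUnion.1 h2
        have : k' = k := hk'.1.2.1.symm.trans h1.2
        exact this ▸ hk'
      have hincl : μ.real A + μ.real Q ≤ μ.real (E ∩ V) + μ.real (R w k) := by
        rw [← measureReal_union_add_inter hQm, hAQ]
        gcongr
        · exact measure_ne_top _ _
        · exact Set.union_subset Set.inter_subset_left hQE
      have hpP : μ.real (R w k) ≤ μ.real V * 2⁻¹ ^ k.length := by
        rcases eq_or_ne (μ V) 0 with h0 | h0
        · have : μ (R w k) = 0 := measure_mono_null Set.inter_subset_right h0
          simp [Measure.real, h0, this]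
        · have := cond_isProbabilityMeasure (μ := μ) h0
          have h2 := rsbs_le _ K (hcond w (pos_iff_ne_zero.2 h0)) k
          have h3 : μ (R w k) ≤ 2⁻¹ ^ k.length * μ V := by
            calc μ (R w k) ≤ μ (V ∩ {ω | k.length ≤ (K ω).length ∧ (K ω).take k.length = k}) := by
                  apply measure_mono
                  rintro ω ⟨⟨h, -⟩, h'⟩
                  refine ⟨h', ?_⟩
                  simp [h]
              _ = _ := (cond_mul_eq_inter (hWmeas w) _ _).symm
              _ ≤ _ := by gcongr
          have h4 := ENNReal.toReal_mono (by finiteness) h3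
          simpa [Measure.real, mul_comm] using h4
      have key := real_core (n := k.length) measureReal_nonneg hpP (measureReal_mono hRA)
        (measureReal_mono hRQ) hincl (measureReal_mono (hQE.trans Set.inter_subset_right))
      rw [hx]
      have e1 : ∀ S : Set Ω, μ S = ENNReal.ofReal (μ.real S) := fun S => by simp
      rw [e1 (R w k), e1 (E ∩ V), ← ENNReal.ofReal_natCast,
        ← ENNReal.ofReal_mul (by positivity), ← ENNReal.ofReal_mul (by positivity),
        ← ENNReal.ofReal_mul (by positivity)]
      refine (ENNReal.ofReal_le_ofReal ?_).trans ENNReal.ofReal_add_le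
      refine key.trans (le_of_eq ?_)
      congr 1
      rcases eq_or_ne (μ.real (E ∩ V)) 0 with h0 | h0
      · have : μ.real A = 0 := le_antisymm
          (h0 ▸ measureReal_mono Set.inter_subset_left) measureReal_nonneg
        simp [this]
      · field_simp
    refine (ENNReal.tsum_le_tsum hterm).trans ?_
    rw [ENNReal.tsum_add, ENNReal.tsum_mul_left, ENNReal.tsum_mul_right, hQsum, entBits]
    refine add_le_add le_rfl ?_
    rw [show μ Q = ENNReal.ofReal (μ.real Q) by simp, show μ V = ENNReal.ofReal (μ.real V) by simp,
        ← ENNReal.ofReal_mul (by positivity), ← ENNReal.ofReal_mul (by positivity)]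
    exact ENNReal.ofReal_le_ofReal (real_tail measureReal_nonneg
      (measureReal_mono (hQE.trans Set.inter_subset_right)))
  calc _ = ∑' w, ∑' k : List Bool, (k.length : ℝ≥0∞) * μ (R w k) := by
        rw [ENNReal.tsum_comm]
        simp_rw [hsplit, ENNReal.tsum_mul_left]
    _ ≤ _ := ENNReal.tsum_le_tsum main
    _ = _ := by
        rw [ENNReal.tsum_add, ENNReal.tsum_mul_left, ENNReal.tsum_mul_right, hPsum, one_mul,
          condEntBits]
end

section
/- For i = 1, 2, let (K_{A,i}, K_{B,i}, K_i, W_i) be jointly distributed random variables with K_{A,i}, K_{B,i}, K_i taking values in {0,1}*, such that K_i is a conditionally randomly-stopped bit sequence given W_i, P(K_{A,i} = K_{B,i} = K_i) ≥ 1 − ε_i, and E[|K_i|·1{K_{A,i} = K_{B,i} = K_i}] ≥ ℓ_i. Assume (K_{A,1}, K_{B,1}, K_1, W_1) is independent of (K_{A,2}, K_{B,2}, K_2, W_2). Then: (a) K_1‖K_2 is a conditionally randomly-stopped bit sequence given (W_1, W_2); (b) P(K_{A,1}‖K_{A,2} = K_{B,1}‖K_{B,2} = K_1‖K_2) ≥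 1 − (ε_1 + ε_2); and (c) E[(|K_1| + |K_2|)·1{K_{A,1}‖K_{A,2} = K_{B,1}‖K_{B,2} = K_1‖K_2}] ≥ (1 − ε_2)ℓ_1 + (1 − ε_1)ℓ_2. -/
open MeasureTheory ProbabilityTheory
open scoped ENNReal

lemma meas_of_fib {Ω X : Type*} [MeasurableSpace Ω] [Countable X] (V : Ω → X)
    (h : ∀ x, MeasurableSet {ω | V ω = x}) (A : Set X) : MeasurableSet {ω | V ω ∈ A} := by
  have : {ω | V ω ∈ A} = ⋃ x ∈ A, {ω | V ω = x} := by ext; simp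
  rw [this]
  exact MeasurableSet.biUnion (Set.to_countable A) fun x _ => h x

lemma ind_sets {Ω X Y : Type*} [MeasurableSpace Ω] [Countable X] [Countable Y]
    (μ : Measure Ω) [IsProbabilityMeasure μ] (V : Ω → X) (U : Ω → Y)
    (hV : ∀ x, MeasurableSet {ω | V ω = x}) (hU : ∀ x, MeasurableSet {ω | U ω = x})
    (h : ∀ x y, μ {ω | V ω = x ∧ U ω = y} = μ {ω | V ω = x} * μ {ω | U ω = y})
    (A : Set X) (B : Set Y) :
    μ {ω | V ω ∈ A ∧ U ω ∈ B} = μ {ω | V ω ∈ A} * μ {ω | U ω ∈ B} := by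
  let : MeasurableSpace X := ⊤
  let : MeasurableSpace Y := ⊤
  have mV : Measurable V := fun s _ => meas_of_fib V hV s
  have mU : Measurable U := fun s _ => meas_of_fib U hU s
  have key : IndepFun V U μ := by
    rw [indepFun_iff_map_prod_eq_prod_map_map mV.aemeasurable mU.aemeasurable]
    apply Measure.ext_of_singleton
    rintro ⟨x, y⟩
    rw [Measure.map_apply (mV.prodMk mU) (measurableSet_singleton _), ← Set.singleton_prod_singleton,
      Measure.prod_prod, Measure.map_apply mV (measurableSet_singleton _),
      Measure.map_apply mU (measurableSet_singleton _)]
    exact h x y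
  exact key.measure_inter_preimage_eq_mul A B trivial trivial

lemma sum_fib {Ω X : Type*} [MeasurableSpace Ω] [Countable X] (μ : Measure Ω) (V : Ω → X)
    (hV : ∀ x, MeasurableSet {ω | V ω = x}) (S : Set Ω) (hS : MeasurableSet S) (c : X → ℝ≥0∞) :
    ∫⁻ ω in S, c (V ω) ∂μ = ∑' x, c x * μ {ω | V ω = x ∧ ω ∈ S} := by
  let : MeasurableSpace X := ⊤
  have mV : Measurable V := fun s _ => meas_of_fib V hV s
  rw [← lintegral_map (f := c) (fun _ _ => trivial) mV, lintegral_countable']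
  congr 1; ext x; congr 1
  rw [Measure.map_apply mV (measurableSet_singleton _), Measure.restrict_apply' hS]
  rfl

lemma meas_fib {Ω X : Type*} [MeasurableSpace Ω] [Countable X] (μ : Measure Ω) (V : Ω → X)
    (hV : ∀ x, MeasurableSet {ω | V ω = x}) (S : Set Ω) (hS : MeasurableSet S) :
    μ S = ∑' x, μ {ω | V ω = x ∧ ω ∈ S} := by
  have := sum_fib μ V hV S hS (fun _ => 1)
  simpa using this

lemma pre_iff (pre l : List Bool) (b : Bool) :
    (pre.length < l.length ∧ l.take (pre.length + 1) = pre ++ [b]) ↔ pre ++ [b] <+: l := by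
  rw [List.prefix_iff_eq_take]
  simp only [List.length_append, List.length_singleton]
  constructor
  · rintro ⟨_, h⟩; exact h.symm
  · intro h
    refine ⟨?_, h.symm⟩
    have := congrArg List.length h
    simp at this; omega

lemma pre_iff2 (pre l : List Bool) :
    (pre.length < l.length ∧ l.take pre.length = pre) ↔
      (pre ++ [true] <+: l ∨ pre ++ [false] <+: l) := by
  constructor
  · rintro ⟨h1, h2⟩
    have h3 : pre ++ [l[pre.length]] <+: l := by
      rw [List.prefix_iff_eq_take]
      simp only [List.length_append, List.length_singleton]
      rw [List.take_add_one, h2, List.getElem?_eq_getElem h1]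
      rfl
    cases h : l[pre.length] <;> simp [h] at h3 <;> simp [h3]
  · rintro (⟨t, rfl⟩ | ⟨t, rfl⟩) <;> simp

lemma not_both (pre l : List Bool) : ¬ (pre ++ [true] <+: l ∧ pre ++ [false] <+: l) := by
  rintro ⟨⟨t, rfl⟩, ⟨s, h⟩⟩
  simp at h

lemma cond_iff {Ω β : Type*} [MeasurableSpace Ω] (μ : Measure Ω) [IsProbabilityMeasure μ]
    (K : Ω → List Bool) (W : Ω → β) (hK : ∀ k, MeasurableSet {ω | K ω = k})
    (hW : ∀ w, MeasurableSet {ω | W ω = w}) :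
    IsCondRSBS μ K W ↔ ∀ w pre, μ {ω | W ω = w ∧ pre ++ [true] <+: K ω} =
      μ {ω | W ω = w ∧ pre ++ [false] <+: K ω} := by
  have hadd : ∀ (ν : Measure Ω) (pre : List Bool), ν {ω | pre ++ [true] <+: K ω ∨ pre ++ [false] <+: K ω} =
      ν {ω | pre ++ [true] <+: K ω} + ν {ω | pre ++ [false] <+: K ω} := by
    intro ν pre
    have hd : Disjoint {ω | pre ++ [true] <+: K ω} {ω | pre ++ [false] <+: K ω} := by
      rw [Set.disjoint_left]
      intro ω h1 h2
      exact not_both _ _ ⟨h1, h2⟩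
    exact measure_union hd (meas_of_fib K hK {k | pre ++ [false] <+: k})
  have hc : ∀ w pre b, (μ[|{ω | W ω = w}]) {ω | pre ++ [b] <+: K ω} =
      (μ {ω | W ω = w})⁻¹ * μ {ω | W ω = w ∧ pre ++ [b] <+: K ω} := by
    intro w pre b
    rw [cond_apply (hW w)]; rfl
  constructor
  · intro h w pre
    by_cases h0 : μ {ω | W ω = w} = 0
    · rw [measure_mono_null (fun ω h => h.1) h0, measure_mono_null (fun ω h => h.1) h0]
    have h1 := h w (pos_iff_ne_zero.2 h0) pre
    simp only [pre_iff, pre_iff2] at h1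
    have h2 : (μ[|{ω | W ω = w}]) {ω | pre ++ [true] <+: K ω} =
        (μ[|{ω | W ω = w}]) {ω | pre ++ [false] <+: K ω} := by
      by_cases hz : (μ[|{ω | W ω = w}]) {ω | pre ++ [true] <+: K ω ∨ pre ++ [false] <+: K ω} = 0
      · have z := hz
        rw [hadd, add_eq_zero] at z
        rw [z.1, z.2]
      · rw [h1 true (pos_iff_ne_zero.2 hz), h1 false (pos_iff_ne_zero.2 hz)]
    rw [hc, hc] at h2
    exact (ENNReal.mul_right_inj (ENNReal.inv_ne_zero.2 (measure_ne_top _ _))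
      (ENNReal.inv_ne_top.2 h0)).1 h2
  · intro h w h0 pre b _
    simp only [pre_iff, pre_iff2]
    rw [hadd]
    simp only [hc]
    rw [h w pre, ← two_mul, ← mul_assoc, ENNReal.inv_mul_cancel two_ne_zero ENNReal.ofNat_ne_top, one_mul]
    cases b
    · rfl
    · rw [h w pre]

lemma pre_app (pre k l : List Bool) (b : Bool) :
    pre ++ [b] <+: k ++ l ↔
      (pre ++ [b] <+: k ∨ (k <+: pre ∧ pre.drop k.length ++ [b] <+: l)) := by
  constructor
  · intro h
    by_cases hl : pre.length + 1 ≤ k.length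
    · left
      exact List.prefix_of_prefix_length_le h (List.prefix_append k l) (by simpa using hl)
    · right
      have h1 : k <+: pre := List.prefix_of_prefix_length_le (List.prefix_append k l)
        ((List.prefix_append pre [b]).trans h) (by omega)
      refine ⟨h1, ?_⟩
      obtain ⟨t, rfl⟩ := h1
      simpa [List.append_assoc, List.prefix_append_right_inj] using h
  · rintro (h | ⟨⟨t, rfl⟩, h⟩)
    · exact h.trans (List.prefix_append k l)
    · simpa [List.append_assoc, List.prefix_append_right_inj] using h

lemma pre_app_disj (pre k : List Bool) (b : Bool) : ¬ (pre ++ [b] <+: k ∧ k <+: pre) := by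
  rintro ⟨h1, h2⟩
  have := h1.length_le; have := h2.length_le
  simp at *; omega

/-- Concatenation of two independent randomly-stopped secret keys: if
`(K_{A,i}, K_{B,i}, K_i, W_i)` (for `i = 1, 2`) are such that `K_i` is a conditionally
randomly-stopped bit sequence given `W_i`, `P(K_{A,i} = K_{B,i} = K_i) ≥ 1 - ε_i`,
`E[|K_i|·1{K_{A,i} = K_{B,i} = K_i}] ≥ ℓ_i`, and the two quadruples are independent,
then (a) `K_1‖K_2` is a conditionally randomly-stopped bit sequence given `(W_1, W_2)`;
(b) `P(K_{A,1}‖K_{A,2} = K_{B,1}‖K_{B,2} = K_1‖K_2) ≥ 1 - (ε_1 + ε_2)`; and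
(c) `E[(|K_1| + |K_2|)·1{K_{A,1}‖K_{A,2} = K_{B,1}‖K_{B,2} = K_1‖K_2}]
      ≥ (1 - ε_2)ℓ_1 + (1 - ε_1)ℓ_2`. -/
theorem stmt7 {Ω β₁ β₂ : Type*} [MeasurableSpace Ω] [Countable β₁] [Countable β₂]
    (μ : Measure Ω) [IsProbabilityMeasure μ]
    (KA₁ KB₁ K₁ : Ω → List Bool) (W₁ : Ω → β₁)
    (KA₂ KB₂ K₂ : Ω → List Bool) (W₂ : Ω → β₂)
    (ε₁ ε₂ ℓ₁ ℓ₂ : ℝ≥0∞)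
    (hKA₁ : ∀ k : List Bool, MeasurableSet {ω | KA₁ ω = k})
    (hKB₁ : ∀ k : List Bool, MeasurableSet {ω | KB₁ ω = k})
    (hK₁ : ∀ k : List Bool, MeasurableSet {ω | K₁ ω = k})
    (hW₁ : ∀ w : β₁, MeasurableSet {ω | W₁ ω = w})
    (hKA₂ : ∀ k : List Bool, MeasurableSet {ω | KA₂ ω = k})
    (hKB₂ : ∀ k : List Bool, MeasurableSet {ω | KB₂ ω = k})
    (hK₂ : ∀ k : List Bool, MeasurableSet {ω | K₂ ω = k})
    (hW₂ : ∀ w : β₂, MeasurableSet {ω | W₂ ω = w})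
    (hcond₁ : IsCondRSBS μ K₁ W₁) (hcond₂ : IsCondRSBS μ K₂ W₂)
    (hagree₁ : 1 - ε₁ ≤ μ {ω | KA₁ ω = K₁ ω ∧ KB₁ ω = K₁ ω})
    (hagree₂ : 1 - ε₂ ≤ μ {ω | KA₂ ω = K₂ ω ∧ KB₂ ω = K₂ ω})
    (hlen₁ : ℓ₁ ≤ ∑' k : List Bool,
      (k.length : ℝ≥0∞) * μ {ω | K₁ ω = k ∧ KA₁ ω = k ∧ KB₁ ω = k})
    (hlen₂ : ℓ₂ ≤ ∑' k : List Bool,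
      (k.length : ℝ≥0∞) * μ {ω | K₂ ω = k ∧ KA₂ ω = k ∧ KB₂ ω = k})
    (hindep : ∀ (a₁ b₁ c₁ : List Bool) (w₁ : β₁) (a₂ b₂ c₂ : List Bool) (w₂ : β₂),
      μ {ω | (KA₁ ω = a₁ ∧ KB₁ ω = b₁ ∧ K₁ ω = c₁ ∧ W₁ ω = w₁) ∧
             (KA₂ ω = a₂ ∧ KB₂ ω = b₂ ∧ K₂ ω = c₂ ∧ W₂ ω = w₂)} =
        μ {ω | KA₁ ω = a₁ ∧ KB₁ ω = b₁ ∧ K₁ ω = c₁ ∧ W₁ ω = w₁} *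
        μ {ω | KA₂ ω = a₂ ∧ KB₂ ω = b₂ ∧ K₂ ω = c₂ ∧ W₂ ω = w₂}) :
    IsCondRSBS μ (fun ω => K₁ ω ++ K₂ ω) (fun ω => (W₁ ω, W₂ ω)) ∧
    1 - (ε₁ + ε₂) ≤ μ {ω | KA₁ ω ++ KA₂ ω = K₁ ω ++ K₂ ω ∧
                           KB₁ ω ++ KB₂ ω = K₁ ω ++ K₂ ω} ∧
    (1 - ε₂) * ℓ₁ + (1 - ε₁) * ℓ₂ ≤
      ∑' k : List Bool, (k.length : ℝ≥0∞) *
        μ {ω | K₁ ω ++ K₂ ω = k ∧ KA₁ ω ++ KA₂ ω = k ∧ KB₁ ω ++ KB₂ ω = k} := by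
  classical
  -- the two quadruples as single random variables
  let V : Ω → List Bool × List Bool × List Bool × β₁ := fun ω => (KA₁ ω, KB₁ ω, K₁ ω, W₁ ω)
  let U : Ω → List Bool × List Bool × List Bool × β₂ := fun ω => (KA₂ ω, KB₂ ω, K₂ ω, W₂ ω)
  have hV : ∀ x, MeasurableSet {ω | V ω = x} := by
    rintro ⟨a, b, c, w⟩
    have : {ω | V ω = (a, b, c, w)} =
        {ω | KA₁ ω = a} ∩ ({ω | KB₁ ω = b} ∩ ({ω | K₁ ω = c} ∩ {ω | W₁ ω = w})) := by
      ext; simp [V]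
    rw [this]
    exact (hKA₁ a).inter ((hKB₁ b).inter ((hK₁ c).inter (hW₁ w)))
  have hU : ∀ x, MeasurableSet {ω | U ω = x} := by
    rintro ⟨a, b, c, w⟩
    have : {ω | U ω = (a, b, c, w)} =
        {ω | KA₂ ω = a} ∩ ({ω | KB₂ ω = b} ∩ ({ω | K₂ ω = c} ∩ {ω | W₂ ω = w})) := by
      ext; simp [U]
    rw [this]
    exact (hKA₂ a).inter ((hKB₂ b).inter ((hK₂ c).inter (hW₂ w)))
  have hind := ind_sets μ V U hV hU (by
    rintro ⟨a, b, c, w⟩ ⟨a', b', c', w'⟩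
    simpa [V, U] using hindep a b c w a' b' c' w')
  have mV := meas_of_fib V hV
  have mU := meas_of_fib U hU
  have hVU : ∀ x, MeasurableSet {ω | (V ω, U ω) = x} := by
    rintro ⟨x, y⟩
    have : {ω | (V ω, U ω) = (x, y)} = {ω | V ω = x} ∩ {ω | U ω = y} := by
      ext; simp
    rw [this]; exact (hV x).inter (hU y)
  have mVU := meas_of_fib (fun ω => (V ω, U ω)) hVU
  have hKK : ∀ k, MeasurableSet {ω | K₁ ω ++ K₂ ω = k} :=
    fun k => mVU {p | p.1.2.2.1 ++ p.2.2.2.1 = k}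
  have hWW : ∀ w, MeasurableSet {ω | (W₁ ω, W₂ ω) = w} :=
    fun w => mVU {p | (p.1.2.2.2, p.2.2.2.2) = w}
  set E₁ : Set Ω := {ω | KA₁ ω = K₁ ω ∧ KB₁ ω = K₁ ω} with hE₁
  set E₂ : Set Ω := {ω | KA₂ ω = K₂ ω ∧ KB₂ ω = K₂ ω} with hE₂
  have mE₁ : MeasurableSet E₁ := mV {p | p.1 = p.2.2.1 ∧ p.2.1 = p.2.2.1}
  have mE₂ : MeasurableSet E₂ := mU {p | p.1 = p.2.2.1 ∧ p.2.1 = p.2.2.1}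
  refine ⟨?_, ?_, ?_⟩
  · rw [cond_iff μ _ _ hKK hWW]
    rw [cond_iff μ _ _ hK₁ hW₁] at hcond₁
    rw [cond_iff μ _ _ hK₂ hW₂] at hcond₂
    rintro ⟨w₁, w₂⟩ pre
    have main : ∀ b, μ {ω | (W₁ ω, W₂ ω) = (w₁, w₂) ∧ pre ++ [b] <+: K₁ ω ++ K₂ ω} =
        μ {ω | W₁ ω = w₁ ∧ pre ++ [b] <+: K₁ ω} * μ {ω | W₂ ω = w₂} +
        ∑' k, μ {ω | K₁ ω = k ∧ W₁ ω = w₁ ∧ k <+: pre} *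
          μ {ω | W₂ ω = w₂ ∧ pre.drop k.length ++ [b] <+: K₂ ω} := by
      intro b
      have e : {ω | (W₁ ω, W₂ ω) = (w₁, w₂) ∧ pre ++ [b] <+: K₁ ω ++ K₂ ω} =
          {ω | (W₁ ω = w₁ ∧ pre ++ [b] <+: K₁ ω) ∧ W₂ ω = w₂} ∪
          {ω | (W₁ ω = w₁ ∧ K₁ ω <+: pre) ∧
            (W₂ ω = w₂ ∧ pre.drop (K₁ ω).length ++ [b] <+: K₂ ω)} := by
        ext ω
        simp only [Set.mem_ofPred_eq, Set.mem_union, Prod.mk.injEq, pre_app]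
        tauto
      have m2 : MeasurableSet {ω | (W₁ ω = w₁ ∧ K₁ ω <+: pre) ∧
            (W₂ ω = w₂ ∧ pre.drop (K₁ ω).length ++ [b] <+: K₂ ω)} :=
        mVU {p | (p.1.2.2.2 = w₁ ∧ p.1.2.2.1 <+: pre) ∧
            (p.2.2.2.2 = w₂ ∧ pre.drop (p.1.2.2.1).length ++ [b] <+: p.2.2.2.1)}
      rw [e, measure_union _ m2]
      · congr 1
        · exact hind {p | p.2.2.2 = w₁ ∧ pre ++ [b] <+: p.2.2.1} {p | p.2.2.2 = w₂}
        · rw [meas_fib μ K₁ hK₁ _ m2]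
          congr 1; ext k
          refine Eq.trans ?_ (hind {p | p.2.2.1 = k ∧ p.2.2.2 = w₁ ∧ k <+: pre}
            {p | p.2.2.2 = w₂ ∧ pre.drop k.length ++ [b] <+: p.2.2.1})
          congr 1; ext ω
          simp only [Set.mem_ofPred_eq, V, U]
          constructor
          · rintro ⟨rfl, h⟩; tauto
          · rintro ⟨⟨rfl, h⟩, h'⟩; tauto
      · rw [Set.disjoint_left]
        rintro ω ⟨⟨_, h1⟩, _⟩ ⟨⟨_, h2⟩, _⟩
        exact pre_app_disj _ _ _ ⟨h1, h2⟩
    rw [main, main, hcond₁ w₁ pre]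
    simp only [hcond₂]
  · have hc : ∀ (E : Set Ω) (ε : ℝ≥0∞), MeasurableSet E → 1 - ε ≤ μ E → μ Eᶜ ≤ ε := by
      intro E ε mE h
      rw [prob_compl_eq_one_sub mE]
      rw [tsub_le_iff_right] at h ⊢
      rwa [add_comm]
    have h1 := hc E₁ ε₁ mE₁ hagree₁
    have h2 := hc E₂ ε₂ mE₂ hagree₂
    calc 1 - (ε₁ + ε₂) ≤ 1 - μ (E₁ ∩ E₂)ᶜ := by
          apply tsub_le_tsub_left
          rw [Set.compl_inter]
          exact (measure_union_le _ _).trans (add_le_add h1 h2)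
      _ = μ (E₁ ∩ E₂) := by
          rw [← prob_compl_eq_one_sub (mE₁.inter mE₂).compl, compl_compl]
      _ ≤ _ := by
          apply measure_mono
          rintro ω ⟨⟨a, b⟩, ⟨c, d⟩⟩
          simp [a, b, c, d]
  · have mS : MeasurableSet {ω | KA₁ ω ++ KA₂ ω = K₁ ω ++ K₂ ω ∧
        KB₁ ω ++ KB₂ ω = K₁ ω ++ K₂ ω} :=
      mVU {p | p.1.1 ++ p.2.1 = p.1.2.2.1 ++ p.2.2.2.1 ∧
        p.1.2.1 ++ p.2.2.1 = p.1.2.2.1 ++ p.2.2.2.1}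
    have hR : ∑' k : List Bool, (k.length : ℝ≥0∞) *
        μ {ω | K₁ ω ++ K₂ ω = k ∧ KA₁ ω ++ KA₂ ω = k ∧ KB₁ ω ++ KB₂ ω = k} =
        ∫⁻ ω in {ω | KA₁ ω ++ KA₂ ω = K₁ ω ++ K₂ ω ∧
          KB₁ ω ++ KB₂ ω = K₁ ω ++ K₂ ω}, ((K₁ ω ++ K₂ ω).length : ℝ≥0∞) ∂μ := by
      rw [sum_fib μ (fun ω => K₁ ω ++ K₂ ω) hKK _ mS (fun k => (k.length : ℝ≥0∞))]
      congr 1; ext k; congr 2; ext ω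
      simp only [Set.mem_ofPred_eq]
      constructor
      · rintro ⟨rfl, h⟩; exact ⟨rfl, h⟩
      · rintro ⟨rfl, h⟩; exact ⟨rfl, h⟩
    have h1 : ∫⁻ ω in E₁ ∩ E₂, ((K₁ ω).length : ℝ≥0∞) ∂μ = μ E₂ * ∑' k : List Bool,
        (k.length : ℝ≥0∞) * μ {ω | K₁ ω = k ∧ KA₁ ω = k ∧ KB₁ ω = k} := by
      rw [sum_fib μ K₁ hK₁ _ (mE₁.inter mE₂) (fun k => (k.length : ℝ≥0∞)), ← ENNReal.tsum_mul_left]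
      congr 1; ext k
      rw [mul_left_comm, mul_comm (μ E₂)]
      congr 1
      rw [hE₂]
      refine Eq.trans ?_ (hind {p | p.2.2.1 = k ∧ p.1 = k ∧ p.2.1 = k}
        {p | p.1 = p.2.2.1 ∧ p.2.1 = p.2.2.1})
      congr 1; ext ω
      simp only [Set.mem_ofPred_eq, V, U, Set.mem_inter_iff, hE₁, hE₂]
      constructor
      · rintro ⟨rfl, h⟩; tauto
      · rintro ⟨⟨rfl, h⟩, h'⟩; tauto
    have h2 : ∫⁻ ω in E₁ ∩ E₂, ((K₂ ω).length : ℝ≥0∞) ∂μ = μ E₁ * ∑' k : List Bool,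
        (k.length : ℝ≥0∞) * μ {ω | K₂ ω = k ∧ KA₂ ω = k ∧ KB₂ ω = k} := by
      rw [sum_fib μ K₂ hK₂ _ (mE₁.inter mE₂) (fun k => (k.length : ℝ≥0∞)), ← ENNReal.tsum_mul_left]
      congr 1; ext k
      rw [mul_left_comm]
      congr 1
      rw [hE₁]
      refine Eq.trans ?_ (hind {p | p.1 = p.2.2.1 ∧ p.2.1 = p.2.2.1}
        {p | p.2.2.1 = k ∧ p.1 = k ∧ p.2.1 = k})
      congr 1; ext ω
      simp only [Set.mem_ofPred_eq, V, U, Set.mem_inter_iff, hE₁, hE₂]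
      constructor
      · rintro ⟨rfl, h⟩; tauto
      · rintro ⟨h', ⟨rfl, h⟩⟩; tauto
    have mlen : Measurable (fun ω => ((K₁ ω).length : ℝ≥0∞)) := by
      intro s _
      exact meas_of_fib K₁ hK₁ {k | (k.length : ℝ≥0∞) ∈ s}
    rw [hR]
    calc (1 - ε₂) * ℓ₁ + (1 - ε₁) * ℓ₂
        ≤ ∫⁻ ω in E₁ ∩ E₂, ((K₁ ω).length : ℝ≥0∞) ∂μ
          + ∫⁻ ω in E₁ ∩ E₂, ((K₂ ω).length : ℝ≥0∞) ∂μ := by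
          rw [h1, h2]
          exact add_le_add (mul_le_mul' hagree₂ hlen₁) (mul_le_mul' hagree₁ hlen₂)
      _ = ∫⁻ ω in E₁ ∩ E₂, ((K₁ ω ++ K₂ ω).length : ℝ≥0∞) ∂μ := by
          rw [← lintegral_add_left mlen]
          simp
      _ ≤ _ := by
          apply lintegral_mono_set
          rintro ω ⟨⟨a, b⟩, ⟨c, d⟩⟩
          simp [a, b, c, d]
end

section
/- If K ∈ {0,1}* is a conditionally randomly-stopped bit sequence given a jointly distributed random variable W, then K is (unconditionally) a randomly-stopped bit sequence. -/
open MeasureTheory ProbabilityTheory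
open scoped ENNReal

/-- Law of total probability over the fibres of a countably-valued `W`. -/
theorem measure_eq_tsum_fibres {Ω β : Type*} [MeasurableSpace Ω] [Countable β]
    (μ : Measure Ω) (W : Ω → β) (hW : ∀ w : β, MeasurableSet {ω | W ω = w})
    (A : Set Ω) (hA : MeasurableSet A) :
    μ A = ∑' w, μ ({ω | W ω = w} ∩ A) := by
  rw [← measure_iUnion]
  · congr 1
    ext ω
    simp
  · intro i j hij
    refine Set.disjoint_left.2 ?_
    rintro ω ⟨h1, _⟩ ⟨h2, _⟩
    exact hij (h1.symm.trans h2)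
  · exact fun w => (hW w).inter hA

/-- A conditionally randomly-stopped bit sequence given `W` is also an (unconditional)
randomly-stopped bit sequence. -/
theorem stmt8 {Ω β : Type*} [MeasurableSpace Ω] [Countable β]
    (μ : Measure Ω) [IsProbabilityMeasure μ]
    (K : Ω → List Bool) (W : Ω → β)
    (hKmeas : ∀ k : List Bool, MeasurableSet {ω | K ω = k})
    (hWmeas : ∀ w : β, MeasurableSet {ω | W ω = w})
    (hcond : IsCondRSBS μ K W) :
    IsRSBS μ K := by
  have hm : ∀ P : List Bool → Prop, MeasurableSet {ω | P (K ω)} := by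
    intro P
    have : {ω | P (K ω)} = ⋃ k ∈ {k | P k}, {ω | K ω = k} := by
      ext ω
      simp
    rw [this]
    exact MeasurableSet.biUnion (Set.to_countable _) (fun k _ => hKmeas k)
  intro pre b _
  have hA := hm (fun k => pre.length < k.length ∧ k.take pre.length = pre)
  have hB := hm (fun k => pre.length < k.length ∧ k.take (pre.length + 1) = pre ++ [b])
  have hsub : {ω | pre.length < (K ω).length ∧ (K ω).take (pre.length + 1) = pre ++ [b]} ⊆
      {ω | pre.length < (K ω).length ∧ (K ω).take pre.length = pre} := by
    rintro ω ⟨h1, h2⟩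
    refine ⟨h1, ?_⟩
    have h3 := congrArg (List.take pre.length) h2
    simpa [List.take_take] using h3
  rw [measure_eq_tsum_fibres μ W hWmeas _ hA, measure_eq_tsum_fibres μ W hWmeas _ hB,
    ← ENNReal.tsum_mul_left]
  refine tsum_congr fun w => ?_
  by_cases h0 : μ ({ω | W ω = w} ∩
      {ω | pre.length < (K ω).length ∧ (K ω).take pre.length = pre}) = 0
  · rw [h0, mul_zero]
    exact measure_mono_null (Set.inter_subset_inter_right _ hsub) h0
  · have hw : μ {ω | W ω = w} ≠ 0 := fun h =>
      h0 (measure_mono_null Set.inter_subset_left h)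
    have hw' : μ {ω | W ω = w} ≠ ∞ := measure_ne_top _ _
    have key := hcond w (pos_iff_ne_zero.2 hw) pre b
    rw [cond_apply (hWmeas w), cond_apply (hWmeas w)] at key
    have key2 := key (pos_iff_ne_zero.2 (mul_ne_zero (ENNReal.inv_ne_zero.2 hw') h0))
    rw [mul_left_comm] at key2
    exact (ENNReal.mul_right_inj (ENNReal.inv_ne_zero.2 hw')
      (ENNReal.inv_ne_top.2 hw)).1 key2
end

section
/- Let p be a probability mass function on a countable set 𝒳. Then there exists a function q : 𝒳 → [0,1] such that q(x) ≤ p(x) for all x ∈ 𝒳, ∑_{x∈𝒳} q(x) = 1/2, and every nonzero value of q is an integer power of two (i.e., of the form 2^{-j} for some positive integer j). Consequently, the function x ↦ 2q(x) is a dyadic probability mass function on 𝒳. -/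
/-- A probability mass function is dyadic if each of its nonzero values is `2^{-j}` for
some nonnegative integer `j`. -/
def IsDyadicPMF {𝒳 : Type*} (q : 𝒳 → ℝ) : Prop :=
  (∀ x, 0 ≤ q x) ∧ (∑' x, q x) = 1 ∧ ∀ x, q x ≠ 0 → ∃ j : ℕ, q x = (2 : ℝ) ^ (-(j : ℤ))

theorem finset_half {α : Type*} (n : α → ℕ) (T : Finset α)
    (h : 1 / 2 ≤ ∑ x ∈ T, (1 / 2 : ℝ) ^ (n x + 1)) :
    ∃ S : Finset α, ∑ x ∈ S, (1 / 2 : ℝ) ^ (n x + 1) = 1 / 2 := by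
  classical
  induction T using Finset.strongInduction with
  | H T ih =>
    have hne : T.Nonempty := by
      rw [Finset.nonempty_iff_ne_empty]
      rintro rfl
      norm_num at h
    obtain ⟨a, ha, hmax⟩ := T.exists_max_image n hne
    by_cases h' : 1 / 2 ≤ ∑ x ∈ T.erase a, (1 / 2 : ℝ) ^ (n x + 1)
    · exact ih _ (Finset.erase_ssubset ha) h'
    · refine ⟨T, le_antisymm ?_ h⟩
      push Not at h'
      have key : ∑ x ∈ T.erase a, (1 / 2 : ℝ) ^ (n x + 1) =
          ((∑ x ∈ T.erase a, 2 ^ (n a - n x) : ℕ) : ℝ) * (1 / 2) ^ (n a + 1) := by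
        push_cast
        rw [Finset.sum_mul]
        refine Finset.sum_congr rfl fun x hx => ?_
        have hx' := hmax x (Finset.mem_of_mem_erase hx)
        obtain ⟨k, hk⟩ := Nat.exists_eq_add_of_le hx'
        rw [hk, Nat.add_sub_cancel_left, show n x + k + 1 = k + (n x + 1) by ring, pow_add _ k,
          ← mul_assoc, ← mul_pow]
        norm_num
      have hhalf : (1 / 2 : ℝ) = ((2 ^ n a : ℕ) : ℝ) * (1 / 2) ^ (n a + 1) := by
        push_cast
        rw [pow_succ, ← mul_assoc, ← mul_pow]
        norm_num
      have hpos : (0 : ℝ) < (1 / 2) ^ (n a + 1) := by positivity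
      rw [← Finset.sum_erase_add _ _ ha]
      rw [key] at h' ⊢
      generalize (∑ x ∈ T.erase a, 2 ^ (n a - n x) : ℕ) = N at *
      have h1 : (N : ℝ) * (1 / 2) ^ (n a + 1) < ((2 ^ n a : ℕ) : ℝ) * (1 / 2) ^ (n a + 1) :=
        h'.trans_eq hhalf
      have h2 : N < 2 ^ n a := by exact_mod_cast lt_of_mul_lt_mul_right h1 hpos.le
      have h3 : ((N : ℝ) + 1) ≤ ((2 ^ n a : ℕ) : ℝ) := by exact_mod_cast h2
      have h4 := mul_le_mul_of_nonneg_right h3 hpos.le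
      rw [← hhalf] at h4
      linarith

/-- For any probability mass function `p` on a countable set `𝒳`, there exists
`q : 𝒳 → [0,1]` with `q(x) ≤ p(x)` for all `x`, `∑_x q(x) = 1/2`, and every nonzero
value of `q` equal to `2^{-j}` for some positive integer `j`; consequently `2q` is a
dyadic probability mass function on `𝒳`. -/
theorem stmt9 {𝒳 : Type*} [Countable 𝒳] (p : 𝒳 → ℝ)
    (hp0 : ∀ x, 0 ≤ p x) (hp1 : (∑' x, p x) = 1) :
    ∃ q : 𝒳 → ℝ,
      (∀ x, 0 ≤ q x) ∧ (∀ x, q x ≤ p x) ∧ (∑' x, q x) = 1 / 2 ∧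
      (∀ x, q x ≠ 0 → ∃ j : ℕ, 0 < j ∧ q x = (2 : ℝ) ^ (-(j : ℤ))) ∧
      IsDyadicPMF (fun x => 2 * q x) := by
  classical
  have hps : Summable p := by
    by_contra hn
    rw [tsum_eq_zero_of_not_summable hn] at hp1
    norm_num at hp1
  have hple : ∀ x, p x ≤ 1 := fun x => hp1 ▸ hps.le_tsum x (fun y _ => hp0 y)
  have hex : ∀ x, ∃ k : ℕ, p x ≠ 0 → (1 / 2 : ℝ) ^ (k + 1) < p x ∧ p x ≤ (1 / 2 : ℝ) ^ k := by
    intro x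
    by_cases hx : p x = 0
    · exact ⟨0, fun h => absurd hx h⟩
    · obtain ⟨k, hk⟩ := exists_nat_pow_near_of_lt_one
        (lt_of_le_of_ne (hp0 x) (Ne.symm hx)) (hple x) (y := (1 / 2 : ℝ)) (by norm_num)
        (by norm_num)
      exact ⟨k, fun _ => hk⟩
  choose n hn using hex
  suffices H : ∃ A : Set 𝒳, (∀ x ∈ A, p x ≠ 0) ∧
      ∑' x, A.indicator (fun x => (1 / 2 : ℝ) ^ (n x + 1)) x = 1 / 2 by
    obtain ⟨A, hA, hsum⟩ := H
    have hnn : ∀ x, 0 ≤ A.indicator (fun x => (1 / 2 : ℝ) ^ (n x + 1)) x :=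
      fun x => Set.indicator_nonneg (fun _ _ => by positivity) x
    refine ⟨A.indicator (fun x => (1 / 2 : ℝ) ^ (n x + 1)), hnn, ?_, hsum, ?_, ?_, ?_, ?_⟩
    · intro x
      by_cases hx : x ∈ A
      · rw [Set.indicator_of_mem hx]
        exact (hn x (hA x hx)).1.le
      · rw [Set.indicator_of_notMem hx]
        exact hp0 x
    · intro x hx
      have hx' := Set.mem_of_indicator_ne_zero hx
      refine ⟨n x + 1, Nat.succ_pos _, ?_⟩
      rw [Set.indicator_of_mem hx', zpow_neg, zpow_natCast, one_div, inv_pow]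
    · intro x
      have := hnn x
      positivity
    · rw [tsum_mul_left, hsum]
      norm_num
    · intro x hx
      have hx' := Set.mem_of_indicator_ne_zero (right_ne_zero_of_mul hx)
      refine ⟨n x, ?_⟩
      simp only [Set.indicator_of_mem hx']
      rw [zpow_neg, zpow_natCast, one_div, inv_pow, pow_succ]
      field_simp
  set r : 𝒳 → ℝ := {x | p x ≠ 0}.indicator (fun x => (1 / 2 : ℝ) ^ (n x + 1)) with hr
  have hr0 : ∀ x, 0 ≤ r x := fun x => Set.indicator_nonneg (fun _ _ => by positivity) x
  have hrp : ∀ x, r x ≤ p x := by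
    intro x
    by_cases hx : p x = 0
    · simp [hr, hx]
    · simpa [hr, hx] using (hn x hx).1.le
  have hpr : ∀ x, p x / 2 ≤ r x := by
    intro x
    by_cases hx : p x = 0
    · simp [hr, hx]
    · have h1 := (hn x hx).2
      rw [hr, Set.indicator_of_mem (show x ∈ {x | p x ≠ 0} from hx), pow_succ]
      linarith
  have hrs : Summable r := Summable.of_nonneg_of_le hr0 hrp hps
  have hge : 1 / 2 ≤ ∑' x, r x := by
    have := (hps.div_const 2).tsum_le_tsum hpr hrs
    rwa [tsum_div_const, hp1] at this
  rcases hge.eq_or_lt with heq | hlt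
  · exact ⟨{x | p x ≠ 0}, fun x hx => hx, heq.symm⟩
  · obtain ⟨T, hT⟩ := (hrs.hasSum.eventually (lt_mem_nhds hlt)).exists
    have hT' : 1 / 2 ≤ ∑ x ∈ T.subtype (fun x => p x ≠ 0), (1 / 2 : ℝ) ^ (n x.1 + 1) := by
      rw [Finset.sum_subtype_eq_sum_filter (f := fun x => (1 / 2 : ℝ) ^ (n x + 1)),
        Finset.sum_filter]
      refine hT.le.trans_eq (Finset.sum_congr rfl fun x _ => ?_)
      rw [hr, Set.indicator_apply]
      rfl
    obtain ⟨S, hS⟩ := finset_half (fun x : {x // p x ≠ 0} => n x.1) _ hT'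
    refine ⟨(S.map (Function.Embedding.subtype _) : Finset 𝒳), ?_, ?_⟩
    · intro x hx
      simp only [Finset.coe_map, Set.mem_image] at hx
      obtain ⟨y, _, rfl⟩ := hx
      exact y.2
    · rw [← tsum_subtype, Finset.tsum_subtype' _ (fun x => (1 / 2 : ℝ) ^ (n x + 1)), Finset.sum_map]
      exact hS
end

section
/- Let p be a probability mass function on the positive integers with p(1) ≥ p(2) ≥ ⋯ (nonincreasing) and p(1) < 1. For each x with p(x) > 0, let α_x be the smallest integer satisfying 2^{-α_x} ≤ p(x). Then there exists a positive integer x_0 such that p(x) > 0 for all x ≤ x_0 and ∑_{x=1}^{x_0} 2^{-α_x} = 1/2. -/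
/-- Let `p` be a probability mass function on the positive integers which is
nonincreasing (`p(1) ≥ p(2) ≥ ⋯`) with `p(1) < 1`. For each `x` with `p(x) > 0`, let
`α x` be the smallest integer with `2^{-α x} ≤ p(x)`. Then there is a positive integer
`x₀` with `p(x) > 0` for all `1 ≤ x ≤ x₀` and `∑_{x=1}^{x₀} 2^{-α x} = 1/2`. -/
theorem stmt10 (p : ℕ → ℝ) (α : ℕ → ℤ)
    (hp0 : p 0 = 0) (hpnonneg : ∀ x, 0 ≤ p x) (hpsum : (∑' x, p x) = 1)
    (hmono : ∀ x : ℕ, 1 ≤ x → p (x + 1) ≤ p x) (hp1 : p 1 < 1)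
    (hα : ∀ x : ℕ, 0 < p x →
      ((2 : ℝ) ^ (-(α x)) ≤ p x ∧ ∀ β : ℤ, (2 : ℝ) ^ (-β) ≤ p x → α x ≤ β)) :
    ∃ x₀ : ℕ, 1 ≤ x₀ ∧ (∀ x : ℕ, 1 ≤ x → x ≤ x₀ → 0 < p x) ∧
      ∑ x ∈ Finset.Icc 1 x₀, (2 : ℝ) ^ (-(α x)) = 1 / 2 := by
  classical
  have hs : Summable p := by
    by_contra h
    rw [tsum_eq_zero_of_not_summable h] at hpsum
    norm_num at hpsum
  have hanti : ∀ n x : ℕ, 1 ≤ x → x ≤ n → p n ≤ p x := by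
    intro n x hx hxn
    induction n, hxn using Nat.le_induction with
    | base => exact le_rfl
    | succ k hk ih => exact (hmono k (hx.trans hk)).trans ih
  have hpos0 : ∀ x, 0 < p x → 1 ≤ x := by
    intro x hx
    rcases Nat.eq_zero_or_pos x with h | h
    · subst h; linarith
    · exact h
  have hα1 : ∀ x, 0 < p x → 1 ≤ α x := by
    intro x hx
    have h1 := (hα x hx).1
    have h2 := hanti x 1 le_rfl (hpos0 x hx)
    by_contra hc
    have h3 : (1 : ℝ) ≤ (2 : ℝ) ^ (-(α x)) := one_le_zpow₀ (by norm_num) (by omega)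
    linarith
  have hlt : ∀ x, 0 < p x → p x < 2 * (2 : ℝ) ^ (-(α x)) := by
    intro x hx
    by_contra hc
    push Not at hc
    have h1 : (2 : ℝ) ^ (-(α x - 1)) = 2 * (2 : ℝ) ^ (-(α x)) := by
      rw [show -(α x - 1) = 1 + -(α x) by ring, zpow_add₀ (by norm_num), zpow_one]
    have := (hα x hx).2 (α x - 1) (by rw [h1]; exact hc)
    omega
  obtain ⟨q, hq⟩ : ∃ q : ℕ → ℝ, ∀ x, q x = if 0 < p x then (2 : ℝ) ^ (-(α x)) else 0 :=
    ⟨_, fun _ => rfl⟩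
  have hqp : ∀ x, 0 < p x → q x = (2 : ℝ) ^ (-(α x)) := fun x hx => by rw [hq, if_pos hx]
  have hqz : ∀ x, ¬ 0 < p x → q x = 0 := fun x hx => by rw [hq, if_neg hx]
  have hq0 : ∀ x, 0 ≤ q x := by
    intro x; rw [hq]; split_ifs <;> positivity
  have hqle : ∀ x, q x ≤ p x := by
    intro x
    by_cases hx : 0 < p x
    · rw [hqp x hx]; exact (hα x hx).1
    · rw [hqz x hx]; exact hpnonneg x
  have hqs : Summable q := Summable.of_nonneg_of_le hq0 hqle hs
  have hple : ∀ x, p x ≤ 2 * q x := by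
    intro x
    by_cases hx : 0 < p x
    · rw [hqp x hx]; exact (hlt x hx).le
    · rw [hqz x hx]; linarith
  have hex : ∃ n, 1 / 2 ≤ ∑ x ∈ Finset.range n, q x := by
    by_contra hc
    push Not at hc
    have h1 : ∑' x, q x ≤ 1 / 2 := hqs.tsum_le_of_sum_range_le (fun n => (hc n).le)
    obtain ⟨i, hi⟩ : ∃ i, 0 < p i := by
      by_contra h
      push Not at h
      have : p = fun _ => 0 := funext fun x => le_antisymm (h x) (hpnonneg x)
      rw [this] at hpsum
      simp at hpsum
    have h2 : ∑' x, p x < ∑' x, 2 * q x :=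
      Summable.tsum_lt_tsum (i := i) hple (by rw [hqp i hi]; exact hlt i hi) hs (hqs.mul_left 2)
    rw [tsum_mul_left, hpsum] at h2
    linarith
  obtain ⟨N, hN, hmin⟩ : ∃ N, 1 / 2 ≤ ∑ x ∈ Finset.range N, q x ∧
      ∀ m < N, ∑ x ∈ Finset.range m, q x < 1 / 2 :=
    ⟨Nat.find hex, Nat.find_spec hex, fun m hm => not_le.1 (Nat.find_min hex hm)⟩
  rcases N with _ | n
  · norm_num at hN
  have hn := hmin n (Nat.lt_succ_self n)
  rw [Finset.sum_range_succ] at hN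
  have hpn : 0 < p n := by
    by_contra h
    rw [hqz n h] at hN
    linarith
  have hn1 := hpos0 n hpn
  have hall : ∀ x, 1 ≤ x → x ≤ n → 0 < p x := fun x h1 h2 => hpn.trans_le (hanti n x h1 h2)
  have hmul : ∀ z : ℤ, z ≤ α n → ∃ k : ℤ, (2 : ℝ) ^ (-z) = k * (2 : ℝ) ^ (-(α n)) := by
    intro z hz
    refine ⟨2 ^ (α n - z).toNat, ?_⟩
    push_cast
    rw [← zpow_natCast, ← zpow_add₀ (by norm_num)]
    congr 1
    omega
  have hqint : ∀ x, x ≤ n → ∃ k : ℤ, q x = k * (2 : ℝ) ^ (-(α n)) := by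
    intro x hx
    by_cases h : 0 < p x
    · rw [hqp x h]
      exact hmul _ ((hα x h).2 _ ((hα n hpn).1.trans (hanti n x (hpos0 x h) hx)))
    · exact ⟨0, by rw [hqz x h]; simp⟩
  have hsum : ∀ m, m ≤ n → ∃ k : ℤ, ∑ x ∈ Finset.range m, q x = k * (2 : ℝ) ^ (-(α n)) := by
    intro m
    induction m with
    | zero => intro _; exact ⟨0, by simp⟩
    | succ m ih =>
      intro hm
      obtain ⟨k, hk⟩ := ih (by omega)
      obtain ⟨l, hl⟩ := hqint m (by omega)
      exact ⟨k + l, by rw [Finset.sum_range_succ, hk, hl]; push_cast; ring⟩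
  obtain ⟨k, hk⟩ := hsum n le_rfl
  obtain ⟨m, hm⟩ := hmul 1 (hα1 n hpn)
  have hhalf : (1 / 2 : ℝ) = m * (2 : ℝ) ^ (-(α n)) := by rw [← hm]; norm_num
  have hw : (0 : ℝ) < (2 : ℝ) ^ (-(α n)) := by positivity
  have hkm : k + 1 ≤ m := by
    rw [hk, hhalf] at hn
    have := lt_of_mul_lt_mul_right hn hw.le
    exact_mod_cast this
  have hkm' : (k : ℝ) + 1 ≤ m := by exact_mod_cast hkm
  have hle : ∑ x ∈ Finset.range n, q x + q n ≤ 1 / 2 := by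
    rw [hk, hqp n hpn, hhalf]
    nlinarith
  refine ⟨n, hn1, hall, ?_⟩
  have e1 : ∑ x ∈ Finset.Icc 1 n, (2 : ℝ) ^ (-(α x)) = ∑ x ∈ Finset.Icc 1 n, q x :=
    Finset.sum_congr rfl fun x hx => by
      rw [Finset.mem_Icc] at hx
      rw [hqp x (hall x hx.1 hx.2)]
  have e2 : ∑ x ∈ Finset.Icc 1 n, q x = ∑ x ∈ Finset.range (n + 1), q x := by
    apply Finset.sum_subset
    · intro x hx
      simp only [Finset.mem_Icc, Finset.mem_range] at *
      omega
    · intro x hx hx'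
      simp only [Finset.mem_Icc, Finset.mem_range] at *
      have : x = 0 := by omega
      rw [this]
      exact hqz 0 (by rw [hp0]; exact lt_irrefl _)
  rw [e1, e2, Finset.sum_range_succ]
  exact le_antisymm hle hN
end

section
/- Let p be a probability mass function on a countable set 𝒳. Then there exists a sequence of dyadic probability mass functions q_1, q_2, q_3, … on 𝒳 such that p(x) = ∑_{w=1}^∞ 2^{-w} q_w(x) for every x ∈ 𝒳. Equivalently, there exists a joint distribution of (X, W) with X having marginal p_X = p and W having marginal distribution Geom(1/2) (i.e., P(W = w) = 2^{-w} for w = 1, 2, …), such that the conditional distribution of X given W = w is dyadic for every w ≥ 1. -/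
lemma exists_subset_sum_eq_one {X : Type*} [DecidableEq X] (j : X → ℕ) (F : Finset X) :
    1 ≤ ∑ x ∈ F, ((1 : ℝ) / 2) ^ j x →
      ∃ G ⊆ F, ∑ x ∈ G, ((1 : ℝ) / 2) ^ j x = 1 := by
  induction F using Finset.strongInduction with
  | H F ih =>
    intro h
    have hne : F.Nonempty := by
      by_contra hF
      rw [Finset.not_nonempty_iff_eq_empty] at hF
      subst hF
      norm_num at h
    obtain ⟨x, hx, hmax⟩ := Finset.exists_max_image F j hne
    by_cases h2 : 1 ≤ ∑ y ∈ F.erase x, ((1 : ℝ) / 2) ^ j y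
    · obtain ⟨G, hG, hs⟩ := ih _ (Finset.erase_ssubset hx) h2
      exact ⟨G, hG.trans (Finset.erase_subset _ _), hs⟩
    · refine ⟨F, subset_rfl, ?_⟩
      have hpos : (0 : ℝ) < 2 ^ j x := by positivity
      have key : ∀ G ⊆ F, (∑ y ∈ G, ((1 : ℝ) / 2) ^ j y) * 2 ^ j x
          = ((∑ y ∈ G, 2 ^ (j x - j y) : ℕ) : ℝ) := by
        intro G hG
        rw [Finset.sum_mul]
        push_cast
        refine Finset.sum_congr rfl fun y hy => ?_
        have := hmax y (hG hy)
        obtain ⟨k, hk⟩ := Nat.exists_eq_add_of_le this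
        rw [hk, Nat.add_sub_cancel_left, pow_add, ← mul_assoc, ← mul_pow]
        norm_num
      have k1 := key F subset_rfl
      have k2 := key (F.erase x) (Finset.erase_subset _ _)
      have hsum := Finset.add_sum_erase F (fun y => 2 ^ (j x - j y)) hx
      simp only [Nat.sub_self, pow_zero] at hsum
      have l1 : 2 ^ j x ≤ ∑ y ∈ F, 2 ^ (j x - j y) := by
        have : (2 : ℝ) ^ j x ≤ ((∑ y ∈ F, 2 ^ (j x - j y) : ℕ) : ℝ) := by
          rw [← k1]; nlinarith
        exact_mod_cast this
      have l2 : ∑ y ∈ F.erase x, 2 ^ (j x - j y) < 2 ^ j x := by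
        have : ((∑ y ∈ F.erase x, 2 ^ (j x - j y) : ℕ) : ℝ) < (2 : ℝ) ^ j x := by
          rw [← k2]; push Not at h2; nlinarith
        exact_mod_cast this
      have l3 : ∑ y ∈ F, 2 ^ (j x - j y) = 2 ^ j x := by omega
      rw [l3] at k1
      push_cast at k1
      exact mul_right_cancel₀ hpos.ne' (k1.trans (one_mul _).symm)

lemma exists_dyadic_le {X : Type*} (p : X → ℝ) (hp0 : ∀ x, 0 ≤ p x) (hp1 : HasSum p 1) :
    ∃ q : X → ℝ, IsDyadicPMF q ∧ HasSum q 1 ∧ ∀ x, q x ≤ 2 * p x := by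
  classical
  -- it suffices to find a finite set and exponents
  suffices H : ∃ (G : Finset X) (j : X → ℕ), ∑ x ∈ G, ((1 : ℝ) / 2) ^ j x = 1 ∧
      ∀ x ∈ G, ((1 : ℝ) / 2) ^ j x ≤ 2 * p x by
    obtain ⟨G, j, hs, hle⟩ := H
    let q : X → ℝ := fun x => if x ∈ G then ((1 : ℝ) / 2) ^ j x else 0
    have hq : HasSum q 1 := by
      have h := hasSum_sum_of_ne_finset_zero (f := q) (s := G) (L := .unconditional X)
        (fun x hx => by simp [q, hx])
      have h' : ∑ x ∈ G, q x = 1 := by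
        rw [← hs]
        exact Finset.sum_congr rfl fun x hx => by simp [q, hx]
      rwa [h'] at h
    refine ⟨q, ⟨fun x => ?_, hq.tsum_eq, fun x hx => ?_⟩, hq, fun x => ?_⟩
    · by_cases h : x ∈ G <;> simp [q, h]
    · by_cases h : x ∈ G
      · exact ⟨j x, by simp [q, h]⟩
      · simp [q, h] at hx
    · by_cases h : x ∈ G
      · simpa [q, h] using hle x h
      · simpa [q, h] using hp0 x
  by_cases hhalf : ∃ x, 1 / 2 ≤ p x
  · obtain ⟨x, hx⟩ := hhalf
    exact ⟨{x}, fun _ => 0, by simp, by simp; linarith⟩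
  push Not at hhalf
  have hj : ∀ x, ∃ j : ℕ, 0 < p x → p x < ((1 : ℝ) / 2) ^ j ∧ ((1 : ℝ) / 2) ^ j ≤ 2 * p x := by
    intro x
    by_cases h : 0 < p x
    · obtain ⟨n, h1, h2⟩ := exists_nat_pow_near (x := (p x)⁻¹ / 2) (y := (2 : ℝ))
        (by
          have h3 := hhalf x
          have h4 : (1 / 2 : ℝ)⁻¹ ≤ (p x)⁻¹ := inv_anti₀ h h3.le
          norm_num at h4
          linarith) (by norm_num)
      have hpi : p x * (p x)⁻¹ = 1 := mul_inv_cancel₀ h.ne'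
      have hpow : (0 : ℝ) < 2 ^ n := by positivity
      by_cases heq : p x * 2 ^ (n + 1) = 1
      · refine ⟨n, fun _ => ?_⟩
        have e : ((1 : ℝ) / 2) ^ n = 2 * p x := by
          have h5 : ((1 : ℝ) / 2) ^ n * 2 ^ n = 1 := by
            rw [← mul_pow]; norm_num
          refine mul_right_cancel₀ hpow.ne' ?_
          rw [h5, ← heq, pow_succ]
          ring
        rw [e]
        constructor <;> linarith
      · refine ⟨n + 1, fun _ => ?_⟩
        have hle : p x * 2 ^ (n + 1) < 1 := by
          refine lt_of_le_of_ne ?_ heq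
          rw [pow_succ]
          nlinarith
        rw [one_div, inv_pow]
        constructor
        · rw [lt_inv_comm₀ h (by positivity)]
          rw [lt_inv_comm₀ (by positivity) h, ← one_div, lt_div_iff₀ (by positivity)]
          exact hle
        · rw [inv_le_iff_one_le_mul₀ (by positivity)]
          nlinarith
    · exact ⟨0, fun h' => absurd h' h⟩
  choose j hj using hj
  let g : X → ℝ := fun x => if 0 < p x then ((1 : ℝ) / 2) ^ j x else 0
  have hg2 : ∀ x, g x ≤ 2 * p x := by
    intro x
    by_cases h : 0 < p x
    · simpa [g, h] using (hj x h).2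
    · simpa [g, h] using hp0 x
  have hg0 : ∀ x, 0 ≤ g x := by
    intro x
    by_cases h : 0 < p x <;> simp [g, h]
  have hpg : ∀ x, p x ≤ g x := by
    intro x
    by_cases h : 0 < p x
    · simpa [g, h] using (hj x h).1.le
    · have h' := le_of_not_gt h
      simp only [g, h, if_false]
      exact h'
  have hgs : Summable g := Summable.of_nonneg_of_le hg0 hg2 (hp1.summable.mul_left 2)
  obtain ⟨x0, hx0⟩ : ∃ x, 0 < p x := by
    by_contra! h
    have h0 : p = 0 := funext fun x => le_antisymm (h x) (hp0 x)
    rw [h0] at hp1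
    exact zero_ne_one (hasSum_zero.unique hp1)
  have hlt : 1 < ∑' x, g x := by
    refine hasSum_lt (i := x0) hpg ?_ hp1 hgs.hasSum
    simpa [g, hx0] using (hj x0 hx0).1
  obtain ⟨F, hF⟩ := (hgs.hasSum.eventually (lt_mem_nhds hlt)).exists
  have hF' : 1 ≤ ∑ x ∈ F.filter (fun x => 0 < p x), ((1 : ℝ) / 2) ^ j x := by
    rw [Finset.sum_filter]
    exact hF.le
  obtain ⟨G, hG, hs⟩ := exists_subset_sum_eq_one j _ hF'
  exact ⟨G, j, hs, fun x hx => (hj x (Finset.mem_filter.1 (hG hx)).2).2⟩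

/-- Any probability mass function `p` on a countable set `𝒳` is a mixture
`p(x) = ∑_{w=1}^∞ 2^{-w} q_w(x)` of dyadic probability mass functions `q_w`, with
geometric weights `2^{-w}`. (Here `q w` plays the role of `q_{w+1}`, so the weight of
`q w` is `2^{-(w+1)}` for `w = 0, 1, 2, …`.) Equivalently, there is a joint distribution
`(X, W)` with `X ~ p`, `W ~ Geom(1/2)`, and the conditional distribution of `X` given
`W = w` dyadic for every `w ≥ 1`. -/
theorem stmt11 {𝒳 : Type*} [Countable 𝒳] (p : 𝒳 → ℝ)
    (hp0 : ∀ x, 0 ≤ p x) (hp1 : (∑' x, p x) = 1) :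
    ∃ q : ℕ → 𝒳 → ℝ,
      (∀ w : ℕ, IsDyadicPMF (q w)) ∧
      ∀ x, p x = ∑' w : ℕ, ((1 : ℝ) / 2) ^ (w + 1) * q w x := by
  have hps : HasSum p 1 := by
    have hs : Summable p := by
      by_contra h
      rw [tsum_eq_zero_of_not_summable h] at hp1
      exact zero_ne_one hp1
    exact hp1 ▸ hs.hasSum
  let P := {r : 𝒳 → ℝ // (∀ x, 0 ≤ r x) ∧ HasSum r 1}
  have hstep : ∀ r : P, ∃ q : 𝒳 → ℝ, IsDyadicPMF q ∧ HasSum q 1 ∧ ∀ x, q x ≤ 2 * r.1 x :=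
    fun r => exists_dyadic_le r.1 r.2.1 r.2.2
  choose Q hQ1 hQ2 hQ3 using hstep
  let next : P → P := fun r => ⟨fun x => 2 * r.1 x - Q r x,
    fun x => sub_nonneg.2 (hQ3 r x), by
      have h := (r.2.2.mul_left 2).sub (hQ2 r)
      norm_num at h
      exact h⟩
  let R : ℕ → P := fun n => Nat.rec ⟨p, hp0, hps⟩ (fun _ r => next r) n
  have hR : ∀ n x, (R (n + 1)).1 x = 2 * (R n).1 x - Q (R n) x := fun n x => rfl
  refine ⟨fun w => Q (R w), fun w => hQ1 _, fun x => ?_⟩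
  have hpart : ∀ n, ∑ w ∈ Finset.range n, ((1 : ℝ) / 2) ^ (w + 1) * Q (R w) x
      = p x - (1 / 2) ^ n * (R n).1 x := by
    intro n
    induction n with
    | zero => simp [R]
    | succ n ih =>
      rw [Finset.sum_range_succ, ih, hR]
      ring
  have hle : ∀ n, (R n).1 x ≤ 1 := fun n => le_hasSum (R n).2.2 x (fun y _ => (R n).2.1 y)
  have hz : Filter.Tendsto (fun n => ((1 : ℝ) / 2) ^ n * (R n).1 x) Filter.atTop (nhds 0) := by
    refine squeeze_zero (fun n => mul_nonneg (by positivity) ((R n).2.1 x))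
      (fun n => mul_le_of_le_one_right (by positivity) (hle n))
      (tendsto_pow_atTop_nhds_zero_of_lt_one (by norm_num) (by norm_num))
  have hs : HasSum (fun w : ℕ => ((1 : ℝ) / 2) ^ (w + 1) * Q (R w) x) (p x) := by
    rw [hasSum_iff_tendsto_nat_of_nonneg
      (fun w => mul_nonneg (by positivity) ((hQ1 (R w)).1 x))]
    simp only [hpart]
    simpa using hz.const_sub (p x)
  exact hs.tsum_eq.symm
end

section
/- Let X be a random variable taking values in a countable set 𝒳 with finite Shannon entropy H(X). Then there exist a random variable W jointly distributed with X such that W ~ Geom(1/2) (i.e., P(W = w) = 2^{-w} for w = 1, 2, …), and functions f_w : 𝒳 → {0,1}* for each w ≥ 1, such that the random string K := f_W(X) is a conditionally randomly-stopped bit sequence given W, K = f_W(X) determines X given W on the support (i.e., x ↦ f_w(x) is injective on the support of the conditional distribution of X given W = w, for each w), and E[|K|] ≥ H(X) − 2. -/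
open MeasureTheory ProbabilityTheory
open scoped ENNReal

theorem dy_sub {Y : Type*} [DecidableEq Y] (l : Y → ℕ) : ∀ (n : ℕ) (T : Finset Y), T.card = n →
    1 ≤ ∑ x ∈ T, ((1:ℝ)/2) ^ l x → ∃ S ⊆ T, ∑ x ∈ S, ((1:ℝ)/2) ^ l x = 1 := by
  intro n
  induction n with
  | zero =>
    intro T hT h
    rw [Finset.card_eq_zero] at hT
    subst hT
    norm_num at h
  | succ n ih =>
    intro T hT h
    rcases h.eq_or_lt with h1 | h1
    · exact ⟨T, subset_rfl, h1.symm⟩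
    have hne : T.Nonempty := by
      rw [← Finset.card_pos]; omega
    obtain ⟨m, hm, hmax⟩ := T.exists_max_image l hne
    have hint : ∑ x ∈ T, ((1:ℝ)/2) ^ l x = ((∑ x ∈ T, 2 ^ (l m - l x) : ℕ) : ℝ) * (1/2) ^ l m := by
      push_cast
      rw [Finset.sum_mul]
      refine Finset.sum_congr rfl fun x hx => ?_
      have : l m = (l m - l x) + l x := by have := hmax x hx; omega
      conv_rhs => rw [this, pow_add]
      have h2 : (2:ℝ) ^ (l m - l x) * (1/2) ^ (l m - l x) = 1 := by
        rw [← mul_pow]; norm_num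
      simp only [Nat.add_sub_cancel]
      rw [← mul_assoc, h2, one_mul]
    have h22 : (2:ℝ) ^ (l m) * (1/2) ^ (l m) = 1 := by
      rw [← mul_pow]; norm_num
    have hpos : (0:ℝ) < (1/2) ^ l m := by positivity
    have hge : 2 ^ l m + 1 ≤ ∑ x ∈ T, 2 ^ (l m - l x) := by
      by_contra hc
      have : (∑ x ∈ T, 2 ^ (l m - l x)) ≤ 2 ^ l m := by omega
      have h3 : ((∑ x ∈ T, 2 ^ (l m - l x) : ℕ) : ℝ) ≤ 2 ^ l m := by exact_mod_cast this
      rw [hint] at h1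
      nlinarith
    have hge' : (2:ℝ) ^ l m + 1 ≤ ((∑ x ∈ T, 2 ^ (l m - l x) : ℕ) : ℝ) := by exact_mod_cast hge
    have h4 : 1 + (1/2) ^ l m ≤ ∑ x ∈ T, ((1:ℝ)/2) ^ l x := by
      rw [hint]; nlinarith
    have h5 := Finset.sum_erase_add T (fun x => ((1:ℝ)/2) ^ l x) hm
    obtain ⟨S, hS, h6⟩ := ih (T.erase m) (by rw [Finset.card_erase_of_mem hm]; omega) (by
      linarith)
    exact ⟨S, hS.trans (Finset.erase_subset _ _), h6⟩

theorem dy_code {Y : Type*} [DecidableEq Y] : ∀ (N : ℕ) (l : Y → ℕ) (S : Finset Y),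
    (∀ x ∈ S, l x ≤ N) → ∑ x ∈ S, ((1:ℝ)/2) ^ l x = 1 →
    ∃ c : Y → List Bool, (∀ x ∈ S, (c x).length = l x) ∧
      (∀ x ∈ S, ∀ y ∈ S, c x = c y → x = y) ∧
      ∀ (pre : List Bool) (b : Bool),
        (∑ x ∈ S, 
          if pre.length < (c x).length ∧ (c x).take (pre.length + 1) = pre ++ [b]
          then ((1:ℝ)/2) ^ l x else 0) =
        (1/2) * ∑ x ∈ S, 
          if pre.length < (c x).length ∧ (c x).take pre.length = pre
          then ((1:ℝ)/2) ^ l x else 0 := by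
  intro N
  induction N with
  | zero =>
    intro l S hl hs
    have h0 : ∀ x ∈ S, l x = 0 := fun x hx => by have := hl x hx; omega
    have hc : S.card = 1 := by
      have : ∑ x ∈ S, ((1:ℝ)/2) ^ l x = ∑ x ∈ S, 1 :=
        Finset.sum_congr rfl fun x hx => by rw [h0 x hx]; simp
      rw [this] at hs
      simp at hs
      exact_mod_cast hs
    refine ⟨fun _ => [], fun x hx => by simp [h0 x hx], ?_, ?_⟩
    · intro x hx y hy _
      exact Finset.card_le_one.mp hc.le x hx y hy
    · intro pre b
      simp
  | succ N ih =>
    intro l S hl hs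
    by_cases hz : ∃ x ∈ S, l x = 0
    · obtain ⟨x, hx, hx0⟩ := hz
      have hS : S = {x} := by
        refine Finset.eq_singleton_iff_unique_mem.mpr ⟨hx, fun y hy => ?_⟩
        by_contra hne
        have h5 := Finset.sum_erase_add S (fun x => ((1:ℝ)/2) ^ l x) hx
        have h6 : ((1:ℝ)/2) ^ l y ≤ ∑ x ∈ S.erase x, ((1:ℝ)/2) ^ l x :=
          Finset.single_le_sum (f := fun x => ((1:ℝ)/2) ^ l x) (fun i _ => by positivity)
            (Finset.mem_erase.mpr ⟨hne, hy⟩)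
        have h7 : (0:ℝ) < (1/2) ^ l y := by positivity
        simp only [hx0, pow_zero] at h5
        linarith
      subst hS
      refine ⟨fun _ => [], fun y hy => ?_, ?_, ?_⟩
      · rw [Finset.mem_singleton] at hy
        rw [hy, hx0]; rfl
      · intro y hy z hz _
        rw [Finset.mem_singleton] at hy hz
        rw [hy, hz]
      · intro pre b
        simp
    · push Not at hz
      set l' : Y → ℕ := fun x => l x - 1 with hl'
      have hll : ∀ x ∈ S, ((1:ℝ)/2) ^ l x = (1/2) * (1/2) ^ l' x := by
        intro x hx
        have : l x = l' x + 1 := by have := hz x hx; simp only [hl']; omega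
        rw [this, pow_succ]; ring
      have hsum : ∑ x ∈ S, ((1:ℝ)/2) ^ l' x = 2 := by
        rw [Finset.sum_congr rfl hll, ← Finset.mul_sum] at hs
        linarith
      obtain ⟨S0, hS0, hs0⟩ := dy_sub l' _ S rfl (by rw [hsum]; norm_num)
      have hs1 : ∑ x ∈ S \ S0, ((1:ℝ)/2) ^ l' x = 1 := by
        have := Finset.sum_sdiff (f := fun x => ((1:ℝ)/2) ^ l' x) hS0
        linarith
      obtain ⟨c0, hc0, hi0, hr0⟩ := ih l' S0 (fun x hx => by
        have := hl x (hS0 hx); simp only [hl']; omega) hs0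
      obtain ⟨c1, hc1, hi1, hr1⟩ := ih l' (S \ S0) (fun x hx => by
        have := hl x (Finset.sdiff_subset hx); simp only [hl']; omega) hs1
      set c : Y → List Bool := fun x => if x ∈ S0 then false :: c0 x else true :: c1 x with hc
      have e0 : ∀ x ∈ S0, c x = false :: c0 x := fun x hx => by simp [hc, hx]
      have e1 : ∀ x ∈ S \ S0, c x = true :: c1 x := fun x hx => by
        simp [hc, (Finset.mem_sdiff.mp hx).2]
      have split : ∀ (P : List Bool → Prop) [DecidablePred P], (∑ x ∈ S, 
          if P (c x) then ((1:ℝ)/2) ^ l x else 0) =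
          (1/2) * (∑ x ∈ S \ S0, 
            if P (true :: c1 x) then ((1:ℝ)/2) ^ l' x else 0) +
          (1/2) * (∑ x ∈ S0, 
            if P (false :: c0 x) then ((1:ℝ)/2) ^ l' x else 0) := by
        intro P _
        rw [← Finset.sum_sdiff hS0, Finset.mul_sum, Finset.mul_sum]
        congr 1
        · refine Finset.sum_congr rfl fun x hx => ?_
          rw [e1 x hx, hll x (Finset.sdiff_subset hx)]
          split_ifs <;> simp
        · refine Finset.sum_congr rfl fun x hx => ?_
          rw [e0 x hx, hll x (hS0 hx)]
          split_ifs <;> simp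
      refine ⟨c, ?_, ?_, ?_⟩
      · intro x hx
        have hx1 := hz x hx
        by_cases h : x ∈ S0
        · rw [e0 x h, List.length_cons, hc0 x h]; simp only [hl']; omega
        · have h := Finset.mem_sdiff.mpr ⟨hx, h⟩
          rw [e1 x h, List.length_cons, hc1 x h]; simp only [hl']; omega
      · intro x hx y hy hxy
        by_cases h : x ∈ S0 <;> by_cases h' : y ∈ S0
        · rw [e0 x h, e0 y h'] at hxy
          exact hi0 x h y h' (by simpa using hxy)
        · have h' := Finset.mem_sdiff.mpr ⟨hy, h'⟩
          rw [e0 x h, e1 y h'] at hxy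
          simp at hxy
        · have h := Finset.mem_sdiff.mpr ⟨hx, h⟩
          rw [e1 x h, e0 y h'] at hxy
          simp at hxy
        · have h := Finset.mem_sdiff.mpr ⟨hx, h⟩
          have h' := Finset.mem_sdiff.mpr ⟨hy, h'⟩
          rw [e1 x h, e1 y h'] at hxy
          exact hi1 x h y h' (by simpa using hxy)
      · intro pre b
        rw [split (fun k => pre.length < k.length ∧ k.take (pre.length + 1) = pre ++ [b]),
          split (fun k => pre.length < k.length ∧ k.take pre.length = pre)]
        cases pre with
        | nil =>
          have z0 : (∑ x ∈ S0, ((1:ℝ)/2) ^ l' x) = 1 := hs0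
          cases b
          · simp at hs1 hs0 ⊢
            rw [hs1, hs0]; norm_num
          · simp at hs1 hs0 ⊢
            rw [hs1, hs0]; norm_num
        | cons a pre =>
          have r0 := hr0 pre b
          have r1 := hr1 pre b
          cases a
          · simp at r0 ⊢
            rw [r0]
          · simp at r1 ⊢
            rw [r1]

theorem dy_sel {Y : Type*} [DecidableEq Y] (p : Y → ℝ) (h0 : ∀ x, 0 ≤ p x) (h1 : HasSum p 1) :
    ∃ (S : Finset Y) (l : Y → ℕ), ∑ x ∈ S, ((1:ℝ)/2) ^ l x = 1 ∧
      ∀ x ∈ S, ((1:ℝ)/2) ^ l x ≤ 2 * p x := by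
  by_cases hone : ∃ x, 1 ≤ p x
  · obtain ⟨x, hx⟩ := hone
    refine ⟨{x}, fun _ => 0, by simp, fun y hy => ?_⟩
    rw [Finset.mem_singleton] at hy
    subst hy
    simp; linarith
  push Not at hone
  have hex : ∀ x, ∃ n : ℕ, 0 < p x → p x < (1/2) ^ n ∧ ((1:ℝ)/2) ^ n ≤ 2 * p x := by
    intro x
    by_cases hp : 0 < p x
    · have hE : ∃ n : ℕ, ((1:ℝ)/2) ^ n ≤ p x := by
        obtain ⟨n, hn⟩ := exists_pow_lt_of_lt_one hp (show (1:ℝ)/2 < 1 by norm_num)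
        exact ⟨n, hn.le⟩
      classical
      obtain ⟨n, hn⟩ : ∃ n, Nat.find hE = n + 1 := by
        refine Nat.exists_eq_succ_of_ne_zero fun h => ?_
        have := Nat.find_spec hE
        rw [h] at this
        have := hone x
        simp at *
        linarith
      refine ⟨n, fun _ => ⟨?_, ?_⟩⟩
      · have := Nat.find_min hE (m := n) (by omega)
        push Not at this
        exact this
      · have := Nat.find_spec hE
        rw [hn, pow_succ] at this
        linarith
    · exact ⟨0, fun h => absurd h hp⟩
  choose l hl using hex
  set g : Y → ℝ := fun x => if 0 < p x then (1/2) ^ l x else 0 with hg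
  have hgp : ∀ x, p x ≤ g x := by
    intro x
    simp only [hg]
    split_ifs with h
    · exact (hl x h).1.le
    · exact not_lt.mp h
  have hg2 : ∀ x, g x ≤ 2 * p x := by
    intro x
    simp only [hg]
    split_ifs with h
    · exact (hl x h).2
    · linarith [h0 x]
  have hgs : Summable g := Summable.of_nonneg_of_le (fun x => (h0 x).trans (hgp x)) hg2
    (h1.summable.mul_left 2)
  obtain ⟨x0, hx0⟩ : ∃ x, 0 < p x := by
    by_contra hc
    push Not at hc
    have : p = fun _ => 0 := funext fun x => le_antisymm (hc x) (h0 x)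
    rw [this] at h1
    exact zero_ne_one (hasSum_zero.unique h1)
  have hlt : 1 < ∑' x, g x := by
    rw [← h1.tsum_eq]
    refine Summable.tsum_lt_tsum (i := x0) hgp ?_ h1.summable hgs
    simp only [hg, hx0, if_true]
    exact (hl x0 hx0).1
  obtain ⟨T, hT⟩ := (hgs.hasSum.eventually (lt_mem_nhds hlt)).exists
  have hT2 : 1 ≤ ∑ x ∈ T.filter (fun x => 0 < p x), ((1:ℝ)/2) ^ l x := by
    rw [Finset.sum_filter]; exact hT.le
  obtain ⟨S, hS, hs⟩ := dy_sub l _ _ rfl hT2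
  exact ⟨S, l, hs, fun x hx => (hl x (Finset.mem_filter.mp (hS hx)).2).2⟩

theorem dy_decomp {Y : Type*} [DecidableEq Y] (p : Y → ℝ) (h0 : ∀ x, 0 ≤ p x) (h1 : HasSum p 1) :
    ∃ (S : ℕ → Finset Y) (l : ℕ → Y → ℕ), (∀ j, ∑ x ∈ S j, ((1:ℝ)/2) ^ l j x = 1) ∧
      ∀ x, HasSum (fun j => (1/2) ^ (j+1) * (if x ∈ S j then ((1:ℝ)/2) ^ l j x else 0)) (p x) := by
  let D := {p : Y → ℝ // (∀ x, 0 ≤ p x) ∧ HasSum p 1}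
  choose S l hs hle using fun q : D => dy_sel q.1 q.2.1 q.2.2
  let d : D → Y → ℝ := fun q x => if x ∈ S q then ((1:ℝ)/2) ^ l q x else 0
  have hd : ∀ q, HasSum (d q) 1 := by
    intro q
    have : HasSum (d q) (∑ b ∈ S q, d q b) := hasSum_sum_of_ne_finset_zero (by
      intro b hb; simp [d, hb])
    have e : ∑ b ∈ S q, d q b = 1 := by
      rw [← hs q]
      exact Finset.sum_congr rfl fun x hx => by simp [d, hx]
    rwa [e] at this
  let step : D → D := fun q => ⟨fun x => 2 * q.1 x - d q x, by
    constructor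
    · intro x
      simp only [d]
      split_ifs with h
      · linarith [hle q x h]
      · linarith [q.2.1 x]
    · have := (q.2.2.mul_left 2).sub (hd q)
      norm_num at this
      exact this⟩
  let q : ℕ → D := fun n => step^[n] ⟨p, h0, h1⟩
  have hq : ∀ n x, (q (n+1)).1 x = 2 * (q n).1 x - d (q n) x := by
    intro n x
    simp only [q, Function.iterate_succ_apply']
    rfl
  refine ⟨fun j => S (q j), fun j => l (q j), fun j => hs _, fun x => ?_⟩
  have key : ∀ n, ∑ j ∈ Finset.range n, (1/2) ^ (j+1) * d (q j) x = p x - (1/2) ^ n * (q n).1 x := by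
    intro n
    induction n with
    | zero => simp [q]
    | succ n ih =>
      rw [Finset.sum_range_succ, ih, hq, pow_succ]; ring
  have hnn : ∀ j, 0 ≤ (1/2) ^ (j+1) * d (q j) x := by
    intro j
    have : 0 ≤ d (q j) x := by simp only [d]; split_ifs <;> positivity
    positivity
  refine (hasSum_iff_tendsto_nat_of_nonneg hnn _).mpr ?_
  simp only [key]
  have ht : Filter.Tendsto (fun n => ((1:ℝ)/2) ^ n * (q n).1 x) Filter.atTop (nhds 0) := by
    refine squeeze_zero (g := fun n => ((1:ℝ)/2)^n) (fun n => ?_) (fun n => ?_)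
      (tendsto_pow_atTop_nhds_zero_of_lt_one (by norm_num) (by norm_num))
    · have := (q n).2.1 x; positivity
    · have h1 : (q n).1 x ≤ 1 := le_hasSum (q n).2.2 x (fun y _ => (q n).2.1 y)
      exact mul_le_of_le_one_right (by positivity) h1
  simpa using ht.const_sub (p x)

theorem hasSum_pair {A B : Type*} {f : A × B → ℝ} {g : A → ℝ} {a : ℝ} (h0 : ∀ z, 0 ≤ f z)
    (h1 : ∀ x, HasSum (fun y => f (x, y)) (g x)) (h2 : HasSum g a) : HasSum f a := by
  have hs : Summable f := by
    refine (summable_prod_of_nonneg h0).mpr ⟨fun x => (h1 x).summable, ?_⟩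
    simp only [fun x => (h1 x).tsum_eq]
    exact h2.summable
  have := hs.hasSum.prod_fiberwise h1
  rw [← this.unique h2]
  exact hs.hasSum

theorem hasSum_pair' {A B : Type*} {f : A × B → ℝ} {g : B → ℝ} {a : ℝ} (h0 : ∀ z, 0 ≤ f z)
    (h1 : ∀ y, HasSum (fun x => f (x, y)) (g y)) (h2 : HasSum g a) : HasSum f a := by
  have := hasSum_pair (f := f ∘ Prod.swap) (fun z => h0 _) h1 h2
  exact (Equiv.prodComm B A).hasSum_iff.mp this

theorem core {Y : Type} (p : Y → ℝ) (h0 : ∀ x, 0 ≤ p x) (h1 : HasSum p 1)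
    (hent : Summable fun x => - p x * Real.logb 2 (p x)) :
    ∃ (Ω' : Type) (_ : MeasurableSpace Ω') (μ' : Measure Ω') (_ : IsProbabilityMeasure μ')
      (X' : Ω' → Y) (W : Ω' → ℕ) (f : ℕ → Y → List Bool),
      (∀ x : Y, MeasurableSet {ω | X' ω = x}) ∧
      (∀ w : ℕ, MeasurableSet {ω | W ω = w}) ∧
      (∀ x : Y, μ' {ω | X' ω = x} = ENNReal.ofReal (p x)) ∧
      (∀ w : ℕ, 1 ≤ w → μ' {ω | W ω = w} = ((2 : ℝ≥0∞)⁻¹) ^ w) ∧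
      IsCondRSBS μ' (fun ω => f (W ω) (X' ω)) W ∧
      (∀ w : ℕ, ∀ x y : Y, 0 < μ' {ω | W ω = w ∧ X' ω = x} →
        0 < μ' {ω | W ω = w ∧ X' ω = y} → f w x = f w y → x = y) ∧
      (∑' x : Y, - p x * Real.logb 2 (p x)) - 2
        ≤ ∑' k : List Bool, (k.length : ℝ) * (μ' {ω | f (W ω) (X' ω) = k}).toReal := by
  classical
  obtain ⟨S, l, hS, hp⟩ := dy_decomp p h0 h1
  choose c hlen hinj hr using fun j => dy_code ((S j).sup (l j)) (l j) (S j)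
    (fun x hx => Finset.le_sup hx) (hS j)
  let d : ℕ → Y → ℝ := fun j x => if x ∈ S j then ((1:ℝ)/2) ^ l j x else 0
  let m : Y × ℕ → ℝ := fun z => (1/2) ^ (z.2+1) * d z.2 z.1
  have hd0 : ∀ j x, 0 ≤ d j x := fun j x => by simp only [d]; split_ifs <;> positivity
  have hm0 : ∀ z, 0 ≤ m z := fun z => by
    have := hd0 z.2 z.1
    simp only [m]; positivity
  have hmx : ∀ x, HasSum (fun j => m (x, j)) (p x) := hp
  have hm1 : HasSum m 1 := hasSum_pair hm0 hmx h1
  have hmp : ∀ x j, m (x, j) ≤ p x := fun x j => le_hasSum (hmx x) j (fun i _ => hm0 _)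
  let P : PMF (Y × ℕ) := ⟨fun z => ENNReal.ofReal (m z), by
    refine ENNReal.summable.hasSum_iff.mpr ?_
    rw [← ENNReal.ofReal_tsum_of_nonneg hm0 hm1.summable, hm1.tsum_eq, ENNReal.ofReal_one]⟩
  let _ : MeasurableSpace (Y × ℕ) := ⊤
  let μ' : Measure (Y × ℕ) := P.toMeasure
  have hμ : ∀ A : Set (Y × ℕ), μ' A = ENNReal.ofReal (∑' z, A.indicator m z) := by
    intro A
    simp only [μ']
    rw [PMF.toMeasure_apply _ (MeasurableSpace.measurableSet_top),
      ENNReal.ofReal_tsum_of_nonneg (fun z => Set.indicator_nonneg (fun z _ => hm0 z) _)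
        (hm1.summable.indicator _)]
    refine tsum_congr fun z => ?_
    by_cases h : z ∈ A
    · simp [h]; rfl
    · simp [h]
  have hμj : ∀ (j : ℕ) (Q : Y → Prop), μ' {ω | ω.2 = j ∧ Q ω.1} = ENNReal.ofReal ((1/2)^(j+1) *
      ∑ x ∈ S j, if Q x then ((1:ℝ)/2) ^ l j x else 0) := by
    intro j Q
    rw [hμ]
    congr 1
    refine HasSum.tsum_eq ?_
    refine hasSum_pair' (g := fun i => if i = j then (1/2)^(j+1) *
      ∑ x ∈ S j, (if Q x then ((1:ℝ)/2) ^ l j x else 0) else 0)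
      (fun z => Set.indicator_nonneg (fun z _ => hm0 z) _) ?_ ?_
    · intro i
      by_cases hi : i = j
      · subst hi
        simp only [if_true]
        rw [Finset.mul_sum]
        have : ∀ x, Set.indicator {ω : Y × ℕ | ω.2 = i ∧ Q ω.1} m (x, i) =
            if x ∈ S i then (1/2)^(i+1) * (if Q x then ((1:ℝ)/2) ^ l i x else 0) else 0 := by
          intro x
          by_cases hQ : Q x <;> by_cases hx : x ∈ S i <;> simp [Set.indicator, hQ, hx, m, d]
        simp only [this]
        have h3 : HasSum (fun x => if x ∈ S i then (1/2)^(i+1) *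
          (if Q x then ((1:ℝ)/2) ^ l i x else 0) else 0) (∑ x ∈ S i, if x ∈ S i then (1/2)^(i+1) *
          (if Q x then ((1:ℝ)/2) ^ l i x else 0) else 0) :=
          hasSum_sum_of_ne_finset_zero (fun b hb => by simp [hb])
        rwa [Finset.sum_congr rfl (fun x hx => if_pos hx)] at h3
      · simp [hi, hasSum_zero]
    · exact hasSum_ite_eq j _
  have hpow : ∀ n : ℕ, ENNReal.ofReal ((1/2)^n) = (2:ℝ≥0∞)⁻¹ ^ n := by
    intro n
    rw [ENNReal.ofReal_pow (by norm_num)]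
    congr 1
    rw [one_div, ENNReal.ofReal_inv_of_pos (by norm_num)]
    simp
  have hhalf : ENNReal.ofReal (1/2) = (2:ℝ≥0∞)⁻¹ := by simpa using hpow 1
  let f : ℕ → Y → List Bool := fun w x => c (w-1) x
  have hsupp : ∀ j x, 0 < μ' {ω | ω.2 + 1 = j + 1 ∧ ω.1 = x} → x ∈ S j := by
    intro j x h
    by_contra hx
    have := hμj j (fun y => y = x)
    rw [Finset.sum_eq_zero] at this
    · simp only [add_left_inj] at h
      rw [this] at h
      simp at h
    · intro y hy
      rw [if_neg]
      rintro rfl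
      exact hx hy
  -- entropy part
  have hH : HasSum (fun z : Y × ℕ => m z * (- Real.logb 2 (p z.1)))
      (∑' x, - p x * Real.logb 2 (p x)) := by
    refine hasSum_pair (g := fun x => - p x * Real.logb 2 (p x)) (fun z => ?_) (fun x => ?_)
      hent.hasSum
    · have : Real.logb 2 (p z.1) ≤ 0 := Real.logb_nonpos (by norm_num) (h0 _)
        (le_hasSum h1 z.1 (fun y _ => h0 y))
      exact mul_nonneg (hm0 z) (by linarith)
    · have := (hmx x).mul_right (- Real.logb 2 (p x))
      rw [neg_mul, ← mul_neg]; exact this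
  have hgeo : HasSum (fun j : ℕ => ((1:ℝ)/2)^(j+1)) 1 := by
    have := (hasSum_geometric_two).mul_left ((1:ℝ)/2)
    have e : (fun j : ℕ => ((1:ℝ)/2)^(j+1)) = fun j => 1/2 * (1/2)^j :=
      funext fun j => by rw [pow_succ]; ring
    rw [e]
    norm_num at this ⊢
    exact this
  have hdx : ∀ j, HasSum (d j) 1 := by
    intro j
    have : HasSum (d j) (∑ b ∈ S j, d j b) := hasSum_sum_of_ne_finset_zero (by
      intro b hb; simp [d, hb])
    have e : ∑ b ∈ S j, d j b = 1 := by
      rw [← hS j]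
      exact Finset.sum_congr rfl fun x hx => by simp [d, hx]
    rwa [e] at this
  have hG : HasSum (fun z : Y × ℕ => m z * (z.2 + 1 : ℝ)) 2 := by
    refine hasSum_pair' (f := fun z : Y × ℕ => m z * (z.2 + 1 : ℝ))
      (g := fun j : ℕ => (j + 1 : ℝ) * (1/2)^(j+1)) (fun z => ?_) (fun j => ?_) ?_
    · exact mul_nonneg (hm0 z) (by positivity)
    · have := (hdx j).mul_left (((j:ℝ)+1) * (1/2)^(j+1))
      rw [mul_one] at this
      have e : (fun x => m (x, j) * ((j:ℝ) + 1)) = fun x => ((j:ℝ)+1) * (1/2)^(j+1) * d j x :=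
        funext fun x => by simp only [m]; ring
      rw [e]; exact this
    · have := hasSum_coe_mul_geometric_of_norm_lt_one (𝕜 := ℝ) (r := 1/2) (by norm_num)
      rw [← hasSum_nat_add_iff' 1] at this
      norm_num at this
      convert this using 2
  have hbound : Summable (fun z : Y × ℕ => ((1:ℝ)/2)^(z.2+1) * p z.1 / Real.log 2) := by
    refine Summable.div_const ?_ _
    refine (hasSum_pair (g := p) (a := 1) (fun z => ?_) (fun x => ?_) h1).summable
    · have := h0 z.1; positivity
    · simpa using hgeo.mul_right (p x)
  let E : Y × ℕ → ℝ := fun z => ((c z.2 z.1).length : ℝ) * m z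
  have hcase : ∀ z, m z = 0 ∨ (z.1 ∈ S z.2 ∧ (c z.2 z.1).length = l z.2 z.1 ∧
      m z = (1/2)^(z.2+1) * (1/2)^(l z.2 z.1) ∧ 0 < p z.1) := by
    intro z
    by_cases hz : z.1 ∈ S z.2
    · right
      have e : m z = (1/2)^(z.2+1) * (1/2)^(l z.2 z.1) := by simp [m, d, hz]
      refine ⟨hz, hlen _ _ hz, e, lt_of_lt_of_le ?_ (hmp z.1 z.2)⟩
      change 0 < m z
      rw [e]; positivity
    · left; simp [m, d, hz]
  have hlog2 : 0 < Real.log 2 := Real.log_pos (by norm_num)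
  have hloghalf : ∀ n : ℕ, Real.logb 2 ((1/2)^n) = -n := by
    intro n
    rw [Real.logb_pow, one_div, Real.logb_inv, Real.logb_self_eq_one (by norm_num)]; ring
  have hE : Summable E := by
    refine Summable.of_nonneg_of_le (fun z => mul_nonneg (by positivity) (hm0 z)) ?_
      (hH.summable.add hbound)
    intro z
    rcases hcase z with h | ⟨hz, hl, e, hpz⟩
    · have := h0 z.1
      simp only [E, h, mul_zero, zero_mul, zero_add]; positivity
    · simp only [E, hl, e]
      set q := p z.1
      set n := l z.2 z.1
      have hn := hloghalf n
      set t : ℝ := (1/2)^n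
      have ht : 0 < t := by positivity
      set u : ℝ := (1/2)^(z.2+1)
      have hu : 0 < u := by positivity
      have hk : (n:ℝ) = - Real.logb 2 t := by rw [hn]; ring
      rw [hk]
      have h3 : Real.log (q/t) ≤ q/t := (Real.log_le_sub_one_of_pos (by positivity)).trans (by linarith)
      rw [Real.log_div hpz.ne' ht.ne', le_div_iff₀ ht] at h3
      have h4 : (Real.logb 2 q - Real.logb 2 t) * t ≤ q / Real.log 2 := by
        rw [Real.logb, Real.logb, ← sub_div, div_mul_eq_mul_div]
        gcongr
      have h5 := mul_le_mul_of_nonneg_left h4 hu.le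
      have h6 : u * q / Real.log 2 = u * (q / Real.log 2) := by ring
      rw [h6]
      nlinarith
  have hineq : (∑' x, - p x * Real.logb 2 (p x)) ≤ ∑' z, E z + 2 := by
    refine hasSum_le ?_ hH (hE.hasSum.add hG)
    intro z
    rcases hcase z with h | ⟨hz, hl, e, hpz⟩
    · simp [E, h]
    · simp only [E, hl]
      have : Real.logb 2 (m z) ≤ Real.logb 2 (p z.1) := by
        refine Real.logb_le_logb_of_le (by norm_num) ?_ (hmp z.1 z.2)
        rw [e]; positivity
      rw [e, ← pow_add, hloghalf] at this
      push_cast at this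
      have := hm0 z
      nlinarith
  have hfib := hE.hasSum.tsum_fiberwise (fun z : Y × ℕ => c z.2 z.1)
  refine ⟨Y × ℕ, ⊤, μ', inferInstance, Prod.fst, fun ω => ω.2 + 1, f,
    fun _ => MeasurableSpace.measurableSet_top, fun _ => MeasurableSpace.measurableSet_top,
    ?_, ?_, ?_, ?_, ?_⟩
  · intro x
    rw [hμ]
    congr 1
    refine HasSum.tsum_eq ?_
    refine hasSum_pair (g := fun y => if y = x then p x else 0)
      (fun z => Set.indicator_nonneg (fun z _ => hm0 z) _) ?_ (hasSum_ite_eq x _)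
    intro y
    by_cases hy : y = x
    · subst hy
      simpa [Set.indicator] using hmx y
    · simp [hy, hasSum_zero]
  · intro w hw
    obtain ⟨j, rfl⟩ := Nat.exists_eq_add_of_le' hw
    have := hμj j (fun _ => True)
    simp only [if_true, and_true, hS, mul_one] at this
    simp only [add_left_inj]
    rw [this, hpow]
  · intro w hw pre b _
    rw [cond_apply MeasurableSpace.measurableSet_top, cond_apply MeasurableSpace.measurableSet_top]
    rw [← mul_assoc, mul_comm (2⁻¹ : ℝ≥0∞), mul_assoc]
    congr 1
    cases w with
    | zero => simp at hw
    | succ j =>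
      have hset : ∀ Q : List Bool → Prop, ({ω : Y × ℕ | ω.2 + 1 = j + 1} ∩
          {ω | Q (f (ω.2+1) ω.1)}) = {ω | ω.2 = j ∧ Q (c j ω.1)} := by
        intro Q
        ext ⟨x, i⟩
        simp only [Set.mem_inter_iff, Set.mem_ofPred_eq, add_left_inj, f, Nat.add_sub_cancel]
        constructor
        · rintro ⟨rfl, h⟩; exact ⟨rfl, h⟩
        · rintro ⟨rfl, h⟩; exact ⟨rfl, h⟩
      have a1 := hset (fun k => pre.length < k.length ∧ k.take (pre.length + 1) = pre ++ [b])
      have a2 := hset (fun k => pre.length < k.length ∧ k.take pre.length = pre)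
      beta_reduce
      rw [a1, a2, hμj j (fun x => pre.length < (c j x).length ∧
        (c j x).take (pre.length + 1) = pre ++ [b]), hμj j (fun x => pre.length < (c j x).length ∧
        (c j x).take pre.length = pre), ← hhalf, ← ENNReal.ofReal_mul (by norm_num)]
      congr 1
      have := hr j pre b
      rw [mul_left_comm]
      congr 1
      convert this
  · intro w x y hx hy hxy
    cases w with
    | zero => simp at hx
    | succ j => exact hinj j x (hsupp j x hx) y (hsupp j y hy) hxy
  · have hk : ∀ k : List Bool, (k.length : ℝ) *
        (μ' {ω | f (ω.2+1) ω.1 = k}).toReal =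
        ∑' z : (fun z : Y × ℕ => c z.2 z.1) ⁻¹' {k}, E z := by
      intro k
      rw [hμ, ENNReal.toReal_ofReal (tsum_nonneg fun z => Set.indicator_nonneg (fun z _ => hm0 z) _),
        tsum_subtype ((fun z : Y × ℕ => c z.2 z.1) ⁻¹' {k}) E, ← tsum_mul_left]
      refine tsum_congr fun z => ?_
      by_cases h : c z.2 z.1 = k
      · simp [Set.indicator, f, h, E]
      · simp [Set.indicator, f, h]
    simp only [hk]
    rw [hfib.tsum_eq]
    linarith

set_option maxHeartbeats 2000000 in
/-- Key agreement from common randomness: for any random variable `X` with values in a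
countable set and finite Shannon entropy `H(X)`, there is a joint distribution of
`(X, W)` (on a fresh probability space, with `X' ~ X`) where `W ~ Geom(1/2)`, together
with functions `f_w : 𝒳 → {0,1}*`, such that `K := f_W(X)` is a conditionally
randomly-stopped bit sequence given `W`, `x ↦ f_w(x)` is injective on the support of the
conditional distribution of `X` given `W = w` for each `w`, and `E[|K|] ≥ H(X) − 2`. -/
theorem stmt13 {Ω 𝒳 : Type*} [MeasurableSpace Ω] [Countable 𝒳]
    (μ : Measure Ω) [IsProbabilityMeasure μ] (X : Ω → 𝒳)
    (hXmeas : ∀ x : 𝒳, MeasurableSet {ω | X ω = x})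
    (hent : Summable fun x : 𝒳 =>
      -((μ {ω | X ω = x}).toReal) * Real.logb 2 (μ {ω | X ω = x}).toReal) :
    ∃ (Ω' : Type) (_ : MeasurableSpace Ω') (μ' : Measure Ω') (_ : IsProbabilityMeasure μ')
      (X' : Ω' → 𝒳) (W : Ω' → ℕ) (f : ℕ → 𝒳 → List Bool),
      (∀ x : 𝒳, MeasurableSet {ω | X' ω = x}) ∧
      (∀ w : ℕ, MeasurableSet {ω | W ω = w}) ∧
      (∀ x : 𝒳, μ' {ω | X' ω = x} = μ {ω | X ω = x}) ∧
      (∀ w : ℕ, 1 ≤ w → μ' {ω | W ω = w} = ((2 : ℝ≥0∞)⁻¹) ^ w) ∧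
      IsCondRSBS μ' (fun ω => f (W ω) (X' ω)) W ∧
      (∀ w : ℕ, ∀ x y : 𝒳, 0 < μ' {ω | W ω = w ∧ X' ω = x} →
        0 < μ' {ω | W ω = w ∧ X' ω = y} → f w x = f w y → x = y) ∧
      (∑' x : 𝒳, -((μ {ω | X ω = x}).toReal) * Real.logb 2 (μ {ω | X ω = x}).toReal) - 2
        ≤ ∑' k : List Bool, (k.length : ℝ) * (μ' {ω | f (W ω) (X' ω) = k}).toReal := by
  obtain ⟨e⟩ : Nonempty (𝒳 ≃ Shrink.{0} 𝒳) := ⟨equivShrink.{0} 𝒳⟩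
  have hsum : HasSum (fun x : 𝒳 => (μ {ω | X ω = x}).toReal) 1 := by
    have hU : (⋃ x : 𝒳, {ω | X ω = x}) = Set.univ := by
      ext ω; simp
    have h := measure_iUnion (μ := μ) (f := fun x : 𝒳 => {ω | X ω = x}) (by
      intro x y hxy
      refine Set.disjoint_left.mpr fun ω hx hy => hxy ?_
      exact (show X ω = x from hx).symm.trans hy) hXmeas
    rw [hU, measure_univ] at h
    have hne : ∑' x : 𝒳, μ {ω | X ω = x} ≠ ∞ := by rw [← h]; exact ENNReal.one_ne_top
    have := ENNReal.hasSum_toReal hne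
    rwa [← ENNReal.tsum_toReal_eq (fun x => measure_ne_top _ _), ← h, ENNReal.toReal_one] at this
  obtain ⟨Ω', i1, μ', i2, X', W, f, g1, g2, g3, g4, g5, g6, g7⟩ :=
    core (fun y => (μ {ω | X ω = e.symm y}).toReal) (fun _ => ENNReal.toReal_nonneg)
      (e.symm.hasSum_iff.mpr hsum) (e.symm.summable_iff.mpr hent)
  have hX : ∀ x, {ω | e.symm (X' ω) = x} = {ω | X' ω = e x} := by
    intro x; ext ω; simp [Equiv.symm_apply_eq]
  refine ⟨Ω', i1, μ', i2, fun ω => e.symm (X' ω), W, fun w x => f w (e x), ?_, g2, ?_, g4, ?_, ?_, ?_⟩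
  · intro x; rw [hX]; exact g1 _
  · intro x
    rw [hX, g3, Equiv.symm_apply_apply, ENNReal.ofReal_toReal (measure_ne_top _ _)]
  · simpa only [Equiv.apply_symm_apply] using g5
  · intro w x y hx hy hxy
    simp only [Equiv.symm_apply_eq] at hx hy
    exact e.injective (g6 w _ _ hx hy hxy)
  · rw [e.symm.tsum_eq (fun x => -((μ {ω | X ω = x}).toReal) *
      Real.logb 2 (μ {ω | X ω = x}).toReal)] at g7
    simpa only [Equiv.apply_symm_apply] using g7
end

section
/- Let X and Y be jointly distributed random variables taking values in finite sets 𝒳 and 𝒴 respectively, and let m ≥ 1 be an integer. Then there exists a function f : 𝒳 ∪ 𝒴 → {1, …, m} such that P(f(X) = f(Y), X ≠ Y) ≤ P(X ≠ Y)/m. -/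
open MeasureTheory
open scoped ENNReal

open Classical in
lemma count_aux {α : Type*} [Fintype α] (m : ℕ) (x y : α) (h : x ≠ y) :
    (Finset.univ.filter (fun f : α → Fin m => f x = f y)).card * m
      ≤ Fintype.card (α → Fin m) := by
  have key : ((Finset.univ.filter (fun f : α → Fin m => f x = f y)) ×ˢ
      (Finset.univ : Finset (Fin m))).card ≤ (Finset.univ : Finset (α → Fin m)).card := by
    apply Finset.card_le_card_of_injOn (fun p => Function.update p.1 x p.2)
    · intro p _
      simp
    · rintro ⟨f, c⟩ hf ⟨g, d⟩ hg hfg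
      simp only [Finset.coe_product, Set.mem_prod, Finset.mem_coe, Finset.mem_filter,
        Finset.mem_univ, true_and, and_true] at hf hg
      simp only at hfg
      have hne : ∀ z, z ≠ x → f z = g z := by
        intro z hz
        have := congrFun hfg z
        simpa [Function.update_of_ne hz] using this
      have hcd : c = d := by
        have := congrFun hfg x
        simpa using this
      have hfg' : f = g := by
        funext z
        by_cases hz : z = x
        · subst hz
          rw [hf, hg]
          exact hne y (Ne.symm h)
        · exact hne z hz
      rw [hfg', hcd]
  rw [Finset.card_product] at key
  simpa only [Finset.card_univ, Fintype.card_fin] using key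

open Classical in
lemma measure_aux {Ω α : Type*} [MeasurableSpace Ω] [Fintype α]
    (μ : Measure Ω) (X Y : Ω → α)
    (hXYmeas : ∀ x y : α, MeasurableSet {ω | X ω = x ∧ Y ω = y}) (P : α × α → Prop) :
    μ {ω | P (X ω, Y ω)} =
      ∑ z : α × α, if P z then μ {ω | X ω = z.1 ∧ Y ω = z.2} else 0 := by
  rw [← Finset.sum_filter, ← measure_biUnion_finset]
  · congr 1
    ext ω
    simp
  · intro a _ b _ hab
    refine Set.disjoint_left.2 ?_
    rintro ω ⟨h1, h2⟩ ⟨h3, h4⟩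
    exact hab (Prod.ext (h1.symm.trans h3) (h2.symm.trans h4))
  · intro z _
    exact hXYmeas _ _

/-- Random hashing: for jointly distributed random variables `X, Y` with values in a
finite alphabet `α` (playing the role of `𝒳 ∪ 𝒴`) and any integer `m ≥ 1`, there is a
function `f : α → {1, …, m}` with `P(f(X) = f(Y), X ≠ Y) ≤ P(X ≠ Y)/m`. -/
theorem stmt14 {Ω α : Type*} [MeasurableSpace Ω] [Fintype α]
    (μ : Measure Ω) [IsProbabilityMeasure μ] (X Y : Ω → α)
    (hXYmeas : ∀ x y : α, MeasurableSet {ω | X ω = x ∧ Y ω = y})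
    (m : ℕ) (hm : 1 ≤ m) :
    ∃ f : α → Fin m,
      μ {ω | f (X ω) = f (Y ω) ∧ X ω ≠ Y ω} ≤ μ {ω | X ω ≠ Y ω} / m := by
  classical
  have hne : (Finset.univ : Finset (α → Fin m)).Nonempty := ⟨fun _ => ⟨0, hm⟩, Finset.mem_univ _⟩
  have hm0 : (m : ℝ≥0∞) ≠ 0 := by
    exact_mod_cast (by omega : m ≠ 0)
  suffices h : ∑ f : α → Fin m, μ {ω | f (X ω) = f (Y ω) ∧ X ω ≠ Y ω}
      ≤ ∑ _f : α → Fin m, μ {ω | X ω ≠ Y ω} / m by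
    by_contra! hcon
    exact absurd h (not_le.2 (ENNReal.sum_lt_sum_of_nonempty hne fun f _ => hcon f))
  have e1 : ∀ f : α → Fin m, μ {ω | f (X ω) = f (Y ω) ∧ X ω ≠ Y ω} = _ := fun f =>
    measure_aux μ X Y hXYmeas (fun z => f z.1 = f z.2 ∧ z.1 ≠ z.2)
  have e2 : μ {ω | X ω ≠ Y ω} = _ := measure_aux μ X Y hXYmeas (fun z => z.1 ≠ z.2)
  simp_rw [e1]
  rw [e2, Finset.sum_comm, Finset.sum_const, Finset.card_univ, nsmul_eq_mul, div_eq_mul_inv,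
    Finset.sum_mul, Finset.mul_sum]
  refine Finset.sum_le_sum fun z _ => ?_
  by_cases hz : z.1 = z.2
  · simp [hz]
  · simp only [ne_eq, hz, not_false_eq_true, and_true, if_true]
    rw [← Finset.sum_filter, Finset.sum_const, nsmul_eq_mul, mul_comm (μ _), ← mul_assoc]
    gcongr
    rw [← div_eq_mul_inv, ENNReal.le_div_iff_mul_le (Or.inl hm0) (Or.inl (by simp))]
    exact_mod_cast count_aux m z.1 z.2 hz
end

section
/- Let X and Y be jointly distributed random variables taking values in finite sets 𝒳 and 𝒴 respectively, with p := P(X = Y) > 0, and let m ≥ 1 be an integer. Then there exist (on a possibly enlarged probability space carrying randomness independent of (X,Y)) a function f : 𝒳 ∪ 𝒴 → {1, …, m}, a random variable W_1 := f(X), a random variable W_2 that is a function of (Y, W_1) and of randomness independent of (X, Y), and random strings K_A ∈ {0,1}* (a function of (X, W_1, W_2)), K_B ∈ {0,1}* (a function of (Y, W_1, W_2)), and K ∈ {0,1}*, such that: K is a conditionally randomly-stopped bit sequence given (W_1, W_2); P(K_A = K_B = K) ≥ 1 − (1 − p)/m; and E[|K|·1{K_A = K_B = K}] ≥ p·(H(X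 | X = Y) − log₂ m − 2), where H(X | X = Y) denotes the Shannon entropy of the conditional distribution of X given the event {X = Y}. -/
open MeasureTheory ProbabilityTheory
open scoped ENNReal

/-- Greedy extraction of a complete binary code from lengths with Kraft sum at least one. -/
lemma exists_code {α : Type*} [DecidableEq α] (N : ℕ) : ∀ (S : Finset α) (l : α → ℕ),
    (∀ x ∈ S, l x ≤ N) → 1 ≤ ∑ x ∈ S, (1/2 : ℝ) ^ l x →
    ∃ (T : Finset α) (code : α → List Bool), T ⊆ S ∧ ∑ x ∈ T, (1/2 : ℝ) ^ l x = 1 ∧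
      (∀ x ∈ T, (code x).length = l x) ∧
      ∀ pre : List Bool,
        ∑ x ∈ T, (if pre ++ [true] <+: code x then (1/2 : ℝ) ^ l x else 0) =
        ∑ x ∈ T, (if pre ++ [false] <+: code x then (1/2 : ℝ) ^ l x else 0) := by
  have base : ∀ (S : Finset α) (l : α → ℕ), (∃ x ∈ S, l x = 0) → 
    ∃ (T : Finset α) (code : α → List Bool), T ⊆ S ∧ ∑ x ∈ T, (1/2 : ℝ) ^ l x = 1 ∧
      (∀ x ∈ T, (code x).length = l x) ∧
      ∀ pre : List Bool,
        ∑ x ∈ T, (if pre ++ [true] <+: code x then (1/2 : ℝ) ^ l x else 0) =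
        ∑ x ∈ T, (if pre ++ [false] <+: code x then (1/2 : ℝ) ^ l x else 0) := by
    rintro S l ⟨x, hx, h0⟩
    refine ⟨{x}, fun _ => [], by simpa using hx, by simp [h0], by simp [h0], by simp⟩
  induction N with
  | zero =>
    intro S l hl hs
    apply base
    have : S.Nonempty := by
      rw [Finset.nonempty_iff_ne_empty]; rintro rfl; norm_num at hs
    obtain ⟨x, hx⟩ := this
    exact ⟨x, hx, by simpa using hl x hx⟩
  | succ N ih =>
    intro S l hl hs
    by_cases h0 : ∃ x ∈ S, l x = 0
    · exact base S l h0
    push Not at h0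
    have hhalf : ∀ x ∈ S, (1/2 : ℝ) ^ l x = 1/2 * (1/2 : ℝ) ^ (l x - 1) := by
      intro x hx
      rw [← pow_succ', Nat.sub_add_cancel (Nat.one_le_iff_ne_zero.2 (h0 x hx))]
    have h2 : 2 ≤ ∑ x ∈ S, (1/2 : ℝ) ^ (l x - 1) := by
      rw [Finset.sum_congr rfl hhalf, ← Finset.mul_sum] at hs; linarith
    obtain ⟨T0, c0, hT0, hs0, hl0, ht0⟩ := ih S (fun x => l x - 1)
      (fun x hx => by have := hl x hx; simp; omega) (by linarith)
    have h3 := Finset.sum_sdiff (f := fun x => (1/2 : ℝ) ^ (l x - 1)) hT0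
    obtain ⟨T1, c1, hT1, hs1, hl1, ht1⟩ := ih (S \ T0) (fun x => l x - 1)
      (fun x hx => by have := hl x (Finset.mem_sdiff.1 hx).1; simp; omega) (by linarith)
    have hT1S : T1 ⊆ S := hT1.trans Finset.sdiff_subset
    have hd : Disjoint T0 T1 := Finset.disjoint_left.2 fun x hx hx' =>
      (Finset.mem_sdiff.1 (hT1 hx')).2 hx
    have e0 : ∀ x ∈ T0, (if x ∈ T0 then false :: c0 x else true :: c1 x) = false :: c0 x := by
      intro x hx; simp [hx]
    have e1 : ∀ x ∈ T1, (if x ∈ T0 then false :: c0 x else true :: c1 x) = true :: c1 x := by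
      intro x hx; simp [Finset.disjoint_right.1 hd hx]
    have m0 : ∀ g : α → Prop, ∀ [DecidablePred g], ∑ x ∈ T0, (if g x then (1/2 : ℝ) ^ l x else 0)
        = 1/2 * ∑ x ∈ T0, (if g x then (1/2 : ℝ) ^ (l x - 1) else 0) := by
      intro g _
      rw [Finset.mul_sum]
      refine Finset.sum_congr rfl fun x hx => ?_
      rw [hhalf x (hT0 hx)]; split_ifs <;> simp
    have m1 : ∀ g : α → Prop, ∀ [DecidablePred g], ∑ x ∈ T1, (if g x then (1/2 : ℝ) ^ l x else 0)
        = 1/2 * ∑ x ∈ T1, (if g x then (1/2 : ℝ) ^ (l x - 1) else 0) := by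
      intro g _
      rw [Finset.mul_sum]
      refine Finset.sum_congr rfl fun x hx => ?_
      rw [hhalf x (hT1S hx)]; split_ifs <;> simp
    have s0 : ∑ x ∈ T0, (1/2 : ℝ) ^ l x = 1/2 := by
      rw [Finset.sum_congr rfl fun x hx => hhalf x (hT0 hx), ← Finset.mul_sum, hs0]; norm_num
    have s1 : ∑ x ∈ T1, (1/2 : ℝ) ^ l x = 1/2 := by
      rw [Finset.sum_congr rfl fun x hx => hhalf x (hT1S hx), ← Finset.mul_sum, hs1]; norm_num
    refine ⟨T0 ∪ T1, fun x => if x ∈ T0 then false :: c0 x else true :: c1 x,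
      Finset.union_subset hT0 hT1S, ?_, ?_, ?_⟩
    · rw [Finset.sum_union hd, s0, s1]; norm_num
    · intro x hx
      rcases Finset.mem_union.1 hx with h | h
      · have := h0 x (hT0 h); simp only [h, if_true, List.length_cons, hl0 x h]; omega
      · have := h0 x (hT1S h); dsimp only; rw [e1 x h]; simp only [List.length_cons, hl1 x h]; omega
    · intro pre
      rw [Finset.sum_union hd, Finset.sum_union hd]
      have k0 : ∀ p : List Bool, ∑ x ∈ T0, (if p <+: (if x ∈ T0 then false :: c0 x else true :: c1 x)
          then (1/2 : ℝ) ^ l x else 0) = ∑ x ∈ T0, (if p <+: false :: c0 x then (1/2 : ℝ) ^ l x else 0) :=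
        fun p => Finset.sum_congr rfl fun x hx => by rw [e0 x hx]
      have k1 : ∀ p : List Bool, ∑ x ∈ T1, (if p <+: (if x ∈ T0 then false :: c0 x else true :: c1 x)
          then (1/2 : ℝ) ^ l x else 0) = ∑ x ∈ T1, (if p <+: true :: c1 x then (1/2 : ℝ) ^ l x else 0) :=
        fun p => Finset.sum_congr rfl fun x hx => by rw [e1 x hx]
      rw [k0, k0, k1, k1]
      cases pre with
      | nil => simp [List.cons_prefix_cons] at s0 s1 ⊢; rw [s0, s1]
      | cons b p =>
        simp only [List.cons_append, List.cons_prefix_cons]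
        cases b
        · simp at ht0 m0 ⊢
          rw [m0, m0, ht0]
        · simp at ht1 m1 ⊢
          rw [m1, m1, ht1]

/-- One greedy step. -/
lemma exists_step {α : Type*} [Fintype α] [DecidableEq α] (q : α → ℝ) (hq : ∀ x, 0 ≤ q x)
    (hs : ∑ x, q x = 1) :
    ∃ (D : α → ℝ) (code : α → List Bool), (∀ x, 0 ≤ D x) ∧ ∑ x, D x = 1 ∧
      (∀ x, D x ≠ 0 → D x = (1/2 : ℝ) ^ (code x).length) ∧
      (∀ pre : List Bool, ∑ x, (if pre ++ [true] <+: code x then D x else 0) =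
        ∑ x, (if pre ++ [false] <+: code x then D x else 0)) ∧ ∀ x, D x ≤ 2 * q x := by
  have hle : ∀ x, q x ≤ 1 := fun x => hs ▸ Finset.single_le_sum (fun y _ => hq y) (Finset.mem_univ x)
  have : ∀ x, ∃ n : ℕ, 0 < q x → q x ≤ (1/2 : ℝ) ^ n ∧ (1/2 : ℝ) ^ n ≤ 2 * q x := by
    intro x
    by_cases h : 0 < q x
    · obtain ⟨n, h1, h2⟩ := exists_nat_pow_near_of_lt_one h (hle x) (by norm_num : (0:ℝ) < 1/2) (by norm_num)
      refine ⟨n, fun _ => ⟨h2, ?_⟩⟩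
      rw [pow_succ] at h1; linarith
    · exact ⟨0, fun h' => absurd h' h⟩
  choose l hl using this
  obtain ⟨T, code, hT, h1, h2, h3⟩ := exists_code (Finset.univ.sup l) (Finset.univ.filter fun x => 0 < q x) l
    (fun x _ => Finset.le_sup (Finset.mem_univ x)) (by
      refine hs.symm.le.trans ?_
      rw [← Finset.sum_filter_add_sum_filter_not Finset.univ (fun x => 0 < q x) q]
      rw [Finset.sum_eq_zero (s := Finset.univ.filter fun x => ¬ 0 < q x), add_zero]
      · exact Finset.sum_le_sum fun x hx => (hl x (Finset.mem_filter.1 hx).2).1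
      · intro x hx
        exact le_antisymm (not_lt.1 (Finset.mem_filter.1 hx).2) (hq x))
  refine ⟨fun x => if x ∈ T then (1/2 : ℝ) ^ l x else 0, code, ?_, ?_, ?_, ?_, ?_⟩
  · intro x; dsimp only; split_ifs <;> positivity
  · simpa [Finset.sum_ite_mem] using h1
  · intro x hx
    by_cases h : x ∈ T
    · simp [h, h2 x h]
    · simp [h] at hx
  · intro pre
    have := h3 pre
    rw [← Finset.univ_inter T, ← Finset.sum_ite_mem, ← Finset.sum_ite_mem] at this
    convert this using 2 with x _ x _ <;> dsimp only <;> split_ifs <;> rfl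
  · intro x; dsimp only; split_ifs with h
    · exact (hl x (Finset.mem_filter.1 (hT h)).2).2
    · have := hq x; positivity

lemma exists_decomp {α : Type*} [Fintype α] [DecidableEq α] (q : α → ℝ) (hq : ∀ x, 0 ≤ q x)
    (hs : ∑ x, q x = 1) :
    ∃ (D : ℕ → α → ℝ) (code : ℕ → α → List Bool), (∀ j x, 0 ≤ D j x) ∧ (∀ j, ∑ x, D j x = 1) ∧
      (∀ j x, D j x ≠ 0 → D j x = (1/2 : ℝ) ^ (code j x).length) ∧
      (∀ j, ∀ pre : List Bool, ∑ x, (if pre ++ [true] <+: code j x then D j x else 0) =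
        ∑ x, (if pre ++ [false] <+: code j x then D j x else 0)) ∧
      ∀ x, HasSum (fun j => (1/2 : ℝ) ^ (j+1) * D j x) (q x) := by
  let Pm := {q : α → ℝ // (∀ x, 0 ≤ q x) ∧ ∑ x, q x = 1}
  choose D code h0 h1 h2 h3 h4 using fun q : Pm => exists_step q.1 q.2.1 q.2.2
  let next : Pm → Pm := fun q => ⟨fun x => 2 * q.1 x - D q x, fun x => by linarith [h4 q x], by
    rw [Finset.sum_sub_distrib, ← Finset.mul_sum, h1, q.2.2]; norm_num⟩
  let s : ℕ → Pm := fun j => next^[j] ⟨q, hq, hs⟩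
  have hsucc : ∀ j x, (s (j+1)).1 x = 2 * (s j).1 x - D (s j) x := by
    intro j x
    simp only [s, Function.iterate_succ_apply']
    rfl
  refine ⟨fun j => D (s j), fun j => code (s j), fun j => h0 _, fun j => h1 _, fun j => h2 _,
    fun j => h3 _, fun x => ?_⟩
  rw [hasSum_iff_tendsto_nat_of_nonneg (fun j => by have := h0 (s j) x; positivity)]
  have key : ∀ n, ∑ j ∈ Finset.range n, (1/2 : ℝ) ^ (j+1) * D (s j) x
      = q x - (1/2 : ℝ)^n * (s n).1 x := by
    intro n
    induction n with
    | zero => simp [s]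
    | succ n ih => rw [Finset.sum_range_succ, ih, hsucc, pow_succ]; ring
  simp_rw [key]
  have : Filter.Tendsto (fun n => (1/2 : ℝ)^n * (s n).1 x) Filter.atTop (nhds 0) := by
    refine squeeze_zero (fun n => by have := (s n).2.1 x; positivity) (fun n => ?_)
      (tendsto_pow_atTop_nhds_zero_of_lt_one (by norm_num : (0:ℝ) ≤ 1/2) (by norm_num))
    have : (s n).1 x ≤ 1 := (Finset.single_le_sum (fun y _ => (s n).2.1 y) (Finset.mem_univ x)).trans (s n).2.2.le
    exact mul_le_of_le_one_right (by positivity) this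
  simpa using this.const_sub (q x)

lemma exists_decomp_pmf {α : Type*} [Fintype α] [DecidableEq α] (q : PMF α) :
    ∃ (D : ℕ → PMF α) (code : ℕ → α → List Bool),
      (∀ j x, D j x ≠ 0 → D j x = 2⁻¹ ^ (code j x).length) ∧
      (∀ j, ∀ pre : List Bool, ∑ x, (if pre ++ [true] <+: code j x then D j x else 0) =
        ∑ x, (if pre ++ [false] <+: code j x then D j x else 0)) ∧
      ∀ x, ∑' j, 2⁻¹ ^ (j+1) * D j x = q x := by
  have hq1 : ∑ x, q x = 1 := by rw [← tsum_fintype (L := .unconditional _)]; exact q.tsum_coe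
  obtain ⟨D, code, h0, h1, h2, h3, h4⟩ := exists_decomp (fun x => (q x).toReal)
    (fun x => ENNReal.toReal_nonneg) (by
      rw [← ENNReal.toReal_sum (fun x _ => q.apply_ne_top x), hq1]; rfl)
  have hhalf : ENNReal.ofReal (1/2) = 2⁻¹ := by
    rw [one_div, ENNReal.ofReal_inv_of_pos (by norm_num)]; simp
  refine ⟨fun j => PMF.ofFintype (fun x => ENNReal.ofReal (D j x)) (by
    rw [← ENNReal.ofReal_sum_of_nonneg (fun x _ => h0 j x), h1]; simp), code, ?_, ?_, ?_⟩
  · intro j x hx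
    rw [PMF.ofFintype_apply] at hx ⊢
    rw [h2 j x (by rintro h; simp [h] at hx), ENNReal.ofReal_pow (by norm_num), hhalf]
  · intro j pre
    have := congrArg ENNReal.ofReal (h3 j pre)
    rw [ENNReal.ofReal_sum_of_nonneg, ENNReal.ofReal_sum_of_nonneg] at this
    · simpa [apply_ite ENNReal.ofReal] using this
    all_goals intro x _; split_ifs <;> simp [h0]
  · intro x
    have := (h4 x).tsum_eq
    rw [← ENNReal.ofReal_toReal (q.apply_ne_top x), ← this, ENNReal.ofReal_tsum_of_nonneg]
    · refine tsum_congr fun j => ?_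
      rw [ENNReal.ofReal_mul (by positivity), ENNReal.ofReal_pow (by norm_num), hhalf, PMF.ofFintype_apply]
    · intro j; have := h0 j x; positivity
    · exact (h4 x).summable

lemma card_hash {α : Type*} [Fintype α] [DecidableEq α] (m : ℕ) (x y : α) (hxy : x ≠ y) :
    (Finset.univ.filter fun f : α → Fin m => f x = f y).card * m = Fintype.card (α → Fin m) := by
  have e : {f : α → Fin m // f x = f y} × Fin m ≃ (α → Fin m) :=
    { toFun := fun p => Function.update p.1.1 x p.2
      invFun := fun g => (⟨Function.update g x (g y), by simp [hxy.symm]⟩, g x)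
      left_inv := by
        rintro ⟨⟨f, hf⟩, t⟩
        simp [hxy.symm, ← hf]
      right_inv := by
        intro g; simp }
  rw [← Fintype.card_congr e, Fintype.card_prod, Fintype.card_subtype, Fintype.card_fin]

lemma exists_hash {α : Type*} [Fintype α] [DecidableEq α] (m : ℕ) (hm : 1 ≤ m) (P : α → α → ℝ) :
    ∃ f : α → Fin m, ∑ x, ∑ y, (if f x = f y ∧ x ≠ y then P x y else 0) ≤
      (∑ x, ∑ y, if x ≠ y then P x y else 0) / m := by
  haveI : NeZero m := ⟨by omega⟩
  have hm0 : (m : ℝ) ≠ 0 := by exact_mod_cast (by omega : m ≠ 0)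
  have : ∑ f : α → Fin m, ∑ x, ∑ y, (if f x = f y ∧ x ≠ y then P x y else 0) ≤
    ∑ _f : α → Fin m, (∑ x, ∑ y, if x ≠ y then P x y else 0) / m := by
    apply le_of_eq
    rw [Finset.sum_comm, Finset.sum_const, Finset.sum_div, Finset.smul_sum]
    refine Finset.sum_congr rfl fun x _ => ?_
    rw [Finset.sum_comm, Finset.sum_div, Finset.smul_sum]
    refine Finset.sum_congr rfl fun y _ => ?_
    by_cases h : x = y
    · simp [h]
    · have := card_hash m x y h
      simp only [h, ne_eq, not_false_eq_true, and_true, if_true]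
      rw [← Finset.sum_filter, Finset.sum_const, Finset.card_univ, ← this, nsmul_eq_mul, nsmul_eq_mul]
      push_cast
      field_simp
  obtain ⟨f, -, hf⟩ := Finset.exists_le_of_sum_le (Finset.univ_nonempty) this
  exact ⟨f, hf⟩

lemma exists_prod_pmf {α : Type} [Fintype α] [DecidableEq α] (c : α → PMF ℕ) :
    ∃ ρ : PMF (α → ℕ), ∀ (y : α) (g : ℕ → ℝ≥0∞), ∑' r, ρ r * g (r y) = ∑' j, c y j * g j := by
  refine ⟨(Measure.pi fun y => (c y).toMeasure).toPMF, fun y g => ?_⟩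
  have h := (measurePreserving_eval (fun y => (c y).toMeasure) y).lintegral_comp (f := g) (by fun_prop)
  rw [lintegral_countable', lintegral_countable'] at h
  convert h using 3 with r j
  · rw [Measure.toPMF_apply, mul_comm]
  · rw [PMF.toMeasure_apply_singleton _ _ (by simp), mul_comm]

/-- The joint law of `(X, Y, R, Z)`. -/
noncomputable def jointPMF {α : Type} [Fintype α] (P : α → α → ℝ≥0∞) (hP : ∑ x, ∑ y, P x y = 1)
    (ρ : PMF (α → ℕ)) (κ : α → α → ℕ → PMF α) : PMF (α × α × (α → ℕ) × α) :=
  ⟨fun ω => P ω.1 ω.2.1 * (ρ ω.2.2.1 * κ ω.1 ω.2.1 (ω.2.2.1 ω.2.1) ω.2.2.2), by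
    rw [ENNReal.summable.hasSum_iff, ENNReal.tsum_prod']
    simp_rw [ENNReal.tsum_prod', ENNReal.tsum_mul_left, PMF.tsum_coe, mul_one, PMF.tsum_coe, mul_one,
      tsum_fintype]
    exact hP⟩

lemma lintegral_joint {α : Type} [Fintype α] (P : α → α → ℝ≥0∞) (hP : ∑ x, ∑ y, P x y = 1)
    (ρ : PMF (α → ℕ)) (κ : α → α → ℕ → PMF α) (F : α × α × (α → ℕ) × α → ℝ≥0∞) :
    (letI : MeasurableSpace (α × α × (α → ℕ) × α) := ⊤
     ∫⁻ ω, F ω ∂(jointPMF P hP ρ κ).toMeasure) =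
      ∑ x, ∑ y, P x y * ∑' r, ρ r * ∑ z, κ x y (r y) z * F (x, y, r, z) := by
  letI : MeasurableSpace (α × α × (α → ℕ) × α) := ⊤
  haveI : MeasurableSingletonClass (α × α × (α → ℕ) × α) := ⟨fun _ => trivial⟩
  rw [lintegral_countable']
  simp_rw [PMF.toMeasure_apply_singleton _ _ (MeasurableSet.singleton _)]
  rw [ENNReal.tsum_prod', tsum_fintype]
  refine Finset.sum_congr rfl fun x _ => ?_
  rw [ENNReal.tsum_prod', tsum_fintype]
  refine Finset.sum_congr rfl fun y _ => ?_
  rw [ENNReal.tsum_prod', ← ENNReal.tsum_mul_left]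
  refine tsum_congr fun r => ?_
  rw [tsum_fintype, Finset.mul_sum, Finset.mul_sum]
  refine Finset.sum_congr rfl fun z _ => ?_
  change F _ * (P x y * (ρ r * κ x y (r y) z)) = _
  ring

lemma lintegral_joint' {α : Type} [Fintype α] (P : α → α → ℝ≥0∞) (hP : ∑ x, ∑ y, P x y = 1)
    (ρ : PMF (α → ℕ)) (κ : α → α → ℕ → PMF α) (c : α → PMF ℕ)
    (hρ : ∀ (y : α) (g : ℕ → ℝ≥0∞), ∑' r, ρ r * g (r y) = ∑' j, c y j * g j)
    (F : α → α → ℕ → α → ℝ≥0∞) :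
    (letI : MeasurableSpace (α × α × (α → ℕ) × α) := ⊤
     ∫⁻ ω, F ω.1 ω.2.1 (ω.2.2.1 ω.2.1) ω.2.2.2 ∂(jointPMF P hP ρ κ).toMeasure) =
      ∑ x, ∑ y, P x y * ∑' j, c y j * ∑ z, κ x y j z * F x y j z := by
  rw [lintegral_joint]
  refine Finset.sum_congr rfl fun x _ => Finset.sum_congr rfl fun y _ => ?_
  congr 1
  exact hρ y (fun j => ∑ z, κ x y j z * F x y j z)

lemma measure_joint {α : Type} [Fintype α] (P : α → α → ℝ≥0∞) (hP : ∑ x, ∑ y, P x y = 1)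
    (ρ : PMF (α → ℕ)) (κ : α → α → ℕ → PMF α) (S : Set (α × α × (α → ℕ) × α)) [DecidablePred (· ∈ S)] :
    (letI : MeasurableSpace (α × α × (α → ℕ) × α) := ⊤
     (jointPMF P hP ρ κ).toMeasure S) =
      ∑ x, ∑ y, P x y * ∑' r, ρ r * ∑ z, κ x y (r y) z * if (x, y, r, z) ∈ S then 1 else 0 := by
  rw [← lintegral_joint P hP ρ κ (fun ω => if ω ∈ S then 1 else 0)]
  letI : MeasurableSpace (α × α × (α → ℕ) × α) := ⊤
  change _ = ∫⁻ ω, _ ∂_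
  rw [← lintegral_indicator_one MeasurableSpace.measurableSet_top]
  congr 1
  ext ω
  simp [Set.indicator_apply]

lemma measure_joint' {α : Type} [Fintype α] (P : α → α → ℝ≥0∞) (hP : ∑ x, ∑ y, P x y = 1)
    (ρ : PMF (α → ℕ)) (κ : α → α → ℕ → PMF α) (c : α → PMF ℕ)
    (hρ : ∀ (y : α) (g : ℕ → ℝ≥0∞), ∑' r, ρ r * g (r y) = ∑' j, c y j * g j)
    (Q : α → α → ℕ → α → Prop) [∀ x y j z, Decidable (Q x y j z)] :
    (letI : MeasurableSpace (α × α × (α → ℕ) × α) := ⊤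
     (jointPMF P hP ρ κ).toMeasure {ω | Q ω.1 ω.2.1 (ω.2.2.1 ω.2.1) ω.2.2.2}) =
      ∑ x, ∑ y, P x y * ∑' j, c y j * ∑ z, κ x y j z * if Q x y j z then 1 else 0 := by
  rw [← lintegral_joint' P hP ρ κ c hρ (fun x y j z => if Q x y j z then 1 else 0)]
  letI : MeasurableSpace (α × α × (α → ℕ) × α) := ⊤
  change _ = ∫⁻ ω, _ ∂_
  rw [← lintegral_indicator_one MeasurableSpace.measurableSet_top]
  congr 1
  ext ω
  simp [Set.indicator_apply]

/-- The conditional laws of `X` on the diagonal given the hash, and of the index `J` given `X`. -/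
lemma exists_laws {α : Type} [Fintype α] [DecidableEq α] [Nonempty α] {m : ℕ} (f : α → Fin m)
    (d : α → ℝ≥0∞) (hd : ∑ x, d x ≠ ⊤) :
    ∃ q : Fin m → PMF α, ∀ w x, (if f x = w then d x else 0) =
      (∑ x, if f x = w then d x else 0) * q w x := by
  have : ∀ w, ∃ q : PMF α, ∀ x, (if f x = w then d x else 0) =
      (∑ x, if f x = w then d x else 0) * q x := by
    intro w
    have hne : (∑ x, if f x = w then d x else 0) ≠ ⊤ := by
      refine ne_top_of_le_ne_top hd (Finset.sum_le_sum fun x _ => ?_)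
      split_ifs <;> simp
    by_cases h0 : (∑ x, if f x = w then d x else 0) = 0
    · refine ⟨PMF.pure (Classical.arbitrary α), fun x => ?_⟩
      rw [h0, zero_mul]
      exact Finset.sum_eq_zero_iff.1 h0 x (Finset.mem_univ x)
    · refine ⟨PMF.ofFintype (fun x => (if f x = w then d x else 0) / ∑ x, if f x = w then d x else 0) ?_,
        fun x => ?_⟩
      · simp_rw [div_eq_mul_inv]
        rw [← Finset.sum_mul, ENNReal.mul_inv_cancel h0 hne]
      · rw [PMF.ofFintype_apply, ENNReal.mul_div_cancel h0 hne]
  choose q hq using this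
  exact ⟨q, hq⟩

lemma exists_cond (g : ℕ → ℝ≥0∞) (s : ℝ≥0∞) (hs : s ≠ ⊤) (hg : ∑' j, g j = s) :
    ∃ c : PMF ℕ, ∀ j, s * c j = g j := by
  by_cases h0 : s = 0
  · refine ⟨PMF.pure 0, fun j => ?_⟩
    rw [h0, zero_mul]
    rw [h0, ENNReal.tsum_eq_zero] at hg
    exact (hg j).symm
  · subst hg
    refine ⟨PMF.normalize g h0 hs, fun j => ?_⟩
    rw [PMF.normalize_apply, mul_comm, mul_assoc, ENNReal.inv_mul_cancel h0 hs, mul_one]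

lemma condRSBS_of {Ω β : Type*} [MeasurableSpace Ω] (hΩ : ∀ S : Set Ω, MeasurableSet S)
    (μ : Measure Ω) (K : Ω → List Bool) (W : Ω → β)
    (h : ∀ v (pre : List Bool), μ {ω | W ω = v ∧ pre ++ [true] <+: K ω} =
      μ {ω | W ω = v ∧ pre ++ [false] <+: K ω}) : IsCondRSBS μ K W := by
  intro v _ pre b _
  have e1 : ∀ (b : Bool) (k : List Bool), (pre.length < k.length ∧ k.take (pre.length + 1) = pre ++ [b])
      ↔ pre ++ [b] <+: k := by
    intro b k
    rw [List.prefix_iff_eq_take]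
    constructor
    · rintro ⟨_, h2⟩; simp [h2]
    · intro h
      simp only [List.length_append, List.length_singleton] at h
      refine ⟨?_, h.symm⟩
      have := congrArg List.length h
      simp at this; omega
  have e2 : ∀ (k : List Bool), (pre.length < k.length ∧ k.take pre.length = pre)
      ↔ (pre ++ [true] <+: k ∨ pre ++ [false] <+: k) := by
    intro k
    constructor
    · rintro ⟨h1, h2⟩
      have : pre ++ [k[pre.length]] <+: k := by
        rw [← e1]
        refine ⟨h1, ?_⟩
        rw [List.take_succ_eq_append_getElem h1, h2]
      cases hk : k[pre.length]
      · right; rwa [hk] at this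
      · left; rwa [hk] at this
    · have : ∀ b, pre ++ [b] <+: k → (pre.length < k.length ∧ k.take pre.length = pre) := by
        intro b hb
        refine ⟨((e1 b k).2 hb).1, ?_⟩
        exact (List.prefix_iff_eq_take.1 ((List.prefix_append _ _).trans hb)).symm
      rintro (h | h)
      · exact this _ h
      · exact this _ h
  simp_rw [e1, e2]
  rw [cond_apply (hΩ _), cond_apply (hΩ _)]
  have hu : {ω | W ω = v} ∩ {ω | pre ++ [true] <+: K ω ∨ pre ++ [false] <+: K ω} =
      {ω | W ω = v ∧ pre ++ [true] <+: K ω} ∪ {ω | W ω = v ∧ pre ++ [false] <+: K ω} := by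
    ext ω; simp; tauto
  have hi : ∀ b, {ω | W ω = v} ∩ {ω | pre ++ [b] <+: K ω} = {ω | W ω = v ∧ pre ++ [b] <+: K ω} := by
    intro b; rfl
  have hd : Disjoint {ω | W ω = v ∧ pre ++ [true] <+: K ω} {ω | W ω = v ∧ pre ++ [false] <+: K ω} := by
    rw [Set.disjoint_left]
    rintro ω ⟨_, h1⟩ ⟨_, h2⟩
    have := List.prefix_of_prefix_length_le h1 h2 (by simp)
    simp at this
  rw [hu, hi, measure_union hd (hΩ _)]
  have hb : μ {ω | W ω = v ∧ pre ++ [b] <+: K ω} = μ {ω | W ω = v ∧ pre ++ [false] <+: K ω} := by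
    cases b
    · rfl
    · exact h v pre
  rw [hb, h v pre, ← two_mul, mul_left_comm, ← mul_assoc 2⁻¹, ENNReal.inv_mul_cancel (by norm_num) (by norm_num), one_mul]

lemma tsum_length {Ω : Type*} [MeasurableSpace Ω] (hΩ : ∀ S : Set Ω, MeasurableSet S)
    (μ : Measure Ω) (K A B : Ω → List Bool) :
    ∑' k : List Bool, (k.length : ℝ≥0∞) * μ {ω | K ω = k ∧ A ω = k ∧ B ω = k} =
      ∫⁻ ω, (if A ω = K ω ∧ B ω = K ω then ((K ω).length : ℝ≥0∞) else 0) ∂μ := by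
  have : ∀ k : List Bool, (k.length : ℝ≥0∞) * μ {ω | K ω = k ∧ A ω = k ∧ B ω = k} =
      ∫⁻ ω, (if K ω = k ∧ A ω = k ∧ B ω = k then (k.length : ℝ≥0∞) else 0) ∂μ := by
    intro k
    rw [← lintegral_indicator_const (hΩ _)]
    congr 1
    ext ω
    simp [Set.indicator_apply]
  simp_rw [this]
  rw [← lintegral_tsum fun k => (Measurable.aemeasurable fun _ _ => hΩ _)]
  congr 1
  ext ω
  rw [tsum_eq_single (K ω)]
  · simp
  · intro k hk; simp [hk.symm]

lemma sum_diag {α : Type*} [Fintype α] [DecidableEq α] (h : α → α → ℝ≥0∞) :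
    ∑ x, ∑ y, h x y = ∑ x, h x x + ∑ x, ∑ y, if x = y then 0 else h x y := by
  rw [← Finset.sum_add_distrib]
  refine Finset.sum_congr rfl fun x _ => ?_
  have : h x x = ∑ y, if x = y then h x y else 0 := by simp
  rw [this, ← Finset.sum_add_distrib]
  refine Finset.sum_congr rfl fun y _ => ?_
  split_ifs <;> simp

lemma entropy_real {α : Type*} [Fintype α] [DecidableEq α] {m : ℕ} (hm : 1 ≤ m) (f : α → Fin m)
    (a q : α → ℝ) (Q : Fin m → ℝ) (p : ℝ) (ha : ∀ x, 0 ≤ a x) (hp : 0 < p) (hap : ∑ x, a x = p)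
    (hQ : ∀ w, Q w = ∑ x, if f x = w then a x else 0) (hq : ∀ x, a x = Q (f x) * q x) :
    p * ((∑ x, -(a x / p) * Real.logb 2 (a x / p)) - Real.logb 2 m) ≤
      ∑ x, a x * Real.logb 2 (1 / q x) := by
  have hm0 : (0:ℝ) < m := by exact_mod_cast hm
  have hQ0 : ∀ w, 0 ≤ Q w := fun w => by
    rw [hQ]; exact Finset.sum_nonneg fun x _ => by split_ifs <;> simp [ha]
  have hl2 : 0 < Real.log 2 := Real.log_pos (by norm_num)
  have key : ∀ x, (a x - p / m * (a x / Q (f x))) / Real.log 2 ≤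
      a x * Real.logb 2 (1 / q x) - (p * (-(a x / p) * Real.logb 2 (a x / p)) - a x * Real.logb 2 m) := by
    intro x
    rcases (ha x).eq_or_lt with h | h
    · simp [← h]
    have hQx : 0 < Q (f x) := (hQ0 _).lt_of_ne fun h0 => by rw [hq, ← h0] at h; simp at h
    have hqx : q x = a x / Q (f x) := by rw [hq x]; field_simp
    have : a x * Real.logb 2 (1 / q x) - (p * (-(a x / p) * Real.logb 2 (a x / p)) - a x * Real.logb 2 m)
        = a x * Real.log (m * Q (f x) / p) / Real.log 2 := by
      rw [hqx]
      simp only [Real.logb]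
      rw [one_div, inv_div, Real.log_div hQx.ne' h.ne', Real.log_div h.ne' hp.ne',
        Real.log_div (by positivity) hp.ne', Real.log_mul hm0.ne' hQx.ne']
      field_simp
      ring
    rw [this]
    apply div_le_div_of_nonneg_right _ hl2.le
    have h2 := Real.one_sub_inv_le_log_of_pos (x := m * Q (f x) / p) (by positivity)
    calc a x - p / m * (a x / Q (f x)) = a x * (1 - (m * Q (f x) / p)⁻¹) := by field_simp
      _ ≤ _ := mul_le_mul_of_nonneg_left h2 h.le
  have hsum := Finset.sum_le_sum fun x (_ : x ∈ Finset.univ) => key x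
  rw [← Finset.sum_div, Finset.sum_sub_distrib, ← Finset.mul_sum, Finset.sum_sub_distrib,
    Finset.sum_sub_distrib, ← Finset.mul_sum, ← Finset.sum_mul, hap] at hsum
  have hcard : ∑ x, a x / Q (f x) ≤ m := by
    rw [← Finset.sum_fiberwise Finset.univ f]
    calc _ ≤ ∑ w : Fin m, (1:ℝ) := by
          refine Finset.sum_le_sum fun w _ => ?_
          rw [Finset.sum_congr rfl (g := fun x => a x / Q w) (fun x hx => by
            rw [(Finset.mem_filter.1 hx).2]), ← Finset.sum_div, Finset.sum_filter, ← hQ]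
          exact div_self_le_one _
      _ = m := by simp
  have : 0 ≤ (p - p / m * ∑ x, a x / Q (f x)) / Real.log 2 := by
    apply div_nonneg _ hl2.le
    have := mul_le_mul_of_nonneg_left hcard (by positivity : 0 ≤ p / m)
    rw [div_mul_cancel₀ _ hm0.ne'] at this
    linarith
  rw [mul_sub]
  linarith

lemma tsum_geom_two : ∑' j : ℕ, (2⁻¹ : ℝ≥0∞) ^ (j+1) = 1 := by
  rw [ENNReal.tsum_geometric_add_one, ENNReal.one_sub_inv_two, inv_inv,
    ENNReal.inv_mul_cancel (by norm_num) (by norm_num)]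

lemma tsum_geom_two_mul : ∑' j : ℕ, ((j+1 : ℕ) : ℝ≥0∞) * (2⁻¹ : ℝ≥0∞) ^ (j+1) = 2 := by
  have h := hasSum_coe_mul_geometric_of_norm_lt_one (r := (1/2:ℝ)) (by norm_num)
  have h2 := (hasSum_nat_add_iff' 1).2 h
  have h3 := ENNReal.ofReal_tsum_of_nonneg (fun j => by positivity) h2.summable
  rw [h2.tsum_eq] at h3
  have h4 : ENNReal.ofReal (1/2) = 2⁻¹ := by
    rw [one_div, ENNReal.ofReal_inv_of_pos (by norm_num)]; simp
  norm_num at h3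
  refine Eq.trans ?_ h3.symm
  refine tsum_congr fun j => ?_
  rw [ENNReal.ofReal_mul (by positivity), ENNReal.ofReal_pow (by norm_num), h4]
  congr 1
  rw [show ((j:ℝ) + 1) = ((j+1 : ℕ) : ℝ) by push_cast; rfl, ENNReal.ofReal_natCast]

/-- The ideal key as a function of `(x, y, j, z)`. -/
def keyFun {α : Type} {m : ℕ} (f : α → Fin m) (code : Fin m → ℕ → α → List Bool)
    (x y : α) (j : ℕ) (z : α) : List Bool :=
  if f y = f x then code (f x) j z else []

/-- The second public message. -/
def msgFun {α : Type} {m : ℕ} (f : α → Fin m) (y : α) (w : Fin m) (j : ℕ) : Option ℕ :=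
  if f y = w then some j else none

/-- The map producing the keys of Alice and Bob. -/
def userKey {α : Type} {m : ℕ} (code : Fin m → ℕ → α → List Bool) (x : α) (w : Fin m) :
    Option ℕ → List Bool
  | some j => code w j x
  | none => []

/-- The law of the auxiliary symbol `Z`. -/
noncomputable def auxKer {α : Type} [DecidableEq α] {m : ℕ} (f : α → Fin m)
    (D : Fin m → ℕ → PMF α) (x y : α) (j : ℕ) : PMF α :=
  if x = y then PMF.pure x else D (f x) j

lemma auxKer_diag {α : Type} [Fintype α] [DecidableEq α] {m : ℕ} (f : α → Fin m)
    (D : Fin m → ℕ → PMF α) (x : α) (j : ℕ) (F : α → ℝ≥0∞) :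
    ∑ z, auxKer f D x x j z * F z = F x := by
  simp [auxKer, PMF.pure_apply]

lemma core_rsbs {α : Type} [Fintype α] [DecidableEq α] {m : ℕ} (f : α → Fin m)
    (P : α → α → ℝ≥0∞) (D : Fin m → ℕ → PMF α) (code : Fin m → ℕ → α → List Bool)
    (c : α → PMF ℕ) (Q : Fin m → ℝ≥0∞)
    (hPc : ∀ w x j, (if f x = w then P x x * c x j else 0) = Q w * (2⁻¹ ^ (j+1) * D w j x))
    (hA : ∀ w j, ∀ pre : List Bool, ∑ x, (if pre ++ [true] <+: code w j x then D w j x else 0) =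
        ∑ x, (if pre ++ [false] <+: code w j x then D w j x else 0))
    (v : Fin m × Option ℕ) (pre : List Bool) :
    (∑ x, ∑ y, P x y * ∑' j, c y j * ∑ z, auxKer f D x y j z *
      if (f x, msgFun f y (f x) j) = v ∧ pre ++ [true] <+: keyFun f code x y j z then 1 else 0) =
    (∑ x, ∑ y, P x y * ∑' j, c y j * ∑ z, auxKer f D x y j z *
      if (f x, msgFun f y (f x) j) = v ∧ pre ++ [false] <+: keyFun f code x y j z then 1 else 0) := by
  obtain ⟨w, o⟩ := v
  refine (sum_diag _).trans (Eq.trans ?_ (sum_diag _).symm)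
  congr 1
  · simp_rw [auxKer_diag]
    have : ∀ b : Bool, (∑ x, P x x * ∑' j, c x j *
        if (f x, msgFun f x (f x) j) = (w, o) ∧ pre ++ [b] <+: keyFun f code x x j x then 1 else 0) =
        ∑' j, if o = some j then Q w * (2⁻¹ ^ (j+1) *
          ∑ x, if pre ++ [b] <+: code w j x then D w j x else 0) else 0 := by
      intro b
      simp_rw [← ENNReal.tsum_mul_left]
      rw [← Summable.tsum_finsetSum fun _ _ => ENNReal.summable]
      refine tsum_congr fun j => ?_
      by_cases ho : o = some j
      · simp only [ho, if_true]
        rw [Finset.mul_sum, Finset.mul_sum]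
        refine Finset.sum_congr rfl fun x _ => ?_
        have h := hPc w x j
        by_cases hb : pre ++ [b] <+: code w j x
        · rw [if_pos hb, ← h]
          by_cases hx : f x = w
          · subst hx; simp [msgFun, keyFun, hb]
          · simp [hx]
        · by_cases hx : f x = w
          · subst hx; simp [msgFun, keyFun, hb]
          · simp [hx, hb]
      · rw [if_neg ho]
        refine Finset.sum_eq_zero fun x _ => ?_
        rw [if_neg, mul_zero, mul_zero]
        rintro ⟨h, _⟩
        simp [msgFun] at h
        exact ho h.2.symm
    rw [this, this]
    simp_rw [hA]
  · refine Finset.sum_congr rfl fun x _ => Finset.sum_congr rfl fun y _ => ?_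
    split_ifs with hxy
    · rfl
    congr 1
    refine tsum_congr fun j => ?_
    congr 1
    simp only [auxKer, hxy, if_false]
    by_cases hv : (f x, msgFun f y (f x) j) = (w, o)
    · by_cases hf : f y = f x
      · have := hA (f x) j pre
        simpa only [hv, keyFun, hf, if_true, true_and, mul_ite, mul_one, mul_zero] using this
      · simp [keyFun, hf]
    · simp [hv]

lemma core_err {α : Type} [Fintype α] [DecidableEq α] {m : ℕ} (f : α → Fin m)
    (P : α → α → ℝ≥0∞) (D : Fin m → ℕ → PMF α) (code : Fin m → ℕ → α → List Bool)
    (c : α → PMF ℕ) (hP : ∑ x, ∑ y, P x y = 1) :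
    1 ≤ (∑ x, ∑ y, P x y * ∑' j, c y j * ∑ z, auxKer f D x y j z *
      if userKey code x (f x) (msgFun f y (f x) j) = keyFun f code x y j z ∧
        userKey code y (f x) (msgFun f y (f x) j) = keyFun f code x y j z then 1 else 0) +
      ∑ x, ∑ y, if f x = f y ∧ x ≠ y then P x y else 0 := by
  refine hP.symm.le.trans ?_
  rw [← Finset.sum_add_distrib]
  refine Finset.sum_le_sum fun x _ => ?_
  rw [← Finset.sum_add_distrib]
  refine Finset.sum_le_sum fun y _ => ?_
  by_cases hxy : f x = f y ∧ x ≠ y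
  · rw [if_pos hxy]; exact le_add_self
  rw [if_neg hxy, add_zero]
  have : ∀ j, ∑ z, auxKer f D x y j z *
      (if userKey code x (f x) (msgFun f y (f x) j) = keyFun f code x y j z ∧
        userKey code y (f x) (msgFun f y (f x) j) = keyFun f code x y j z then (1:ℝ≥0∞) else 0) = 1 := by
    intro j
    by_cases h : x = y
    · subst h
      rw [auxKer_diag]
      simp [userKey, msgFun, keyFun]
    · have hf : ¬ f y = f x := fun h' => hxy ⟨h'.symm, h⟩
      simp only [userKey, msgFun, keyFun, hf, if_false, and_self, if_true, mul_one]
      rw [← tsum_fintype (L := .unconditional _)]; exact PMF.tsum_coe _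
  simp_rw [this, mul_one, PMF.tsum_coe, mul_one]
  exact le_rfl

/-- The expected agreed length, as a sum. -/
noncomputable def lenSum {α : Type} [Fintype α] [DecidableEq α] {m : ℕ} (f : α → Fin m)
    (P : α → α → ℝ≥0∞) (D : Fin m → ℕ → PMF α) (code : Fin m → ℕ → α → List Bool)
    (c : α → PMF ℕ) : ℝ≥0∞ :=
  ∑ x, ∑ y, P x y * ∑' j, c y j * ∑ z, auxKer f D x y j z *
      if userKey code x (f x) (msgFun f y (f x) j) = keyFun f code x y j z ∧
        userKey code y (f x) (msgFun f y (f x) j) = keyFun f code x y j z then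
        ((keyFun f code x y j z).length : ℝ≥0∞) else 0

lemma dyadic_mul_length_le {α : Type} (D : PMF α) (code : α → List Bool)
    (hD : ∀ x, D x ≠ 0 → D x = 2⁻¹ ^ (code x).length) (x : α) : D x * (code x).length ≤ 1 := by
  by_cases h : D x = 0
  · simp [h]
  rw [hD x h]
  calc (2⁻¹ : ℝ≥0∞) ^ (code x).length * (code x).length
      ≤ 2⁻¹ ^ (code x).length * 2 ^ (code x).length := by
        gcongr
        exact_mod_cast Nat.lt_two_pow_self.le
    _ = 1 := by
        rw [← mul_pow, ENNReal.inv_mul_cancel (by norm_num) (by norm_num), one_pow]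

lemma lenSum_lt_top {α : Type} [Fintype α] [DecidableEq α] {m : ℕ} (f : α → Fin m)
    (P : α → α → ℝ≥0∞) (D : Fin m → ℕ → PMF α) (code : Fin m → ℕ → α → List Bool)
    (c : α → PMF ℕ) (Q : Fin m → ℝ≥0∞) (hP : ∑ x, ∑ y, P x y = 1) (hQ : ∀ w, Q w ≠ ⊤)
    (hPc : ∀ w x j, (if f x = w then P x x * c x j else 0) = Q w * (2⁻¹ ^ (j+1) * D w j x))
    (hD : ∀ w j x, D w j x ≠ 0 → D w j x = 2⁻¹ ^ (code w j x).length) :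
    lenSum f P D code c ≠ ⊤ := by
  have hPt : ∀ x y, P x y ≠ ⊤ := by
    intro x y h
    have : P x y ≤ 1 := hP ▸ (Finset.single_le_sum (f := fun y => P x y) (fun _ _ => zero_le) (Finset.mem_univ y)).trans
      (Finset.single_le_sum (f := fun x => ∑ y, P x y) (fun _ _ => zero_le) (Finset.mem_univ x))
    rw [h] at this; simp at this
  unfold lenSum
  rw [sum_diag]
  refine ENNReal.add_ne_top.2 ⟨?_, ?_⟩
  · rw [ENNReal.sum_ne_top]
    intro x _
    simp_rw [auxKer_diag]
    rw [← ENNReal.tsum_mul_left]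
    refine ne_top_of_le_ne_top (b := ∑' j : ℕ, Q (f x) * 2⁻¹ ^ (j+1)) ?_ (ENNReal.tsum_le_tsum fun j => ?_)
    · rw [ENNReal.tsum_mul_left, tsum_geom_two, mul_one]; exact hQ _
    · have h := hPc (f x) x j
      rw [if_pos rfl] at h
      rw [← mul_assoc, h]
      simp only [userKey, msgFun, keyFun, if_true, and_self]
      rw [mul_assoc, mul_assoc]
      gcongr
      exact mul_le_of_le_one_right' (dyadic_mul_length_le _ _ (hD _ _) _)
  · rw [ENNReal.sum_ne_top]
    intro x _
    rw [ENNReal.sum_ne_top]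
    intro y _
    split_ifs with hxy
    · simp
    refine ENNReal.mul_ne_top (hPt x y) ?_
    refine ne_top_of_le_ne_top (b := ∑' j : ℕ, c y j * (Fintype.card α : ℝ≥0∞)) ?_
      (ENNReal.tsum_le_tsum fun j => ?_)
    · rw [ENNReal.tsum_mul_right, PMF.tsum_coe, one_mul]; simp
    · gcongr
      calc _ ≤ ∑ z : α, (1 : ℝ≥0∞) := by
            refine Finset.sum_le_sum fun z _ => ?_
            simp only [auxKer, hxy, if_false, keyFun]
            by_cases hf : f y = f x
            · simp only [hf, if_true]
              refine le_trans ?_ (dyadic_mul_length_le _ _ (hD (f x) j) z)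
              gcongr
              split_ifs <;> simp
            · simp [hf]
        _ = _ := by simp

lemma lenSum_lower {α : Type} [Fintype α] [DecidableEq α] {m : ℕ} (f : α → Fin m)
    (P : α → α → ℝ≥0∞) (D : Fin m → ℕ → PMF α) (code : Fin m → ℕ → α → List Bool)
    (c : α → PMF ℕ) (q : Fin m → PMF α) (Q : Fin m → ℝ≥0∞)
    (hQ : ∀ w, Q w = ∑ x, if f x = w then P x x else 0)
    (hPc : ∀ w x j, (if f x = w then P x x * c x j else 0) = Q w * (2⁻¹ ^ (j+1) * D w j x))
    (hc : ∀ x j, q (f x) x * c x j = 2⁻¹ ^ (j+1) * D (f x) j x)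
    (hD : ∀ w j x, D w j x ≠ 0 → D w j x = 2⁻¹ ^ (code w j x).length) :
    ∑ x, P x x * ENNReal.ofReal (Real.logb 2 (1 / (q (f x) x).toReal)) ≤
      lenSum f P D code c + 2 * ∑ x, P x x := by
  have h1 : ∑ x, P x x * ∑' j, c x j * ((code (f x) j x).length : ℝ≥0∞) ≤ lenSum f P D code c := by
    unfold lenSum
    rw [sum_diag]
    refine le_trans (le_of_eq ?_) le_self_add
    simp_rw [auxKer_diag]
    simp [userKey, msgFun, keyFun]
  have h2 : ∑ x, P x x * ∑' j, c x j * ((j+1 : ℕ) : ℝ≥0∞) = 2 * ∑ x, P x x := by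
    have hQs : ∑ x, P x x = ∑ w, Q w := by
      simp_rw [hQ]
      rw [Finset.sum_comm]
      simp
    rw [hQs, Finset.mul_sum]
    have : ∀ x, P x x * ∑' j, c x j * ((j+1 : ℕ) : ℝ≥0∞) =
        ∑ w, ∑' j, (if f x = w then P x x * c x j else 0) * ((j+1 : ℕ) : ℝ≥0∞) := by
      intro x
      rw [Finset.sum_eq_single (f x)]
      · simp only [if_true]
        rw [← ENNReal.tsum_mul_left]
        simp_rw [mul_assoc]
      · intro w _ hw; simp [hw.symm]
      · simp
    simp_rw [this, hPc]
    rw [Finset.sum_comm]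
    refine Finset.sum_congr rfl fun w _ => ?_
    rw [← Summable.tsum_finsetSum fun _ _ => ENNReal.summable]
    refine Eq.trans ?_ (congrArg (· * Q w) tsum_geom_two_mul)
    rw [← ENNReal.tsum_mul_right]
    refine tsum_congr fun j => ?_
    rw [← Finset.sum_mul, ← Finset.mul_sum, ← Finset.mul_sum]
    rw [show ∑ x, D w j x = 1 by rw [← tsum_fintype (L := .unconditional _)]; exact PMF.tsum_coe _]
    ring
  rw [← h2]
  refine le_trans ?_ (add_le_add_left h1 _)
  rw [← Finset.sum_add_distrib]
  refine Finset.sum_le_sum fun x _ => ?_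
  rw [← mul_add, ← ENNReal.tsum_add]
  gcongr
  calc ENNReal.ofReal (Real.logb 2 (1 / (q (f x) x).toReal))
      = ∑' j, c x j * ENNReal.ofReal (Real.logb 2 (1 / (q (f x) x).toReal)) := by
        rw [ENNReal.tsum_mul_right, PMF.tsum_coe, one_mul]
    _ ≤ _ := by
        refine ENNReal.tsum_le_tsum fun j => ?_
        rw [← mul_add]
        by_cases hcj : c x j = 0
        · simp [hcj]
        gcongr
        by_cases hq0 : q (f x) x = 0
        · simp [hq0]
        have hD0 : D (f x) j x ≠ 0 := by
          intro h0
          have := hc x j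
          rw [h0, mul_zero] at this
          exact (mul_ne_zero hq0 hcj) this
        have hle : (2⁻¹ : ℝ≥0∞) ^ (j + 1 + (code (f x) j x).length) ≤ q (f x) x := by
          rw [pow_add, ← hD _ _ _ hD0, ← hc]
          exact mul_le_of_le_one_right' (PMF.coe_le_one _ _)
        have hle' : (2⁻¹ : ℝ) ^ (j + 1 + (code (f x) j x).length) ≤ (q (f x) x).toReal := by
          have := ENNReal.toReal_mono (PMF.apply_ne_top _ _) hle
          simpa using this
        rw [← Nat.cast_add, ← ENNReal.ofReal_natCast]
        apply ENNReal.ofReal_le_ofReal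
        rw [Real.logb_le_iff_le_rpow (by norm_num) (by
          have := ENNReal.toReal_pos hq0 (PMF.apply_ne_top _ _); positivity), Real.rpow_natCast,
          add_comm (code (f x) j x).length]
        rw [inv_pow] at hle'
        rw [one_div]
        exact inv_le_of_inv_le₀ (by positivity) hle'

theorem core_s15 {Ω : Type*} {α : Type} [MeasurableSpace Ω] [Fintype α]
    (μ : Measure Ω) [IsProbabilityMeasure μ] (X Y : Ω → α)
    (hXYmeas : ∀ x y : α, MeasurableSet {ω | X ω = x ∧ Y ω = y})
    (hp : 0 < μ {ω | X ω = Y ω})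
    (m : ℕ) (hm : 1 ≤ m) :
    ∃ (Ω' : Type) (_ : MeasurableSpace Ω') (μ' : Measure Ω')
      (_ : IsProbabilityMeasure μ') (X' Y' : Ω' → α)
      (γ : Type) (_ : Countable γ) (R : Ω' → γ) (β : Type) (_ : Countable β)
      (f : α → Fin m) (h : α → Fin m → γ → β)
      (gA : α → Fin m → β → List Bool) (gB : α → Fin m → β → List Bool)
      (K : Ω' → List Bool),
      (∀ x y : α, MeasurableSet {ω | X' ω = x ∧ Y' ω = y}) ∧
      (∀ r : γ, MeasurableSet {ω | R ω = r}) ∧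
      (∀ k : List Bool, MeasurableSet {ω | K ω = k}) ∧
      -- (X', Y') has the same joint distribution as (X, Y)
      (∀ x y : α, μ' {ω | X' ω = x ∧ Y' ω = y} = μ {ω | X ω = x ∧ Y ω = y}) ∧
      -- the local randomness R is independent of (X', Y')
      (∀ (x y : α) (r : γ), μ' {ω | (X' ω = x ∧ Y' ω = y) ∧ R ω = r} =
        μ' {ω | X' ω = x ∧ Y' ω = y} * μ' {ω | R ω = r}) ∧
      -- with W₁ := f(X'), W₂ := h(Y', W₁, R), K_A := gA(X', W₁, W₂), K_B := gB(Y', W₁, W₂):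
      (IsCondRSBS μ' K (fun ω => (f (X' ω), h (Y' ω) (f (X' ω)) (R ω))) ∧
       1 - (1 - (μ {ω | X ω = Y ω}).toReal) / m ≤
         (μ' {ω | gA (X' ω) (f (X' ω)) (h (Y' ω) (f (X' ω)) (R ω)) = K ω ∧
                  gB (Y' ω) (f (X' ω)) (h (Y' ω) (f (X' ω)) (R ω)) = K ω}).toReal ∧
       (μ {ω | X ω = Y ω}).toReal *
         ((∑' x : α, -(((μ[|{ω | X ω = Y ω}]) {ω | X ω = x}).toReal) *
             Real.logb 2 ((μ[|{ω | X ω = Y ω}]) {ω | X ω = x}).toReal)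
           - Real.logb 2 m - 2) ≤
         ∑' k : List Bool, (k.length : ℝ) *
           (μ' {ω | K ω = k ∧ gA (X' ω) (f (X' ω)) (h (Y' ω) (f (X' ω)) (R ω)) = k ∧
                    gB (Y' ω) (f (X' ω)) (h (Y' ω) (f (X' ω)) (R ω)) = k}).toReal) := by
  classical
  let P : α → α → ℝ≥0∞ := fun x y => μ {ω | X ω = x ∧ Y ω = y}
  have hpart : ∀ T : Finset (α × α), MeasurableSet {ω | (X ω, Y ω) ∈ T} ∧
      μ {ω | (X ω, Y ω) ∈ T} = ∑ p ∈ T, P p.1 p.2 := by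
    intro T
    have : {ω | (X ω, Y ω) ∈ T} = ⋃ p ∈ T, {ω | X ω = p.1 ∧ Y ω = p.2} := by
      ext ω
      simp only [Set.mem_setOf_eq, Set.mem_iUnion, exists_prop]
      constructor
      · intro h; exact ⟨_, h, rfl, rfl⟩
      · rintro ⟨p, h, h1, h2⟩; rw [h1, h2]; exact h
    rw [this]
    refine ⟨Finset.measurableSet_biUnion _ fun p _ => hXYmeas _ _, ?_⟩
    rw [measure_biUnion_finset _ fun p _ => hXYmeas _ _]
    intro p _ p' _ hne
    rw [Function.onFun, Set.disjoint_left]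
    rintro ω ⟨h1, h2⟩ ⟨h3, h4⟩
    exact hne (Prod.ext (h1.symm.trans h3) (h2.symm.trans h4))
  have hP : ∑ x, ∑ y, P x y = 1 := by
    have := (hpart Finset.univ).2
    simp only [Finset.mem_univ, Set.setOf_true, measure_univ] at this
    rw [this, Fintype.sum_prod_type]
  have hdset : {ω | (X ω, Y ω) ∈ Finset.univ.filter fun p : α × α => p.1 = p.2} = {ω | X ω = Y ω} := by
    ext ω; simp
  have hdm : MeasurableSet {ω | X ω = Y ω} := hdset ▸ (hpart _).1
  have hpd : μ {ω | X ω = Y ω} = ∑ x, P x x := by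
    rw [← hdset, (hpart _).2, Finset.sum_filter, Fintype.sum_prod_type]
    simp
  have hPt : ∀ x y, P x y ≠ ⊤ := fun x y => measure_ne_top _ _
  set p : ℝ := (μ {ω | X ω = Y ω}).toReal with hpdef
  have hp0 : 0 < p := ENNReal.toReal_pos hp.ne' (measure_ne_top _ _)
  have hpr : ∑ x, (P x x).toReal = p := by
    rw [hpdef, hpd, ENNReal.toReal_sum fun x _ => hPt x x]
  have hPr : ∑ x, ∑ y, (P x y).toReal = 1 := by
    have := congrArg ENNReal.toReal hP
    rw [ENNReal.toReal_sum (fun x _ => ENNReal.sum_ne_top.2 fun y _ => hPt x y)] at this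
    simp_rw [ENNReal.toReal_sum (fun y _ => hPt _ y)] at this
    simpa using this
  have hne : Nonempty α := by
    obtain ⟨ω, _⟩ := nonempty_of_measure_ne_zero hp.ne'
    exact ⟨X ω⟩
  obtain ⟨f, hf⟩ := exists_hash m hm (fun x y => (P x y).toReal)
  have hoff : (∑ x, ∑ y, if x ≠ y then (P x y).toReal else 0) = 1 - p := by
    rw [← hPr, ← hpr, ← Finset.sum_sub_distrib]
    refine Finset.sum_congr rfl fun x _ => ?_
    have : (P x x).toReal = ∑ y, if x = y then (P x y).toReal else 0 := by simp
    rw [this, ← Finset.sum_sub_distrib]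
    refine Finset.sum_congr rfl fun y _ => ?_
    by_cases h : x = y <;> simp [h]
  rw [hoff] at hf
  have hdt : ∑ x, P x x ≠ ⊤ := ENNReal.sum_ne_top.2 fun x _ => hPt x x
  obtain ⟨q, hq⟩ := exists_laws f (fun x => P x x) hdt
  set Q : Fin m → ℝ≥0∞ := fun w => ∑ x, if f x = w then P x x else 0 with hQdef
  have hQt : ∀ w, Q w ≠ ⊤ := fun w => ENNReal.sum_ne_top.2 fun x _ => by
    split_ifs
    · exact hPt x x
    · simp
  choose D code hD hA hsum using fun w => exists_decomp_pmf (q w)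
  choose c hc using fun x => exists_cond (fun j => 2⁻¹ ^ (j+1) * D (f x) j x) (q (f x) x)
    (PMF.apply_ne_top _ _) (hsum (f x) x)
  have hPc : ∀ w x j, (if f x = w then P x x * c x j else 0) = Q w * (2⁻¹ ^ (j+1) * D w j x) := by
    intro w x j
    have h1 := hq w x
    by_cases hx : f x = w
    · subst hx
      simp only [if_true] at h1 ⊢
      rw [← hc, ← mul_assoc, h1]
    · simp only [hx, if_false] at h1 ⊢
      rcases mul_eq_zero.1 h1.symm with h | h
      · change 0 = Q w * _
        have h' : Q w = 0 := h
        rw [h', zero_mul]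
      · have := hsum w x
        rw [h, ENNReal.tsum_eq_zero] at this
        rw [this j, mul_zero]
  obtain ⟨ρ, hρ⟩ := exists_prod_pmf c
  let κ := auxKer f D
  letI mΩ : MeasurableSpace (α × α × (α → ℕ) × α) := ⊤
  have hΩ : ∀ S : Set (α × α × (α → ℕ) × α), MeasurableSet S := fun S => MeasurableSpace.measurableSet_top
  have hκ : ∀ x y j, ∑ z, κ x y j z = 1 := fun x y j => by
    rw [← tsum_fintype (L := .unconditional _)]; exact PMF.tsum_coe _
  have hXY : ∀ x y, (jointPMF P hP ρ κ).toMeasure {ω | ω.1 = x ∧ ω.2.1 = y} = P x y := by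
    intro x y
    rw [measure_joint' P hP ρ κ c hρ (fun x' y' _ _ => x' = x ∧ y' = y)]
    simp_rw [← Finset.sum_mul, hκ, one_mul, ENNReal.tsum_mul_right, PMF.tsum_coe, one_mul, ite_and]
    simp
  have hlen : ∑' k : List Bool, (k.length : ℝ≥0∞) * (jointPMF P hP ρ κ).toMeasure
      {ω | keyFun f code ω.1 ω.2.1 (ω.2.2.1 ω.2.1) ω.2.2.2 = k ∧
        userKey code ω.1 (f ω.1) (msgFun f ω.2.1 (f ω.1) (ω.2.2.1 ω.2.1)) = k ∧
        userKey code ω.2.1 (f ω.1) (msgFun f ω.2.1 (f ω.1) (ω.2.2.1 ω.2.1)) = k}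
      = lenSum f P D code c := by
    rw [tsum_length hΩ]
    exact lintegral_joint' P hP ρ κ c hρ (fun x y j z =>
      if userKey code x (f x) (msgFun f y (f x) j) = keyFun f code x y j z ∧
        userKey code y (f x) (msgFun f y (f x) j) = keyFun f code x y j z then
        ((keyFun f code x y j z).length : ℝ≥0∞) else 0)
  have hlt := lenSum_lt_top f P D code c Q hP hQt hPc hD
  refine ⟨α × α × (α → ℕ) × α, mΩ, (jointPMF P hP ρ κ).toMeasure, inferInstance,
    fun ω => ω.1, fun ω => ω.2.1, α → ℕ, inferInstance, fun ω => ω.2.2.1, Option ℕ, inferInstance,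
    f, fun y w r => msgFun f y w (r y), userKey code, userKey code,
    fun ω => keyFun f code ω.1 ω.2.1 (ω.2.2.1 ω.2.1) ω.2.2.2,
    fun _ _ => hΩ _, fun _ => hΩ _, fun _ => hΩ _, hXY, ?_, ?_, ?_, ?_⟩
  · intro x y r
    rw [hXY, measure_joint, measure_joint]
    simp only [Set.mem_setOf_eq]
    simp_rw [← Finset.sum_mul, hκ, one_mul]
    have e1 : ∑' r', ρ r' * (if r' = r then 1 else 0) = ρ r := by
      rw [tsum_eq_single r] <;> simp +contextual
    have e2 : ∀ x' y', (∑' r', ρ r' * if (x' = x ∧ y' = y) ∧ r' = r then 1 else 0) =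
        if x' = x then if y' = y then ρ r else 0 else 0 := by
      intro x' y'
      by_cases h1 : x' = x <;> by_cases h2 : y' = y <;> simp only [h1, h2, true_and, false_and, if_true, if_false, mul_zero, tsum_zero, and_false]
      exact e1
    simp_rw [e1, e2, ← Finset.sum_mul, hP]
    simp
  · refine condRSBS_of hΩ _ _ _ fun v pre => ?_
    have := fun b : Bool => measure_joint' P hP ρ κ c hρ (fun x y j z =>
      (f x, msgFun f y (f x) j) = v ∧ pre ++ [b] <+: keyFun f code x y j z)
    refine (this true).trans (Eq.trans ?_ (this false).symm)
    exact core_rsbs f P D code c Q hPc hA v pre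
  · have h1 := core_err f P D code c hP
    have h2 := measure_joint' P hP ρ κ c hρ (fun x y j z =>
      userKey code x (f x) (msgFun f y (f x) j) = keyFun f code x y j z ∧
        userKey code y (f x) (msgFun f y (f x) j) = keyFun f code x y j z)
    rw [← h2] at h1
    have h3 : (∑ x, ∑ y, if f x = f y ∧ x ≠ y then P x y else 0) ≠ ⊤ :=
      ENNReal.sum_ne_top.2 fun x _ => ENNReal.sum_ne_top.2 fun y _ => by
        split_ifs
        · exact hPt x y
        · simp
    have h4 : (∑ x, ∑ y, if f x = f y ∧ x ≠ y then P x y else 0).toReal =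
        ∑ x, ∑ y, if f x = f y ∧ x ≠ y then (P x y).toReal else 0 := by
      have ht : ∀ x y, (if f x = f y ∧ x ≠ y then P x y else 0) ≠ ⊤ := fun x y => by
        split_ifs
        · exact hPt x y
        · simp
      rw [ENNReal.toReal_sum fun x _ => ENNReal.sum_ne_top.2 fun y _ => ht x y]
      refine Finset.sum_congr rfl fun x _ => ?_
      rw [ENNReal.toReal_sum fun y _ => ht x y]
      refine Finset.sum_congr rfl fun y _ => ?_
      split_ifs <;> simp
    have h5 := ENNReal.toReal_mono (ENNReal.add_ne_top.2 ⟨measure_ne_top _ _, h3⟩) h1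
    rw [ENNReal.toReal_add (measure_ne_top _ _) h3, h4, ENNReal.toReal_one] at h5
    refine le_trans ?_ (sub_le_iff_le_add.2 h5)
    linarith
  · have hlow := lenSum_lower f P D code c q Q (fun w => rfl) hPc hc hD
    have hcond : ∀ x, ((μ[|{ω | X ω = Y ω}]) {ω | X ω = x}).toReal = (P x x).toReal / p := by
      intro x
      rw [cond_apply hdm]
      have : {ω | X ω = Y ω} ∩ {ω | X ω = x} = {ω | X ω = x ∧ Y ω = x} := by
        ext ω
        simp only [Set.mem_inter_iff, Set.mem_setOf_eq]
        constructor
        · rintro ⟨h1, h2⟩; exact ⟨h2, h1 ▸ h2⟩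
        · rintro ⟨h1, h2⟩; exact ⟨h1.trans h2.symm, h1⟩
      rw [this, ENNReal.toReal_mul, ENNReal.toReal_inv, mul_comm, div_eq_mul_inv]
    simp_rw [hcond]
    rw [tsum_fintype]
    have hT := congrArg ENNReal.toReal hlen
    rw [ENNReal.tsum_toReal_eq (fun k => ENNReal.mul_ne_top (by simp) (measure_ne_top _ _))] at hT
    simp only [ENNReal.toReal_mul, ENNReal.toReal_natCast] at hT
    refine le_of_le_of_eq ?_ hT.symm
    have hE := entropy_real hm f (fun x => (P x x).toReal) (fun x => (q (f x) x).toReal)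
      (fun w => (Q w).toReal) p (fun x => ENNReal.toReal_nonneg) hp0 hpr (by
        intro w
        dsimp only [Q]
        rw [ENNReal.toReal_sum]
        · refine Finset.sum_congr rfl fun x _ => ?_
          split_ifs <;> simp
        · intro x _
          split_ifs
          · exact hPt x x
          · simp) (by
        intro x
        have := hq (f x) x
        rw [if_pos rfl] at this
        rw [← ENNReal.toReal_mul, this])
    have hlow' := ENNReal.toReal_mono (ENNReal.add_ne_top.2 ⟨hlt, ENNReal.mul_ne_top (by simp) hdt⟩) hlow
    rw [ENNReal.toReal_add hlt (ENNReal.mul_ne_top (by simp) hdt), ENNReal.toReal_mul,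
      ENNReal.toReal_sum (fun x _ => ENNReal.mul_ne_top (hPt x x) (by simp)), ← hpd, ← hpdef] at hlow'
    have hnn : ∀ x, (P x x * ENNReal.ofReal (Real.logb 2 (1 / (q (f x) x).toReal))).toReal =
        (P x x).toReal * Real.logb 2 (1 / (q (f x) x).toReal) := by
      intro x
      rw [ENNReal.toReal_mul, ENNReal.toReal_ofReal]
      rw [one_div, Real.logb_inv, neg_nonneg]
      refine Real.logb_nonpos (by norm_num) ENNReal.toReal_nonneg ?_
      have := ENNReal.toReal_mono (by simp) (PMF.coe_le_one (q (f x)) x)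
      simpa using this
    simp_rw [hnn] at hlow'
    simp only [ENNReal.toReal_ofNat] at hlow'
    linarith

/-- Key agreement in the almost common randomness model. Given jointly distributed
`X, Y` on a finite alphabet `α` with `p := P(X = Y) > 0` and an integer `m ≥ 1`, there
exist (on an enlarged probability space carrying randomness `R` independent of `(X, Y)`)
a hash `f : α → {1,…,m}`, public discussion `W₁ := f(X)`, `W₂ := h(Y, W₁, R)`, keys
`K_A := g_A(X, W₁, W₂)`, `K_B := g_B(Y, W₁, W₂)`, and an ideal key `K`, such that `K` is
a conditionally randomly-stopped bit sequence given `(W₁, W₂)`,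
`P(K_A = K_B = K) ≥ 1 − (1 − p)/m`, and
`E[|K|·1{K_A = K_B = K}] ≥ p·(H(X | X = Y) − log₂ m − 2)`, where `H(X | X = Y)` is the
Shannon entropy of the conditional distribution of `X` given the event `{X = Y}`. -/
theorem stmt15 {Ω α : Type*} [MeasurableSpace Ω] [Fintype α]
    (μ : Measure Ω) [IsProbabilityMeasure μ] (X Y : Ω → α)
    (hXYmeas : ∀ x y : α, MeasurableSet {ω | X ω = x ∧ Y ω = y})
    (hp : 0 < μ {ω | X ω = Y ω})
    (m : ℕ) (hm : 1 ≤ m) :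
    ∃ (Ω' : Type) (_ : MeasurableSpace Ω') (μ' : Measure Ω')
      (_ : IsProbabilityMeasure μ') (X' Y' : Ω' → α)
      (γ : Type) (_ : Countable γ) (R : Ω' → γ) (β : Type) (_ : Countable β)
      (f : α → Fin m) (h : α → Fin m → γ → β)
      (gA : α → Fin m → β → List Bool) (gB : α → Fin m → β → List Bool)
      (K : Ω' → List Bool),
      (∀ x y : α, MeasurableSet {ω | X' ω = x ∧ Y' ω = y}) ∧
      (∀ r : γ, MeasurableSet {ω | R ω = r}) ∧
      (∀ k : List Bool, MeasurableSet {ω | K ω = k}) ∧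
      -- (X', Y') has the same joint distribution as (X, Y)
      (∀ x y : α, μ' {ω | X' ω = x ∧ Y' ω = y} = μ {ω | X ω = x ∧ Y ω = y}) ∧
      -- the local randomness R is independent of (X', Y')
      (∀ (x y : α) (r : γ), μ' {ω | (X' ω = x ∧ Y' ω = y) ∧ R ω = r} =
        μ' {ω | X' ω = x ∧ Y' ω = y} * μ' {ω | R ω = r}) ∧
      -- with W₁ := f(X'), W₂ := h(Y', W₁, R), K_A := gA(X', W₁, W₂), K_B := gB(Y', W₁, W₂):
      (IsCondRSBS μ' K (fun ω => (f (X' ω), h (Y' ω) (f (X' ω)) (R ω))) ∧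
       1 - (1 - (μ {ω | X ω = Y ω}).toReal) / m ≤
         (μ' {ω | gA (X' ω) (f (X' ω)) (h (Y' ω) (f (X' ω)) (R ω)) = K ω ∧
                  gB (Y' ω) (f (X' ω)) (h (Y' ω) (f (X' ω)) (R ω)) = K ω}).toReal ∧
       (μ {ω | X ω = Y ω}).toReal *
         ((∑' x : α, -(((μ[|{ω | X ω = Y ω}]) {ω | X ω = x}).toReal) *
             Real.logb 2 ((μ[|{ω | X ω = Y ω}]) {ω | X ω = x}).toReal)
           - Real.logb 2 m - 2) ≤
         ∑' k : List Bool, (k.length : ℝ) *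
           (μ' {ω | K ω = k ∧ gA (X' ω) (f (X' ω)) (h (Y' ω) (f (X' ω)) (R ω)) = k ∧
                    gB (Y' ω) (f (X' ω)) (h (Y' ω) (f (X' ω)) (R ω)) = k}).toReal) := by
  classical
  let e := Fintype.equivFin α
  have hX : ∀ (x y : Fin (Fintype.card α)), {ω | e (X ω) = x ∧ e (Y ω) = y} =
      {ω | X ω = e.symm x ∧ Y ω = e.symm y} := by
    intro x y; ext ω; simp [Equiv.eq_symm_apply]
  have hE : {ω | e (X ω) = e (Y ω)} = {ω | X ω = Y ω} := by
    ext ω; simp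
  obtain ⟨Ω', mΩ, μ', hμ', X', Y', γ, hγ, R, β, hβ, f, h, gA, gB, K, h1, h2, h3, h4, h5, h6, h7, h8⟩ :=
    core_s15 μ (fun ω => e (X ω)) (fun ω => e (Y ω)) (fun x y => by rw [hX]; exact hXYmeas _ _)
      (by rw [hE]; exact hp) m hm
  rw [hE] at h7 h8
  have hX' : ∀ (x y : α), {ω | e.symm (X' ω) = x ∧ e.symm (Y' ω) = y} =
      {ω | X' ω = e x ∧ Y' ω = e y} := by
    intro x y; ext ω; simp [Equiv.symm_apply_eq]
  have hXR : ∀ (x y : α) (r : γ), {ω | (e.symm (X' ω) = x ∧ e.symm (Y' ω) = y) ∧ R ω = r} =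
      {ω | (X' ω = e x ∧ Y' ω = e y) ∧ R ω = r} := by
    intro x y r; ext ω; simp [Equiv.symm_apply_eq]
  refine ⟨Ω', mΩ, μ', hμ', fun ω => e.symm (X' ω), fun ω => e.symm (Y' ω), γ, hγ, R, β, hβ,
    fun x => f (e x), fun y => h (e y), fun x => gA (e x), fun y => gB (e y), K,
    fun x y => ?_, h2, h3, fun x y => ?_, fun x y r => ?_, ?_, ?_, ?_⟩
  · rw [hX']; exact h1 _ _
  · rw [hX', h4, hX]; simp
  · rw [hX', hXR]; exact h5 _ _ _
  · simpa only [Equiv.apply_symm_apply] using h6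
  · simpa only [Equiv.apply_symm_apply] using h7
  · simp only [Equiv.apply_symm_apply]
    refine le_of_eq_of_le ?_ h8
    congr 3
    rw [← Equiv.tsum_eq e]
    simp
end
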